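/- arXiv:2309.07905 — 5 statements merged into one kernel-verified Lean document; each statement's English description precedes it below -/
import Mathlib

section
/- Let G be a simple graph, let X, Y ⊆ V(G), and let k be a natural number. If there exists a collection 𝒫 of at least 16k pairwise disjoint X-Y-paths in G such that every vertex of V(𝒫) is incident to at most one edge of E(G) \ E(𝒫), then G contains at least k pairwise non-adjacent X-Y-paths. -/
open SimpleGraph

universe u

variable {V : Type u}

/-- A packaged walk in `G`: a pair of endpoints together with a walk between them. -/
abbrev PathPkg (G : SimpleGraph V) : Type u := Σ x : V, Σ y : V, G.Walk x y

/-- The set of vertices of a packaged walk. -/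
def pkgSupport {G : SimpleGraph V} (p : PathPkg G) : Set V := {x | x ∈ p.2.2.support}

/-- The set of edges of a packaged walk. -/
def pkgEdges {G : SimpleGraph V} (p : PathPkg G) : Set (Sym2 V) := {e | e ∈ p.2.2.edges}

/-- `p` is an `X`-`Y`-path: a path whose first endpoint lies in `X` and whose
second endpoint lies in `Y`. -/
def IsXYPath (G : SimpleGraph V) (X Y : Set V) (p : PathPkg G) : Prop :=
  p.2.2.IsPath ∧ p.1 ∈ X ∧ p.2.1 ∈ Y

/-- Two packaged walks are (vertex-)disjoint. -/
def PkgDisjoint {G : SimpleGraph V} (p q : PathPkg G) : Prop :=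
  ∀ x, x ∈ pkgSupport p → x ∉ pkgSupport q

/-- Two packaged walks are non-adjacent: they are vertex-disjoint and no edge of `G`
joins a vertex of one to a vertex of the other. -/
def PkgNonAdj (G : SimpleGraph V) (p q : PathPkg G) : Prop :=
  ∀ a, a ∈ pkgSupport p → ∀ b, b ∈ pkgSupport q → a ≠ b ∧ ¬ G.Adj a b

/-- `Z` separates `X` and `Y` in `G`: every `X`-`Y`-path meets `Z`. -/
def XYSeparates (G : SimpleGraph V) (X Y Z : Set V) : Prop :=
  ∀ p : PathPkg G, IsXYPath G X Y p → ∃ z, z ∈ Z ∧ z ∈ pkgSupport p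

/-- `M` is an induced matching of `G`: a set of edges of `G` such that any two distinct
edges of `M` are at distance at least `2` in `G` (no endpoint of one equals or is
adjacent to an endpoint of the other). -/
def IsInducedMatching (G : SimpleGraph V) (M : Set (Sym2 V)) : Prop :=
  M ⊆ G.edgeSet ∧
    ∀ e₁, e₁ ∈ M → ∀ e₂, e₂ ∈ M → e₁ ≠ e₂ →
      ∀ a, a ∈ e₁ → ∀ b, b ∈ e₂ → a ≠ b ∧ ¬ G.Adj a b

/-- `G` admits a partition of its edge set into `n` induced matchings
(a strong edge colouring with `n` colours). -/
def HasStrongEdgeColoring (G : SimpleGraph V) (n : ℕ) : Prop :=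
  ∃ M : Fin n → Set (Sym2 V),
    (∀ i, IsInducedMatching G (M i)) ∧
    (Pairwise fun i j => Disjoint (M i) (M j)) ∧
    (⋃ i, M i) = G.edgeSet

/-- The strong chromatic index of `G`: the least number of induced matchings into
which the edge set of `G` can be partitioned. -/
noncomputable def strongChromaticIndex (G : SimpleGraph V) : ℕ :=
  sInf {n | HasStrongEdgeColoring G n}

/-- `G` contains the complete graph `K_r` as a topological minor: there are `r` distinct
branch vertices joined pairwise by internally disjoint paths whose internal vertices
avoid all branch vertices. -/
def HasTopKMinor (G : SimpleGraph V) (r : ℕ) : Prop :=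
  ∃ (f : Fin r → V) (P : (i j : Fin r) → i < j → G.Walk (f i) (f j)),
    Function.Injective f ∧
    (∀ i j hij, (P i j hij).IsPath) ∧
    (∀ i j hij x, x ∈ (P i j hij).support → x ≠ f i → x ≠ f j → ∀ l, x ≠ f l) ∧
    (∀ i j hij i' j' hij', (i, j) ≠ (i', j') →
      ∀ x, x ∈ (P i j hij).support → x ∈ (P i' j' hij').support →
        (x = f i ∨ x = f j) ∧ (x = f i' ∨ x = f j'))

/-- `G` contains the complete graph `K_n` as a minor, witnessed by `n` nonempty,
pairwise disjoint, connected branch sets joined pairwise by edges. -/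
def HasKMinor (G : SimpleGraph V) (n : ℕ) : Prop :=
  ∃ B : Fin n → Set V,
    (∀ i, (B i).Nonempty) ∧
    (∀ i, (G.induce (B i)).Connected) ∧
    (Pairwise fun i j => Disjoint (B i) (B j)) ∧
    (∀ i j, i ≠ j → ∃ a ∈ B i, ∃ b ∈ B j, G.Adj a b)


/-- `a` and `b` are joined by a walk of `K` inside `U`. -/
def Conn {α : Type*} (K : SimpleGraph α) (U : Set α) (a b : α) : Prop :=
  ∃ p : K.Walk a b, ∀ v ∈ p.support, v ∈ U

namespace Conn
variable {α : Type*} {K K' : SimpleGraph α} {U U' : Set α} {a b c : α}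

theorem refl (h : a ∈ U) : Conn K U a a := ⟨Walk.nil, by simpa using h⟩

theorem symm (h : Conn K U a b) : Conn K U b a := by
  obtain ⟨p, hp⟩ := h
  exact ⟨p.reverse, by simpa using hp⟩

theorem trans (h : Conn K U a b) (h' : Conn K U b c) : Conn K U a c := by
  obtain ⟨p, hp⟩ := h
  obtain ⟨q, hq⟩ := h'
  refine ⟨p.append q, fun v hv => ?_⟩
  rw [Walk.mem_support_append_iff] at hv
  exact hv.elim (hp v) (hq v)

theorem mono (hK : K ≤ K') (hU : U ⊆ U') (h : Conn K U a b) : Conn K' U' a b := by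
  obtain ⟨p, hp⟩ := h
  exact ⟨p.mapLe hK, by simpa using fun v hv => hU (hp v hv)⟩

theorem left (h : Conn K U a b) : a ∈ U := by
  obtain ⟨p, hp⟩ := h
  exact hp _ p.start_mem_support

theorem right (h : Conn K U a b) : b ∈ U := h.symm.left

theorem adj (h : K.Adj a b) (ha : a ∈ U) (hb : b ∈ U) : Conn K U a b :=
  ⟨h.toWalk, by simp [Adj.toWalk]; exact ⟨ha, hb⟩⟩

/-- Either we meet `Z`, or the connection avoids `Z`. -/
theorem hit (h : Conn K U a b) (Z : Set α) :
    (∃ z ∈ Z, Conn K U a z) ∨ Conn K Zᶜ a b := by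
  classical
  obtain ⟨p, hp⟩ := h
  by_cases hz : ∃ z ∈ Z, z ∈ p.support
  · obtain ⟨z, hz, hzp⟩ := hz
    exact Or.inl ⟨z, hz, p.takeUntil z hzp,
      fun v hv => hp v (p.support_takeUntil_subset_support hzp hv)⟩
  · push Not at hz
    exact Or.inr ⟨p, fun v hv hvZ => hz v hvZ hv⟩

theorem insert_edge {F : Set (Sym2 α)} {x y : α}
    (h : Conn (fromEdgeSet (insert s(x, y) F)) U a b) :
    Conn (fromEdgeSet F) U a b ∨
    (Conn (fromEdgeSet F) U a x ∧ Conn (fromEdgeSet F) U y b) ∨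
    (Conn (fromEdgeSet F) U a y ∧ Conn (fromEdgeSet F) U x b) := by
  obtain ⟨p, hp⟩ := h
  induction p with
  | nil => exact Or.inl (refl (hp _ (by simp)))
  | @cons a a' b hadj p ih =>
    have ha : a ∈ U := hp _ (by simp)
    have ih := ih (fun v hv => hp v (by simp [hv]))
    have ha' : a' ∈ U := hp _ (by simp)
    rw [fromEdgeSet_adj] at hadj
    obtain ⟨hm, hne⟩ := hadj
    rcases hm with hm | hm
    · rw [Sym2.eq_iff] at hm
      rcases hm with ⟨rfl, rfl⟩ | ⟨rfl, rfl⟩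
      · rcases ih with ih | ⟨_, ih⟩ | ⟨_, ih⟩
        · exact Or.inr (Or.inl ⟨refl ha, ih⟩)
        · exact Or.inr (Or.inl ⟨refl ha, ih⟩)
        · exact Or.inl ih
      · rcases ih with ih | ⟨_, ih⟩ | ⟨_, ih⟩
        · exact Or.inr (Or.inr ⟨refl ha, ih⟩)
        · exact Or.inl ih
        · exact Or.inr (Or.inr ⟨refl ha, ih⟩)
    · have hc : Conn (fromEdgeSet F) U a a' :=
        adj (by rw [fromEdgeSet_adj]; exact ⟨hm, hne⟩) ha ha'
      rcases ih with ih | ⟨ih1, ih⟩ | ⟨ih1, ih⟩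
      · exact Or.inl (hc.trans ih)
      · exact Or.inr (Or.inl ⟨hc.trans ih1, ih⟩)
      · exact Or.inr (Or.inr ⟨hc.trans ih1, ih⟩)

end Conn

theorem menger_sep {α : Type*} [DecidableEq α] {F : Set (Sym2 α)} {x y : α} {T : Finset α}
    {A B : Set α} {b : α}
    (hsep : ∀ a ∈ A, ∀ b ∈ B, ¬ Conn (fromEdgeSet F) (↑T)ᶜ a b)
    (hb : b ∈ B) (hyb : Conn (fromEdgeSet F) (↑T)ᶜ y b) (T' : Finset α)
    (hT' : ∀ a ∈ A, ∀ s ∈ insert x T, ¬ Conn (fromEdgeSet F) (↑T')ᶜ a s) :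
    ∀ a ∈ A, ∀ b ∈ B, ¬ Conn (fromEdgeSet (insert s(x, y) F)) (↑T')ᶜ a b := by
  intro a' ha' b' hb' hc
  have key : ∀ z, Conn (fromEdgeSet F) (↑T')ᶜ a' z → Conn (fromEdgeSet F) (↑T)ᶜ a' z := by
    intro z hz
    rcases hz.hit (↑(insert x T)) with ⟨s, hs, h⟩ | h
    · exact absurd h (hT' a' ha' s (by simpa using hs))
    · exact h.mono le_rfl (by intro v hv; simp at hv ⊢; tauto)
  rcases hc.insert_edge with h | ⟨h, _⟩ | ⟨h, _⟩
  · exact hsep a' ha' b' hb' (key _ h)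
  · exact hT' a' ha' x (by simp) h
  · exact hsep a' ha' b hb ((key _ h).trans hyb)

/-- The combination step in the theorem of Menger. -/
theorem menger_combine {α : Type*} [DecidableEq α] {F : Set (Sym2 α)} {x y : α} {T : Finset α}
    {A B : Set α} {k : ℕ}
    (hsep : ∀ a ∈ A, ∀ b ∈ B, ¬ Conn (fromEdgeSet F) (↑T)ᶜ a b)
    (hxy : x ≠ y) (hx : x ∉ T) (hy : y ∉ T) (hcard : T.card + 1 = k)
    (h1 : ∃ U : Fin k → Set α, (Pairwise fun i j => Disjoint (U i) (U j)) ∧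
      ∀ i, ∃ a ∈ A, ∃ b ∈ (↑(insert x T) : Set α), Conn (fromEdgeSet F) (U i) a b)
    (h2 : ∃ U : Fin k → Set α, (Pairwise fun i j => Disjoint (U i) (U j)) ∧
      ∀ i, ∃ a ∈ (↑(insert y T) : Set α), ∃ b ∈ B, Conn (fromEdgeSet F) (U i) a b) :
    ∃ U : Fin k → Set α, (Pairwise fun i j => Disjoint (U i) (U j)) ∧
      ∀ i, ∃ a ∈ A, ∃ b ∈ B, Conn (fromEdgeSet (insert s(x, y) F)) (U i) a b := by
  obtain ⟨U, hU, h1⟩ := h1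
  obtain ⟨W, hW, h2⟩ := h2
  choose a ha s hs hp using h1
  choose t ht b hb hq using h2
  have hp' : ∀ i, ∃ p : (fromEdgeSet F).Walk (a i) (s i), p.IsPath ∧ ∀ v ∈ p.support, v ∈ U i := by
    intro i
    obtain ⟨p, hp⟩ := hp i
    exact ⟨p.bypass, p.bypass_isPath, fun v hv => hp v (p.support_bypass_subset_support hv)⟩
  have hq' : ∀ i, ∃ p : (fromEdgeSet F).Walk (b i) (t i), p.IsPath ∧ ∀ v ∈ p.support, v ∈ W i := by
    intro i
    obtain ⟨p, hp⟩ := (hq i).symm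
    exact ⟨p.bypass, p.bypass_isPath, fun v hv => hp v (p.support_bypass_subset_support hv)⟩
  choose p hpp hpU using hp'
  choose q hqp hqW using hq'
  have uniqU : ∀ v i j, v ∈ U i → v ∈ U j → i = j := by
    intro v i j hi hj
    by_contra hne
    exact Set.disjoint_left.1 (hU hne) hi hj
  have uniqW : ∀ v i j, v ∈ W i → v ∈ W j → i = j := by
    intro v i j hi hj
    by_contra hne
    exact Set.disjoint_left.1 (hW hne) hi hj
  have sinj : Function.Injective s := fun i j hij =>
    uniqU (s i) i j (hp i).right (hij ▸ (hp j).right)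
  have tinj : Function.Injective t := fun i j hij =>
    uniqW (t i) i j (hq i).left (hij ▸ (hq j).left)
  have ssurj : ∀ v ∈ insert x T, ∃ i, s i = v := by
    have : Finset.univ.image s = insert x T := by
      apply Finset.eq_of_subset_of_card_le
      · intro v hv
        simp only [Finset.mem_image, Finset.mem_univ, true_and] at hv
        obtain ⟨i, rfl⟩ := hv
        exact_mod_cast hs i
      · rw [Finset.card_image_of_injective _ sinj, Finset.card_insert_of_notMem hx]
        simp [hcard]
    intro v hv
    rw [← this] at hv
    simpa using hv
  have tsurj : ∀ v ∈ insert y T, ∃ i, t i = v := by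
    have : Finset.univ.image t = insert y T := by
      apply Finset.eq_of_subset_of_card_le
      · intro v hv
        simp only [Finset.mem_image, Finset.mem_univ, true_and] at hv
        obtain ⟨i, rfl⟩ := hv
        exact_mod_cast ht i
      · rw [Finset.card_image_of_injective _ tinj, Finset.card_insert_of_notMem hy]
        simp [hcard]
    intro v hv
    rw [← this] at hv
    simpa using hv
  have sU : ∀ v ∈ T, ∀ i, v ∈ U i → v = s i := by
    intro v hv i hi
    obtain ⟨j, rfl⟩ := ssurj v (by simp [hv])
    rw [uniqU _ i j hi (hp j).right]
  have tW : ∀ v ∈ T, ∀ i, v ∈ W i → v = t i := by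
    intro v hv i hi
    obtain ⟨j, rfl⟩ := tsurj v (by simp [hv])
    rw [uniqW _ i j hi (hq j).left]
  have meet : ∀ i j v, v ∈ (p i).support → v ∈ (q j).support → v ∈ T := by
    intro i j v hv hv'
    by_contra hvT
    have c1 : Conn (fromEdgeSet F) (↑T)ᶜ (a i) v := by
      refine ⟨(p i).takeUntil v hv, fun u hu huT => ?_⟩
      have hus := sU u huT i (hpU i u ((p i).support_takeUntil_subset_support hv hu))
      have hne : v ≠ s i := by
        rintro rfl
        exact hvT (hus ▸ huT)
      exact (Walk.endpoint_notMem_support_takeUntil (hpp i) hv hne.symm) (hus ▸ hu)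
    have c2 : Conn (fromEdgeSet F) (↑T)ᶜ (b j) v := by
      refine ⟨(q j).takeUntil v hv', fun u hu huT => ?_⟩
      have hus := tW u huT j (hqW j u ((q j).support_takeUntil_subset_support hv' hu))
      have hne : v ≠ t j := by
        rintro rfl
        exact hvT (hus ▸ huT)
      exact (Walk.endpoint_notMem_support_takeUntil (hqp j) hv' hne.symm) (hus ▸ hu)
    exact hsep _ (ha i) _ (hb j) (c1.trans c2.symm)
  have hJ : ∀ i, ∃ j, t j = if s i = x then y else s i := by
    intro i
    apply tsurj
    split_ifs with h
    · simp
    · have := hs i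
      simp only [Finset.coe_insert, Set.mem_insert_iff, Finset.mem_coe] at this
      simp [this.resolve_left h]
  choose J hJ using hJ
  have sT : ∀ i, s i ≠ x → s i ∈ T := by
    intro i h
    have := hs i
    simp only [Finset.coe_insert, Set.mem_insert_iff, Finset.mem_coe] at this
    exact this.resolve_left h
  have Jinj : ∀ i i', J i = J i' → i = i' := by
    intro i i' h
    have h1 := hJ i
    have h2 := hJ i'
    rw [← h, h1] at h2
    apply sinj
    split_ifs at h2 with c1 c2 c2
    · rw [c1, c2]
    · exact absurd (h2 ▸ sT i' c2) hy
    · exact absurd (h2 ▸ sT i c1) hy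
    · exact h2
  have meet' : ∀ i i' v, v ∈ (p i).support → v ∈ (q (J i')).support → i = i' := by
    intro i i' v hv hv'
    have hvT := meet _ _ _ hv hv'
    have e1 := sU v hvT i (hpU i v hv)
    have e2 := tW v hvT _ (hqW _ v hv')
    rw [hJ i'] at e2
    apply sinj
    split_ifs at e2 with c
    · exact absurd (e2 ▸ hvT) hy
    · rw [← e1, e2]
  refine ⟨fun i => {v | v ∈ (p i).support ∨ v ∈ (q (J i)).support}, ?_, ?_⟩
  · intro i j hij
    rw [Set.disjoint_left]
    rintro v (h | h) (h' | h')
    · exact hij (uniqU v i j (hpU _ _ h) (hpU _ _ h'))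
    · exact hij (meet' _ _ _ h h')
    · exact hij (meet' _ _ _ h' h).symm
    · exact hij (Jinj _ _ (uniqW v _ _ (hqW _ _ h) (hqW _ _ h')))
  · intro i
    refine ⟨a i, ha i, b (J i), hb _, ?_⟩
    set Z : Set α := {v | v ∈ (p i).support ∨ v ∈ (q (J i)).support}
    have hle : fromEdgeSet F ≤ fromEdgeSet (insert s(x, y) F) :=
      fromEdgeSet_mono (Set.subset_insert _ _)
    have c1 : Conn (fromEdgeSet (insert s(x, y) F)) Z (a i) (s i) :=
      Conn.mono hle (U := Z) subset_rfl ⟨p i, fun v hv => Or.inl hv⟩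
    have c2 : Conn (fromEdgeSet (insert s(x, y) F)) Z (b (J i)) (t (J i)) :=
      Conn.mono hle (U := Z) subset_rfl ⟨q (J i), fun v hv => Or.inr hv⟩
    refine c1.trans (Conn.trans ?_ c2.symm)
    by_cases h : s i = x
    · have ht' : t (J i) = y := by rw [hJ, if_pos h]
      apply Conn.adj _ c1.right c2.right
      rw [h, ht', fromEdgeSet_adj]
      exact ⟨by simp, hxy⟩
    · have ht' : t (J i) = s i := by rw [hJ, if_neg h]
      rw [ht']
      exact Conn.refl c1.right

/-- the theorem of Menger, for graphs with finitely many edges. -/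
theorem menger {α : Type*} [DecidableEq α] (F : Finset (Sym2 α)) :
    ∀ (A B : Set α) (_ : A.Finite) (k : ℕ),
      (∀ T : Finset α, (∀ a ∈ A, ∀ b ∈ B, ¬ Conn (fromEdgeSet (F : Set (Sym2 α))) (↑T)ᶜ a b) →
        k ≤ T.card) →
      ∃ U : Fin k → Set α, (Pairwise fun i j => Disjoint (U i) (U j)) ∧
        ∀ i, ∃ a ∈ A, ∃ b ∈ B, Conn (fromEdgeSet (F : Set (Sym2 α))) (U i) a b := by
  induction F using Finset.induction_on with
  | empty =>
    intro A B hA k h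
    have hf : (A ∩ B).Finite := hA.subset Set.inter_subset_left
    have hk := h hf.toFinset (by
      rintro a ha b hb ⟨p, hp⟩
      cases p with
      | nil => exact hp a (by simp) (by simp [ha, hb])
      | cons hadj _ => simp at hadj)
    obtain ⟨T, hT, hTk⟩ := Finset.exists_subset_card_eq hk
    let e := T.equivFinOfCardEq hTk
    refine ⟨fun i => {(e.symm i : α)}, ?_, ?_⟩
    · intro i j hij
      simp only [Set.disjoint_singleton]
      intro h
      exact hij (e.symm.injective (Subtype.ext h))
    · intro i
      have hi := hT (e.symm i).2
      simp only [Set.Finite.mem_toFinset] at hi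
      exact ⟨_, hi.1, _, hi.2, Conn.refl rfl⟩
  | insert e F he ih =>
    intro A B hA k h
    rw [Finset.coe_insert] at h ⊢
    by_cases hF : ∀ T : Finset α,
        (∀ a ∈ A, ∀ b ∈ B, ¬ Conn (fromEdgeSet (F : Set (Sym2 α))) (↑T)ᶜ a b) → k ≤ T.card
    · obtain ⟨U, hU, hc⟩ := ih A B hA k hF
      refine ⟨U, hU, fun i => ?_⟩
      obtain ⟨a, ha, b, hb, hab⟩ := hc i
      exact ⟨a, ha, b, hb, hab.mono (fromEdgeSet_mono (Set.subset_insert _ _)) subset_rfl⟩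
    · push Not at hF
      obtain ⟨T, hsep, hT⟩ := hF
      have main : ∀ x y, e = s(x, y) → ∀ a ∈ A, ∀ b ∈ B,
          Conn (fromEdgeSet (F : Set (Sym2 α))) (↑T)ᶜ a x →
          Conn (fromEdgeSet (F : Set (Sym2 α))) (↑T)ᶜ y b →
          ∃ U : Fin k → Set α, (Pairwise fun i j => Disjoint (U i) (U j)) ∧
            ∀ i, ∃ a ∈ A, ∃ b ∈ B,
              Conn (fromEdgeSet (insert e (F : Set (Sym2 α)))) (U i) a b := by
        rintro x y rfl a ha b hb hax hyb
        have hx : x ∉ T := by simpa using hax.right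
        have hy : y ∉ T := by simpa using hyb.left
        have hxy : x ≠ y := by
          rintro rfl
          exact hsep a ha b hb (hax.trans hyb)
        have k1 : ∀ T' : Finset α, (∀ a ∈ A, ∀ s ∈ (↑(insert x T) : Set α),
            ¬ Conn (fromEdgeSet (F : Set (Sym2 α))) (↑T')ᶜ a s) → k ≤ T'.card := by
          intro T' hT'
          exact h T' (menger_sep hsep hb hyb T' (by exact_mod_cast hT'))
        have k2 : ∀ T' : Finset α, (∀ s ∈ (↑(insert y T) : Set α), ∀ b ∈ B,
            ¬ Conn (fromEdgeSet (F : Set (Sym2 α))) (↑T')ᶜ s b) → k ≤ T'.card := by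
          intro T' hT'
          refine h T' fun a' ha' b' hb' hc => ?_
          rw [Sym2.eq_swap] at hc
          refine menger_sep (F := (F : Set (Sym2 α))) (A := B) (B := A) (x := y) (y := x) (T := T)
            (fun b hb a ha hc => hsep a ha b hb hc.symm) ha hax.symm T'
            (fun b hb s hs hc => hT' s (by exact_mod_cast hs) b hb hc.symm) b' hb' a' ha' hc.symm
        have hc1 := k1 (insert x T) (fun a ha s hs hc => hc.right hs)
        rw [Finset.card_insert_of_notMem hx] at hc1
        exact menger_combine hsep hxy hx hy (by omega)
          (ih _ _ hA k k1) (ih _ _ (Finset.finite_toSet _) k k2)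
      have hns : ¬ ∀ a ∈ A, ∀ b ∈ B,
          ¬ Conn (fromEdgeSet (insert e (F : Set (Sym2 α)))) (↑T)ᶜ a b := by
        intro hh
        have := h T hh
        omega
      push Not at hns
      obtain ⟨a, ha, b, hb, hab⟩ := hns
      induction e using Sym2.ind with
      | _ x y =>
        rcases hab.insert_edge with hc | ⟨h1, h2⟩ | ⟨h1, h2⟩
        · exact absurd hc (hsep a ha b hb)
        · exact main x y rfl a ha b hb h1 h2
        · exact main y x Sym2.eq_swap a ha b hb h1 h2

open Classical in
/-- The degree of `a` in `Q`, counting membership in `X` and `Y` as extra edges. -/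
noncomputable def xyDeg (X Y : Set V) (H : SimpleGraph V) (Q : Finset V) (a : V) : ℕ :=
  (Q.filter (fun b => H.Adj a b)).card + (if a ∈ X then 1 else 0) + (if a ∈ Y then 1 else 0)

/-- `Q` is the vertex set of an induced, minimal `X`-`Y`-path of `H`. -/
def GoodSet (X Y : Set V) (H : SimpleGraph V) (Q : Finset V) : Prop :=
  (∃ x ∈ X, ∃ y ∈ Y, ∃ p : H.Walk x y, p.IsPath ∧ ∀ v, v ∈ p.support ↔ v ∈ Q) ∧
    ∀ a ∈ Q, xyDeg X Y H Q a = 2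

theorem exists_goodSet {X Y : Set V} {H : SimpleGraph V} {U : Set V} {x y : V}
    (hx : x ∈ X) (hy : y ∈ Y) (h : Conn H U x y) :
    ∃ Q : Finset V, (∀ v ∈ Q, v ∈ U) ∧ GoodSet X Y H Q := by
  classical
  have hex : ∃ n, ∃ x ∈ X, ∃ y ∈ Y, ∃ p : H.Walk x y, p.length = n ∧ ∀ v ∈ p.support, v ∈ U := by
    obtain ⟨p, hp⟩ := h
    exact ⟨_, x, hx, y, hy, p, rfl, hp⟩
  have hmin : ∀ x ∈ X, ∀ y ∈ Y, ∀ p : H.Walk x y, (∀ v ∈ p.support, v ∈ U) →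
      Nat.find hex ≤ p.length := fun x hx y hy p hp =>
    Nat.find_min' hex ⟨x, hx, y, hy, p, rfl, hp⟩
  obtain ⟨x, hx, y, hy, p0, hl0, hp0⟩ := Nat.find_spec hex
  obtain ⟨p, hpath, hl, hp⟩ : ∃ p : H.Walk x y, p.IsPath ∧ p.length ≤ Nat.find hex ∧
      ∀ v ∈ p.support, v ∈ U :=
    ⟨p0.bypass, p0.bypass_isPath, hl0 ▸ p0.length_bypass_le_length,
      fun v hv => hp0 v (p0.support_bypass_subset_support hv)⟩
  replace hmin : ∀ x ∈ X, ∀ y ∈ Y, ∀ q : H.Walk x y, (∀ v ∈ q.support, v ∈ U) →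
      p.length ≤ q.length := fun x hx y hy q hq => hl.trans (hmin x hx y hy q hq)
  have hdrop : ∀ i, ∀ v ∈ (p.drop i).support, v ∈ U := fun i v hv =>
    hp v ((p.isSubwalk_drop i).support_subset hv)
  have htake : ∀ i, ∀ v ∈ (p.take i).support, v ∈ U := fun i v hv =>
    hp v ((p.isSubwalk_take i).support_subset hv)
  have hX : ∀ i ≤ p.length, p.getVert i ∈ X → i = 0 := by
    intro i hi hXi
    have := hmin _ hXi y hy (p.drop i) (hdrop i)
    rw [Walk.drop_length] at this
    omega
  have hY : ∀ i ≤ p.length, p.getVert i ∈ Y → i = p.length := by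
    intro i hi hYi
    have := hmin x hx _ hYi (p.take i) (htake i)
    rw [Walk.take_length] at this
    omega
  have hch : ∀ i j, i < j → j ≤ p.length → H.Adj (p.getVert i) (p.getVert j) → j = i + 1 := by
    intro i j hij hj hadj
    have := hmin x hx y hy ((p.take i).append (Walk.cons hadj (p.drop j))) (by
      intro v hv
      rw [Walk.mem_support_append_iff, Walk.support_cons, List.mem_cons] at hv
      rcases hv with hv | rfl | hv
      · exact htake i v hv
      · exact hp _ (p.getVert_mem_support i)
      · exact hdrop j v hv)
    rw [Walk.length_append, Walk.length_cons, Walk.drop_length, Walk.take_length] at this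
    omega
  have hinj : ∀ i j, i ≤ p.length → j ≤ p.length → p.getVert i = p.getVert j → i = j :=
    fun i j hi hj h => hpath.getVert_injOn hi hj h
  refine ⟨p.support.toFinset, by simpa using hp, ⟨x, hx, y, hy, p, hpath, by simp⟩, ?_⟩
  intro a ha
  simp only [List.mem_toFinset, Walk.mem_support_iff_exists_getVert] at ha
  obtain ⟨i, rfl, hi⟩ := ha
  have hfil : p.support.toFinset.filter (fun b => H.Adj (p.getVert i) b) =
      (if 0 < i then {p.getVert (i - 1)} else ∅) ∪
        (if i < p.length then {p.getVert (i + 1)} else ∅) := by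
    ext b
    simp only [Finset.mem_filter, List.mem_toFinset, Walk.mem_support_iff_exists_getVert,
      Finset.mem_union]
    constructor
    · rintro ⟨⟨j, rfl, hj⟩, hadj⟩
      rcases lt_trichotomy i j with h | h | h
      · have := hch i j h hj hadj
        subst this
        right
        rw [if_pos (by omega)]
        simp
      · subst h
        exact absurd hadj (H.loopless.irrefl _)
      · have := hch j i h hi hadj.symm
        subst this
        left
        simp
    · rintro (h | h)
      · split_ifs at h with h0
        · obtain ⟨i, rfl⟩ : ∃ j, i = j + 1 := ⟨i - 1, by omega⟩
          simp only [Nat.add_sub_cancel, Finset.mem_singleton] at h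
          subst h
          exact ⟨⟨i, rfl, by omega⟩, (p.adj_getVert_succ (by omega)).symm⟩
        · simp at h
      · split_ifs at h with h0
        · simp only [Finset.mem_singleton] at h
          subst h
          exact ⟨⟨i + 1, rfl, by omega⟩, p.adj_getVert_succ h0⟩
        · simp at h
  have hX' : p.getVert i ∈ X ↔ i = 0 := ⟨hX i hi, by rintro rfl; simpa using hx⟩
  have hY' : p.getVert i ∈ Y ↔ i = p.length := ⟨hY i hi, by rintro rfl; simpa using hy⟩
  have hcard : (p.support.toFinset.filter (fun b => H.Adj (p.getVert i) b)).card =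
      (if 0 < i then 1 else 0) + (if i < p.length then 1 else 0) := by
    rw [hfil, Finset.card_union_of_disjoint]
    · split_ifs <;> simp
    · split_ifs <;> simp
      intro h
      have := hinj _ _ (by omega) (by omega) h
      omega
  unfold xyDeg
  rw [hcard]
  simp only [hX', hY']
  split_ifs <;> omega

/-- In a nonempty part of a good set, some vertex has degree at most one. -/
theorem GoodSet.exists_low {X Y : Set V} {H : SimpleGraph V} {Q : Finset V}
    (hQ : GoodSet X Y H Q) (A : Set V) (hA : ∃ a ∈ A, a ∈ Q) :
    ∃ a ∈ A, a ∈ Q ∧ ∃ b, ∀ c ∈ Q, c ∈ A → H.Adj a c → c = b := by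
  classical
  obtain ⟨⟨x, hx, y, hy, p, hp, hs⟩, hdeg⟩ := hQ
  have hxQ : x ∈ Q := (hs x).1 p.start_mem_support
  have fin : ∀ a, ∀ s : Finset V, (∀ c ∈ Q, c ∈ A → H.Adj a c → c ∈ s) → s.card ≤ 1 →
      ∃ b, ∀ c ∈ Q, c ∈ A → H.Adj a c → c = b := by
    intro a s h h1
    have : Nonempty V := ⟨a⟩
    obtain ⟨b, hb⟩ := Finset.card_le_one_iff_subset_singleton.1 h1
    exact ⟨b, fun c hc hcA hac => by simpa using hb (h c hc hcA hac)⟩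
  by_cases hxA : x ∈ A
  · refine ⟨x, hxA, hxQ, fin x (Q.filter (fun b => H.Adj x b)) ?_ ?_⟩
    · intro c hc _ hac
      simp [hc, hac]
    · have := hdeg x hxQ
      unfold xyDeg at this
      rw [if_pos hx] at this
      omega
  · obtain ⟨u, huA, huQ⟩ := hA
    have hup := (hs u).2 huQ
    obtain ⟨d, hd, hd1, hd2⟩ := (p.takeUntil u hup).reverse.exists_boundary_dart A huA hxA
    have hsub : ∀ v ∈ (p.takeUntil u hup).reverse.support, v ∈ Q := by
      intro v hv
      rw [Walk.support_reverse, List.mem_reverse] at hv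
      exact (hs v).1 (p.support_takeUntil_subset_support hup hv)
    have h1 : d.fst ∈ Q := hsub _ (Walk.dart_fst_mem_support_of_mem_darts _ hd)
    have h2 : d.snd ∈ Q := hsub _ (Walk.dart_snd_mem_support_of_mem_darts _ hd)
    refine ⟨d.fst, hd1, h1, fin d.fst ((Q.filter (fun b => H.Adj d.fst b)).erase d.snd) ?_ ?_⟩
    · intro c hc hcA hac
      simp only [Finset.mem_erase, Finset.mem_filter]
      exact ⟨fun h => hd2 (h ▸ hcA), hc, hac⟩
    · rw [Finset.card_erase_of_mem (by simp [h2, d.adj])]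
      have := hdeg d.fst h1
      unfold xyDeg at this
      have h3 : (Q.filter (fun b => H.Adj d.fst b)).card ≤ 2 := by
        omega
      omega

/-- `m` disjoint induced minimal `X`-`Y`-paths of `H` with no `H`-edges between them, inside `W`. -/
def HasSystem (X Y : Set V) (H : SimpleGraph V) (W : Set V) (m : ℕ) : Prop :=
  ∃ Q : Fin m → Finset V,
    (∀ i j, i ≠ j → ∀ v ∈ Q i, v ∉ Q j) ∧
    (∀ i, GoodSet X Y H (Q i)) ∧
    (∀ i j, i ≠ j → ∀ a ∈ Q i, ∀ b ∈ Q j, ¬ H.Adj a b) ∧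
    (∀ i, ∀ v ∈ Q i, v ∈ W)

/-- One round: resolve the conflicts coming from an induced matching `S`. -/
theorem round_step {X Y : Set V} {H S : SimpleGraph V} {W : Set V} {r : ℕ}
    (hS : ∀ a b c, S.Adj a b → S.Adj a c → b = c)
    (hind : ∀ a a' b b', S.Adj a a' → S.Adj b b' → H.Adj a b → b = a')
    (hQ : HasSystem X Y H W (2 * r)) : HasSystem X Y (H ⊔ S) W r := by
  classical
  obtain ⟨Q, hdis, hgood, hnon, hW⟩ := hQ
  -- the contraction map
  let c : V → Set V := fun v => {w | w = v ∨ S.Adj v w}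
  have c_eq : ∀ v w, c v = c w → v = w ∨ S.Adj v w := by
    intro v w h
    have : w ∈ c v := by rw [h]; exact Or.inl rfl
    rcases this with h | h
    · exact Or.inl h.symm
    · exact Or.inr h
  have c_adj : ∀ v w, S.Adj v w → c v = c w := by
    intro v w h
    ext u
    constructor
    · rintro (rfl | hu)
      · exact Or.inr h.symm
      · exact Or.inl (hS _ _ _ hu h)
    · rintro (rfl | hu)
      · exact Or.inr h
      · exact Or.inl (hS _ _ _ hu h.symm)
  let W' : Finset V := Finset.univ.biUnion Q
  have memW' : ∀ v, v ∈ W' ↔ ∃ i, v ∈ Q i := by intro v; simp [W']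
  let F : Finset (Sym2 (Set V)) :=
    ((W' ×ˢ W').filter (fun z => H.Adj z.1 z.2)).image (fun z => s(c z.1, c z.2))
  let A : Set (Set V) := c '' {v | v ∈ X ∧ v ∈ W'}
  let B : Set (Set V) := c '' {v | v ∈ Y ∧ v ∈ W'}
  have hAfin : A.Finite := Set.Finite.image _ ((Finset.finite_toSet W').subset fun v hv => hv.2)
  -- pushing walks down to the contraction
  have push : ∀ (i : Fin (2 * r)) (T : Finset (Set V)), (∀ v ∈ Q i, c v ∉ T) →
      ∀ x y (p : H.Walk x y), (∀ v ∈ p.support, v ∈ Q i) →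
      Conn (fromEdgeSet (F : Set (Sym2 (Set V)))) (↑T)ᶜ (c x) (c y) := by
    intro i T hT x y p
    induction p with
    | nil => exact fun hp => Conn.refl (hT _ (hp _ (by simp)))
    | @cons a b d hadj p ih =>
      intro hp
      have ha : a ∈ Q i := hp _ (by simp)
      have hb : b ∈ Q i := hp _ (by simp)
      refine Conn.trans ?_ (ih fun v hv => hp v (by simp [hv]))
      by_cases hab : c a = c b
      · rw [hab]
        exact Conn.refl (hT _ hb)
      · refine Conn.adj ?_ (hT _ ha) (hT _ hb)
        rw [fromEdgeSet_adj]
        refine ⟨?_, hab⟩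
        simp only [F, Finset.coe_image, Set.mem_image]
        exact ⟨(a, b), by simp [memW', hadj]; exact ⟨⟨i, ha⟩, ⟨i, hb⟩⟩, rfl⟩
  have hsep : ∀ T : Finset (Set V),
      (∀ a ∈ A, ∀ b ∈ B, ¬ Conn (fromEdgeSet (F : Set (Sym2 (Set V)))) (↑T)ᶜ a b) →
      r ≤ T.card := by
    intro T hT
    have hv : ∀ i, ∃ v ∈ Q i, c v ∈ T := by
      intro i
      by_contra hcon
      push Not at hcon
      obtain ⟨⟨x, hx, y, hy, p, hp, hs⟩, -⟩ := hgood i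
      refine hT (c x) ⟨x, ⟨hx, (memW' x).2 ⟨i, (hs x).1 p.start_mem_support⟩⟩, rfl⟩
        (c y) ⟨y, ⟨hy, (memW' y).2 ⟨i, (hs y).1 p.end_mem_support⟩⟩, rfl⟩
        (push i T hcon x y p fun v hv => (hs v).1 hv)
    choose v hvQ hvT using hv
    have vinj : ∀ i j, v i = v j → i = j := by
      intro i j h
      by_contra hne
      exact hdis i j hne _ (hvQ i) (h ▸ hvQ j)
    have := Finset.card_le_mul_card_image_of_maps_to (s := (Finset.univ : Finset (Fin (2 * r))))
      (t := T) (f := fun i => c (v i)) (fun i _ => hvT i) 2 (by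
        intro t _
        by_contra hcard
        push Not at hcard
        obtain ⟨i, j, l, hi, hj, hl, hij, hil, hjl⟩ := Finset.two_lt_card_iff.1 hcard
        simp only [Finset.mem_filter, Finset.mem_univ, true_and] at hi hj hl
        have e1 := (c_eq (v i) (v j) (hi.trans hj.symm)).resolve_left fun h => hij (vinj _ _ h)
        have e2 := (c_eq (v i) (v l) (hi.trans hl.symm)).resolve_left fun h => hil (vinj _ _ h)
        exact hjl (vinj _ _ (hS _ _ _ e1 e2)))
    simp only [Finset.card_univ, Fintype.card_fin] at this
    omega
  obtain ⟨U, hU, hconn⟩ := menger F A B hAfin r hsep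
  -- lifting walks back
  have lift : ∀ (Z : Set (Set V)) (s t : Set V)
      (p : (fromEdgeSet (F : Set (Sym2 (Set V)))).Walk s t),
      (∀ z ∈ p.support, z ∈ Z) → ∀ v w, v ∈ W' → w ∈ W' → c v = s → c w = t →
      Conn (H ⊔ S) {u | u ∈ W' ∧ c u ∈ Z} v w := by
    have same : ∀ (Z : Set (Set V)) (v w : V), v ∈ W' → w ∈ W' → c v = c w → c v ∈ Z →
        Conn (H ⊔ S) {u | u ∈ W' ∧ c u ∈ Z} v w := by
      intro Z v w hv hw hcv hZ
      rcases c_eq v w hcv with rfl | h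
      · exact Conn.refl ⟨hv, hZ⟩
      · exact Conn.adj (Or.inr h) ⟨hv, hZ⟩ ⟨hw, hcv ▸ hZ⟩
    intro Z s t p
    induction p with
    | nil =>
      intro hp v w hv hw hvs hws
      exact same Z v w hv hw (hvs.trans hws.symm) (hvs ▸ hp _ (by simp))
    | @cons s s' t hadj p ih =>
      intro hp v w hv hw hvs hwt
      rw [fromEdgeSet_adj] at hadj
      obtain ⟨hm, -⟩ := hadj
      have hsZ : s ∈ Z := hp _ (by simp)
      have hsZ' : s' ∈ Z := hp _ (by simp)
      have hab : ∃ a b, a ∈ W' ∧ b ∈ W' ∧ H.Adj a b ∧ c a = s ∧ c b = s' := by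
        simp only [F, Finset.coe_image, Set.mem_image, Finset.mem_coe, Finset.mem_filter,
          Finset.mem_product] at hm
        obtain ⟨⟨a, b⟩, ⟨⟨ha, hb⟩, hadj⟩, he⟩ := hm
        rw [Sym2.eq_iff] at he
        rcases he with ⟨h1, h2⟩ | ⟨h1, h2⟩
        · exact ⟨a, b, ha, hb, hadj, h1, h2⟩
        · exact ⟨b, a, hb, ha, hadj.symm, h2, h1⟩
      obtain ⟨a, b, ha, hb, hadj, has, hbs⟩ := hab
      refine (same Z v a hv ha (hvs.trans has.symm) (hvs ▸ hsZ)).trans (Conn.trans ?_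
        (ih (fun z hz => hp z (by simp [hz])) b w hb hw hbs hwt))
      exact Conn.adj (Or.inl hadj) ⟨ha, has ▸ hsZ⟩ ⟨hb, hbs ▸ hsZ'⟩
  have hR : ∀ i, ∃ R : Finset V, (∀ v ∈ R, v ∈ {u | u ∈ W' ∧ c u ∈ U i}) ∧
      GoodSet X Y (H ⊔ S) R := by
    intro i
    obtain ⟨_, ⟨x, ⟨hx, hxW⟩, rfl⟩, _, ⟨y, ⟨hy, hyW⟩, rfl⟩, p, hp⟩ := hconn i
    exact exists_goodSet hx hy (lift (U i) _ _ p hp x y hxW hyW rfl rfl)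
  choose R hRU hRg using hR
  have Udis : ∀ i j z, z ∈ U i → z ∈ U j → i = j := by
    intro i j z hi hj
    by_contra hne
    exact Set.disjoint_left.1 (hU hne) hi hj
  have Rdis : ∀ i j, i ≠ j → ∀ v ∈ R i, v ∉ R j := fun i j hij v hv hv' =>
    hij (Udis i j _ (hRU i v hv).2 (hRU j v hv').2)
  have key : ∀ i j, i ≠ j → ∀ a ∈ R i, ∀ b ∈ R j, H.Adj a b → ∃ a' ∈ R i, S.Adj a a' := by
    intro i j hij a ha b hb hab
    by_contra hcon
    push Not at hcon
    obtain ⟨s, has⟩ := (memW' a).1 (hRU i a ha).1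
    have inQ : ∀ d, d ∈ W' → H.Adj a d → d ∈ Q s := by
      intro d hd had
      obtain ⟨t, hdt⟩ := (memW' d).1 hd
      by_cases hst : s = t
      · exact hst ▸ hdt
      · exact absurd had (hnon s t hst a has d hdt)
    have d1 := (hgood s).2 a has
    have d2 := (hRg i).2 a ha
    unfold xyDeg at d1 d2
    have hlt : ∀ inst : DecidablePred fun b => (H ⊔ S).Adj a b,
        (@Finset.filter V (fun b => (H ⊔ S).Adj a b) inst (R i)).card <
        ((Q s).filter (fun b => H.Adj a b)).card := by
      intro inst
      apply Finset.card_lt_card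
      rw [Finset.ssubset_iff_of_subset]
      · refine ⟨b, by simp [hab, inQ b (hRU j b hb).1 hab], ?_⟩
        simp only [Finset.mem_filter, not_and]
        exact fun h => absurd h (Rdis j i hij.symm b hb)
      · intro d hd
        simp only [Finset.mem_filter, sup_adj] at hd ⊢
        obtain ⟨hd, had⟩ := hd
        have had := had.resolve_right (hcon d hd)
        exact ⟨inQ d (hRU i d hd).1 had, had⟩
    have hlt' := hlt (fun b => Classical.propDecidable _)
    omega
  refine ⟨R, Rdis, hRg, ?_, ?_⟩
  · intro i j hij a ha b hb hab
    rcases hab with hab | hab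
    · obtain ⟨a', ha', haa'⟩ := key i j hij a ha b hb hab
      obtain ⟨b', hb', hbb'⟩ := key j i hij.symm b hb a ha hab.symm
      have := hind a a' b b' haa' hbb' hab
      exact Rdis i j hij a' ha' (this ▸ hb)
    · refine hij (Udis i j _ (hRU i a ha).2 ?_)
      rw [c_adj a b hab]
      exact (hRU j b hb).2
  · intro i v hv
    obtain ⟨s, hs⟩ := (memW' v).1 (hRU i v hv).1
    exact hW s v hs

/-- Greedy colouring of a degenerate conflict relation. -/
theorem degenerate_coloring {ε : Type*} [DecidableEq ε] (C : ε → ε → Prop)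
    (hC : ∀ e f, C e f → C f e) (E : Finset ε)
    (h : ∀ E' ⊆ E, E'.Nonempty → ∃ e ∈ E', ∃ D : Finset ε, D.card ≤ 3 ∧
      ∀ f ∈ E', f ≠ e → C e f → f ∈ D) :
    ∃ col : ε → Fin 4, ∀ e ∈ E, ∀ f ∈ E, e ≠ f → C e f → col e ≠ col f := by
  classical
  induction E using Finset.strongInduction with
  | H E ih =>
    rcases E.eq_empty_or_nonempty with rfl | hne
    · exact ⟨fun _ => 0, by simp⟩
    · obtain ⟨e, he, D, hD, hDf⟩ := h E subset_rfl hne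
      obtain ⟨col, hcol⟩ := ih (E.erase e) (Finset.erase_ssubset he)
        (fun E' hE' => h E' (hE'.trans (Finset.erase_subset _ _)))
      obtain ⟨z, hz⟩ : ∃ z : Fin 4, z ∉ D.image col := by
        by_contra hcon
        push Not at hcon
        have h1 : (Finset.univ : Finset (Fin 4)).card ≤ (D.image col).card :=
          Finset.card_le_card fun z _ => hcon z
        have h2 := Finset.card_image_le (s := D) (f := col)
        simp at h1
        omega
      have hz' : ∀ f ∈ E, f ≠ e → C e f → col f ≠ z := by
        intro f hf hfe hef hfz
        exact hz (Finset.mem_image.2 ⟨f, hDf f hf hfe hef, hfz⟩)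
      refine ⟨Function.update col e z, ?_⟩
      intro f hf g hg hfg hCfg
      by_cases h1 : f = e
      · subst h1
        rw [Function.update_self, Function.update_of_ne (Ne.symm hfg)]
        exact (hz' g hg (Ne.symm hfg) hCfg).symm
      · by_cases h2 : g = e
        · subst h2
          rw [Function.update_self, Function.update_of_ne h1]
          exact hz' f hf h1 (hC _ _ hCfg)
        · rw [Function.update_of_ne h1, Function.update_of_ne h2]
          exact hcol f (by simp [h1, hf]) g (by simp [h2, hg]) hfg hCfg

theorem statement_5 (G : SimpleGraph V) (X Y : Set V) (k : ℕ)
    (P : Fin (16 * k) → PathPkg G)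
    (hP : ∀ i, IsXYPath G X Y (P i))
    (hdisj : Pairwise fun i j => PkgDisjoint (P i) (P j))
    (hinc : ∀ v, v ∈ (⋃ i, pkgSupport (P i)) →
      Set.Subsingleton {e : Sym2 V | e ∈ G.edgeSet ∧ v ∈ e ∧ e ∉ ⋃ i, pkgEdges (P i)}) :
    ∃ Q : Fin k → PathPkg G,
      (∀ i, IsXYPath G X Y (Q i)) ∧
      Pairwise fun i j => PkgNonAdj G (Q i) (Q j) := by
  classical
  -- the graph of edges inside a single path
  let H₀ : SimpleGraph V :=
    { Adj := fun a b => G.Adj a b ∧ ∃ i, a ∈ pkgSupport (P i) ∧ b ∈ pkgSupport (P i)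
      symm := ⟨fun a b h => ⟨h.1.symm, h.2.imp fun i hi => ⟨hi.2, hi.1⟩⟩⟩
      loopless := ⟨fun a h => G.loopless.irrefl a h.1⟩ }
  have hPuniq : ∀ i j v, v ∈ pkgSupport (P i) → v ∈ pkgSupport (P j) → i = j := by
    intro i j v hi hj
    by_contra hne
    exact hdisj hne v hi hj
  have hQ : ∀ i, ∃ Q : Finset V, (∀ v ∈ Q, v ∈ pkgSupport (P i)) ∧ GoodSet X Y H₀ Q := by
    intro i
    refine exists_goodSet (hP i).2.1 (hP i).2.2 ?_
    have hE : ∀ e ∈ (P i).2.2.edges, e ∈ H₀.edgeSet := by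
      intro e he
      induction e using Sym2.ind with
      | _ a b =>
        exact ⟨(P i).2.2.adj_of_mem_edges he, i, (P i).2.2.fst_mem_support_of_mem_edges he,
          (P i).2.2.snd_mem_support_of_mem_edges he⟩
    exact ⟨(P i).2.2.transfer H₀ hE, fun v hv => by simpa [pkgSupport] using hv⟩
  choose Q hQP hQg using hQ
  have hQuniq : ∀ i j v, v ∈ Q i → v ∈ Q j → i = j := fun i j v hi hj =>
    hPuniq i j v (hQP i v hi) (hQP j v hj)
  let W : Set V := {v | ∃ i, v ∈ Q i}
  -- the edges between different paths
  let N : SimpleGraph V :=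
    { Adj := fun a b => G.Adj a b ∧ ∃ i j, i ≠ j ∧ a ∈ Q i ∧ b ∈ Q j
      symm := ⟨fun a b ⟨h, i, j, hij, ha, hb⟩ => ⟨h.symm, j, i, hij.symm, hb, ha⟩⟩
      loopless := ⟨fun a h => G.loopless.irrefl a h.1⟩ }
  have hNE : ∀ a b, N.Adj a b → s(a, b) ∉ ⋃ i, pkgEdges (P i) := by
    rintro a b ⟨-, i, j, hij, ha, hb⟩ hmem
    obtain ⟨l, hl⟩ := Set.mem_iUnion.1 hmem
    have h1 := hPuniq i l a (hQP i a ha) ((P l).2.2.fst_mem_support_of_mem_edges hl)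
    have h2 := hPuniq j l b (hQP j b hb) ((P l).2.2.snd_mem_support_of_mem_edges hl)
    exact hij (h1.trans h2.symm)
  have hN : ∀ a b c, N.Adj a b → N.Adj a c → b = c := by
    intro a b c hab hac
    obtain ⟨i, j, hij, ha, hb⟩ := hab.2
    have := hinc a (Set.mem_iUnion.2 ⟨i, hQP i a ha⟩) ⟨hab.1, Sym2.mem_mk_left a b, hNE a b hab⟩
      ⟨hac.1, Sym2.mem_mk_left a c, hNE a c hac⟩
    exact Sym2.congr_right.1 this
  have hNW : ∀ a b, N.Adj a b → a ∈ W := by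
    rintro a b ⟨-, i, j, hij, ha, hb⟩
    exact ⟨i, ha⟩
  let W' : Finset V := Finset.univ.biUnion Q
  have memW' : ∀ v, v ∈ W' ↔ ∃ i, v ∈ Q i := by intro v; simp [W']
  let E : Finset (Sym2 V) :=
    ((W' ×ˢ W').filter (fun z => N.Adj z.1 z.2)).image (fun z => s(z.1, z.2))
  have memE : ∀ a b, s(a, b) ∈ E ↔ N.Adj a b := by
    intro a b
    constructor
    · intro h
      simp only [E, Finset.mem_image, Finset.mem_filter] at h
      obtain ⟨⟨u, v⟩, ⟨_, huv⟩, he⟩ := h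
      rw [Sym2.eq_iff] at he
      rcases he with ⟨rfl, rfl⟩ | ⟨rfl, rfl⟩
      · exact huv
      · exact huv.symm
    · intro h
      simp only [E, Finset.mem_image, Finset.mem_filter, Finset.mem_product]
      exact ⟨(a, b), ⟨⟨(memW' a).2 (hNW a b h), (memW' b).2 (hNW b a h.symm)⟩, h⟩, rfl⟩
  let C : Sym2 V → Sym2 V → Prop := fun e f => ∃ a ∈ e, ∃ b ∈ f, H₀.Adj a b
  -- neighbours in `H₀`
  have hnb : ∀ i, ∀ a ∈ Q i, ∀ b, b ∈ W → H₀.Adj a b → b ∈ Q i := by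
    rintro i a ha b ⟨j, hb⟩ ⟨-, l, hal, hbl⟩
    have h1 := hPuniq i l a (hQP i a ha) hal
    have h2 := hPuniq j l b (hQP j b hb) hbl
    rw [h1, ← h2]
    exact hb
  have hcol : ∃ col : Sym2 V → Fin 4, ∀ e ∈ E, ∀ f ∈ E, e ≠ f → C e f → col e ≠ col f := by
    apply degenerate_coloring
    · rintro e f ⟨a, ha, b, hb, hab⟩
      exact ⟨b, hb, a, ha, hab.symm⟩
    · intro E' hE' hne
      obtain ⟨e₀, he₀⟩ := hne
      have hverts : ∀ f ∈ E', ∀ v ∈ f, ∃ w, f = s(v, w) ∧ N.Adj v w := by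
        intro f hf v hv
        obtain ⟨w, rfl⟩ := Sym2.mem_iff_exists.1 hv
        exact ⟨w, rfl, (memE v w).1 (hE' hf)⟩
      obtain ⟨v₀, hv₀⟩ : ∃ v, v ∈ e₀ := by
        induction e₀ using Sym2.ind with
        | _ a b => exact ⟨a, by simp⟩
      obtain ⟨w₀, -, hN₀⟩ := hverts e₀ he₀ v₀ hv₀
      obtain ⟨i, hi⟩ := hNW _ _ hN₀
      obtain ⟨a, ⟨e, he, hae⟩, haQ, b, hb⟩ :=
        (hQg i).exists_low {v | ∃ e ∈ E', v ∈ e} ⟨v₀, ⟨e₀, he₀, hv₀⟩, hi⟩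
      obtain ⟨a', rfl, haa'⟩ := hverts e he a hae
      obtain ⟨i', hi'⟩ := hNW _ _ haa'.symm
      let nb : Finset V := (Q i').filter (fun c => H₀.Adj a' c)
      have hnbcard : nb.card ≤ 2 := by
        have := (hQg i').2 a' hi'
        unfold xyDeg at this
        have hh : nb.card = (@Finset.filter V (fun c => H₀.Adj a' c)
          (fun c => Classical.propDecidable _) (Q i')).card := by
          simp only [nb]
          congr
        omega
      let g : V → Sym2 V := fun v => if h : ∃ w, N.Adj v w then s(v, h.choose) else s(v, v)
      have hg : ∀ f ∈ E', ∀ v ∈ f, f = g v := by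
        intro f hf v hv
        obtain ⟨w, rfl, hvw⟩ := hverts f hf v hv
        have hex : ∃ w, N.Adj v w := ⟨w, hvw⟩
        simp only [g, dif_pos hex]
        rw [hN v w _ hvw hex.choose_spec]
      refine ⟨s(a, a'), he, (insert b nb).image g, ?_, ?_⟩
      · calc _ ≤ (insert b nb).card := Finset.card_image_le
          _ ≤ nb.card + 1 := Finset.card_insert_le _ _
          _ ≤ 3 := by omega
      · rintro f hf hfe ⟨u, hu, v, hv, huv⟩
        rw [Finset.mem_image]
        refine ⟨v, ?_, (hg f hf v hv).symm⟩
        obtain ⟨w, -, hvw⟩ := hverts f hf v hv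
        have hvW := hNW _ _ hvw
        rw [Finset.mem_insert]
        rcases Sym2.mem_iff.1 hu with rfl | rfl
        · exact Or.inl (hb v (hnb i _ haQ v hvW huv) ⟨f, hf, hv⟩ huv)
        · refine Or.inr ?_
          simp only [nb, Finset.mem_filter]
          exact ⟨hnb i' _ hi' v hvW huv, huv⟩
  obtain ⟨col, hcol⟩ := hcol
  let S : Fin 4 → SimpleGraph V := fun t =>
    { Adj := fun a b => N.Adj a b ∧ col s(a, b) = t
      symm := ⟨fun a b h => ⟨h.1.symm, by rw [Sym2.eq_swap]; exact h.2⟩⟩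
      loopless := ⟨fun a h => N.loopless.irrefl a h.1⟩ }
  have hSm : ∀ t a b c, (S t).Adj a b → (S t).Adj a c → b = c :=
    fun t a b c h h' => hN a b c h.1 h'.1
  have hSi : ∀ t (H : SimpleGraph V), (∀ a b, H.Adj a b → H₀.Adj a b ∨ N.Adj a b) →
      ∀ a a' b b', (S t).Adj a a' → (S t).Adj b b' → H.Adj a b → b = a' := by
    intro t H hH a a' b b' ha hb hab
    rcases hH a b hab with h | h
    · have heq : s(a, a') = s(b, b') := by
        by_contra hne
        exact hcol _ ((memE _ _).2 ha.1) _ ((memE _ _).2 hb.1) hne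
          ⟨a, by simp, b, by simp, h⟩ (ha.2.trans hb.2.symm)
      rcases Sym2.eq_iff.1 heq with ⟨h1, -⟩ | ⟨-, h2⟩
      · exact absurd h1 h.ne
      · exact h2.symm
    · exact hN a b a' h ha.1
  have s0 : HasSystem X Y H₀ W (2 * (2 * (2 * (2 * k)))) := by
    have hk : 2 * (2 * (2 * (2 * k))) = 16 * k := by ring
    rw [hk]
    refine ⟨Q, fun i j hij v hv hv' => hij (hQuniq i j v hv hv'), hQg, ?_, fun i v hv => ⟨i, hv⟩⟩
    intro i j hij a ha b hb hab
    exact hij (hQuniq i j b (hnb i a ha b ⟨j, hb⟩ hab) hb)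
  have s1 := round_step (hSm 0) (hSi 0 H₀ fun a b h => Or.inl h) s0
  have s2 := round_step (hSm 1) (hSi 1 (H₀ ⊔ S 0) (by
    rintro a b (h | h)
    · exact Or.inl h
    · exact Or.inr h.1)) s1
  have s3 := round_step (hSm 2) (hSi 2 (H₀ ⊔ S 0 ⊔ S 1) (by
    rintro a b ((h | h) | h)
    · exact Or.inl h
    · exact Or.inr h.1
    · exact Or.inr h.1)) s2
  have s4 := round_step (hSm 3) (hSi 3 (H₀ ⊔ S 0 ⊔ S 1 ⊔ S 2) (by
    rintro a b (((h | h) | h) | h)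
    · exact Or.inl h
    · exact Or.inr h.1
    · exact Or.inr h.1
    · exact Or.inr h.1)) s3
  obtain ⟨R, hRd, hRg, hRn, hRW⟩ := s4
  have hle : H₀ ⊔ S 0 ⊔ S 1 ⊔ S 2 ⊔ S 3 ≤ G := by
    rintro a b ((((h | h) | h) | h) | h)
    · exact h.1
    all_goals exact h.1.1
  have hpath : ∀ i, ∃ p : PathPkg G, IsXYPath G X Y p ∧ ∀ v, v ∈ pkgSupport p ↔ v ∈ R i := by
    intro i
    obtain ⟨⟨x, hx, y, hy, p, hp, hs⟩, -⟩ := hRg i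
    refine ⟨⟨x, y, p.mapLe hle⟩, ⟨?_, hx, hy⟩, fun v => ?_⟩
    · exact (Walk.isPath_mapLe hle).2 hp
    · simpa [pkgSupport] using hs v
  choose p hp hps using hpath
  refine ⟨p, hp, ?_⟩
  intro i j hij a ha b hb
  rw [hps] at ha hb
  refine ⟨fun h => hRd i j hij a ha (h ▸ hb), fun hab => ?_⟩
  apply hRn i j hij a ha b hb
  obtain ⟨s, hs⟩ := hRW i a ha
  obtain ⟨t, ht⟩ := hRW j b hb
  by_cases hst : s = t
  · subst hst
    exact Or.inl (Or.inl (Or.inl (Or.inl ⟨hab, s, hQP s a hs, hQP s b ht⟩)))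
  · have hNab : N.Adj a b := ⟨hab, s, t, hst, hs, ht⟩
    have h4 : ∀ z : Fin 4, z = 0 ∨ z = 1 ∨ z = 2 ∨ z = 3 := by decide
    rcases h4 (col s(a, b)) with h | h | h | h
    · exact Or.inl (Or.inl (Or.inl (Or.inr ⟨hNab, h⟩)))
    · exact Or.inl (Or.inl (Or.inr ⟨hNab, h⟩))
    · exact Or.inl (Or.inr ⟨hNab, h⟩)
    · exact Or.inr ⟨hNab, h⟩
end

section
/- Let G be a simple graph and let 𝒫 be a collection of pairwise disjoint paths in G such that every vertex of V(𝒫) is incident to at most one edge of E(G) \ E(𝒫). Then the set F of edges of the induced subgraph G[V(𝒫)] that do not lie on any path of 𝒫 can be partitioned into at most four induced matchings of G. -/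
open SimpleGraph

universe u

variable {V : Type u}

theorem aux_deg {W : Type*} (R : W → W → Prop) (r : W → ℕ)
    (hr : ∀ a b, R a b → r b = r a + 1)
    (hfun : ∀ a b c, R a b → R a c → b = c)
    (S : Finset (Sym2 W)) (hS : S.Nonempty)
    (hm : ∀ e ∈ S, ∀ f ∈ S, ∀ v, v ∈ e → v ∈ f → e = f) :
    ∃ e ∈ S, ∃ N : Finset (Sym2 W), N.card ≤ 3 ∧
      ∀ f ∈ S, (∃ a ∈ e, ∃ b ∈ f, R a b ∨ R b a) → f ∈ N := by
  classical
  by_contra hcon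
  push Not at hcon
  have h4 : ∀ e ∈ S, 4 ≤ (S.filter fun f => ∃ a ∈ e, ∃ b ∈ f, R a b ∨ R b a).card := by
    intro e he
    by_contra hlt
    obtain ⟨f, hf, h1, h2⟩ := hcon e he
      (S.filter fun f => ∃ a ∈ e, ∃ b ∈ f, R a b ∨ R b a) (by omega)
    exact h2 (Finset.mem_filter.2 ⟨hf, h1⟩)
  set U : Finset W := S.biUnion (fun e => e.toFinset) with hU
  have memU : ∀ v, v ∈ U ↔ ∃ e ∈ S, v ∈ e := by
    intro v; simp [hU]
  have hUc : U.card ≤ S.card * 2 := by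
    apply Finset.card_biUnion_le_card_mul
    intro e _
    induction e with
    | h x y =>
      rw [Sym2.toFinset_mk_eq]
      exact Finset.card_le_two
  have hUne : U.Nonempty := by
    obtain ⟨e, he⟩ := hS
    exact ⟨_, (memU _).2 ⟨e, he, Sym2.out_fst_mem e⟩⟩
  obtain ⟨v0, hv0, hmax⟩ := Finset.exists_max_image U r hUne
  haveI : Nonempty W := ⟨v0⟩
  set T : Finset (Sym2 W × Sym2 W) :=
    (S ×ˢ S).filter fun p => ∃ a ∈ p.1, ∃ b ∈ p.2, R a b with hT
  have hTc : T.card ≤ (U.erase v0).card := by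
    have hex : ∀ p : Sym2 W × Sym2 W, p ∈ T → ∃ a, a ∈ p.1 ∧ ∃ b ∈ p.2, R a b := by
      intro p hp
      obtain ⟨a, ha, hb⟩ := (Finset.mem_filter.1 hp).2
      exact ⟨a, ha, hb⟩
    choose! g hg1 hg2 using hex
    have hTS : ∀ p ∈ T, p.1 ∈ S ∧ p.2 ∈ S := fun p hp =>
      Finset.mem_product.1 (Finset.mem_filter.1 hp).1
    apply Finset.card_le_card_of_injOn g
    · intro p hp
      obtain ⟨b, hb, hR⟩ := hg2 p hp
      refine Finset.mem_coe.2 (Finset.mem_erase.2 ⟨?_, (memU _).2 ⟨p.1, (hTS p hp).1, hg1 p hp⟩⟩)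
      intro h
      have h1 := hr _ _ hR
      have h2 := hmax b ((memU _).2 ⟨p.2, (hTS p hp).2, hb⟩)
      rw [h] at h1
      omega
    · intro p hp q hq hpq
      obtain ⟨b, hb, hR⟩ := hg2 p hp
      obtain ⟨c, hc, hR'⟩ := hg2 q hq
      have hpq' : g p = g q := hpq
      have e1 : p.1 = q.1 := hm _ (hTS p hp).1 _ (hTS q hq).1 (g p) (hg1 p hp)
        (hpq' ▸ hg1 q hq)
      have hbc : b = c := hfun (g p) b c hR (hpq' ▸ hR')
      have e2 : p.2 = q.2 := hm _ (hTS p hp).2 _ (hTS q hq).2 b hb (hbc ▸ hc)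
      exact Prod.ext e1 e2
  set D : Finset (Sym2 W × Sym2 W) :=
    (S ×ˢ S).filter fun p => ∃ a ∈ p.1, ∃ b ∈ p.2, R a b ∨ R b a with hD
  have hDc : D.card ≤ T.card + T.card := by
    have hsub : D ⊆ T ∪ T.image Prod.swap := by
      rintro ⟨e, f⟩ hp
      obtain ⟨hp1, a, ha, b, hb, h⟩ := Finset.mem_filter.1 hp
      have hp1' := Finset.mem_product.1 hp1
      rw [Finset.mem_union]
      rcases h with h | h
      · exact Or.inl (Finset.mem_filter.2 ⟨hp1, a, ha, b, hb, h⟩)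
      · refine Or.inr (Finset.mem_image.2 ⟨(f, e), Finset.mem_filter.2 ⟨?_, b, hb, a, ha, h⟩, rfl⟩)
        exact Finset.mem_product.2 ⟨hp1'.2, hp1'.1⟩
    calc D.card ≤ _ := Finset.card_le_card hsub
      _ ≤ T.card + (T.image Prod.swap).card := Finset.card_union_le _ _
      _ ≤ _ := Nat.add_le_add_left Finset.card_image_le _
  have hDl : S.card * 4 ≤ D.card := by
    have : D.card = ∑ e ∈ S, (S.filter fun f => ∃ a ∈ e, ∃ b ∈ f, R a b ∨ R b a).card := by
      rw [hD, Finset.card_filter, Finset.sum_product]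
      refine Finset.sum_congr rfl fun e _ => ?_
      rw [Finset.card_filter]
    rw [this, ← smul_eq_mul]
    exact Finset.card_nsmul_le_sum _ _ _ h4
  have := Finset.card_erase_lt_of_mem hv0
  omega

theorem aux_greedy {W : Type*} (R : W → W → Prop) (r : W → ℕ)
    (hr : ∀ a b, R a b → r b = r a + 1)
    (hfun : ∀ a b c, R a b → R a c → b = c)
    (S : Finset (Sym2 W))
    (hm : ∀ e ∈ S, ∀ f ∈ S, ∀ v, v ∈ e → v ∈ f → e = f) :
    ∃ c : Sym2 W → Fin 4, ∀ e ∈ S, ∀ f ∈ S, e ≠ f →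
      (∃ a ∈ e, ∃ b ∈ f, R a b ∨ R b a) → c e ≠ c f := by
  classical
  induction S using Finset.strongInduction with
  | H S ih =>
    rcases S.eq_empty_or_nonempty with rfl | hne
    · exact ⟨fun _ => 0, by simp⟩
    obtain ⟨e, he, N, hN, hN'⟩ := aux_deg R r hr hfun S hne hm
    obtain ⟨c, hc⟩ := ih (S.erase e) (Finset.erase_ssubset he)
      (fun x hx y hy => hm x (Finset.mem_of_mem_erase hx) y (Finset.mem_of_mem_erase hy))
    obtain ⟨k, hk⟩ : ∃ k : Fin 4, k ∉ N.image c := by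
      by_contra hall
      push Not at hall
      have h1 : (Finset.univ : Finset (Fin 4)) ⊆ N.image c := fun k _ => hall k
      have h2 := Finset.card_le_card h1
      have h3 : (N.image c).card ≤ N.card := Finset.card_image_le
      simp only [Finset.card_univ, Fintype.card_fin] at h2
      omega
    refine ⟨Function.update c e k, ?_⟩
    have key : ∀ f ∈ S, f ≠ e → (∃ a ∈ e, ∃ b ∈ f, R a b ∨ R b a) → k ≠ c f := by
      intro f hf _ h hkf
      exact hk (Finset.mem_image.2 ⟨f, hN' f hf h, hkf.symm⟩)
    intro x hx y hy hxy h
    by_cases hxe : x = e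
    · subst hxe
      rw [Function.update_self, Function.update_of_ne hxy.symm]
      exact key y hy hxy.symm h
    · by_cases hye : y = e
      · subst hye
        rw [Function.update_self, Function.update_of_ne hxy]
        obtain ⟨a, ha, b, hb, hab⟩ := h
        exact (key x hx hxy ⟨b, hb, a, ha, hab.symm⟩).symm
      · rw [Function.update_of_ne hxe, Function.update_of_ne hye]
        exact hc x (Finset.mem_erase.2 ⟨hxe, hx⟩) y (Finset.mem_erase.2 ⟨hye, hy⟩) hxy h

theorem aux_color {W : Type*} (R : W → W → Prop) (r : W → ℕ)
    (hr : ∀ a b, R a b → r b = r a + 1)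
    (hfun : ∀ a b c, R a b → R a c → b = c)
    (F : Set (Sym2 W))
    (hm : ∀ e ∈ F, ∀ f ∈ F, ∀ v, v ∈ e → v ∈ f → e = f) :
    ∃ c : Sym2 W → Fin 4, ∀ e ∈ F, ∀ f ∈ F, e ≠ f →
      (∃ a ∈ e, ∃ b ∈ f, R a b ∨ R b a) → c e ≠ c f := by
  classical
  let H : SimpleGraph (Sym2 W) :=
    { Adj := fun e f => e ∈ F ∧ f ∈ F ∧ e ≠ f ∧ ∃ a ∈ e, ∃ b ∈ f, R a b ∨ R b a
      symm := by
        constructor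
        rintro e f ⟨he, hf, hne, a, ha, b, hb, h⟩
        exact ⟨hf, he, hne.symm, b, hb, a, ha, h.symm⟩
      loopless := by
        constructor
        rintro e ⟨_, _, h, _⟩
        exact h rfl }
  have hH : Nonempty (H →g (⊤ : SimpleGraph (Fin 4))) := by
    apply SimpleGraph.nonempty_hom_of_forall_finite_subgraph_hom
    intro G' hfin
    apply Classical.choice
    obtain ⟨c, hc⟩ := aux_greedy R r hr hfun (hfin.toFinset.filter (· ∈ F)) (by
      intro e he f hf
      exact hm e (Finset.mem_filter.1 he).2 f (Finset.mem_filter.1 hf).2)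
    refine ⟨⟨fun x => c x.1, ?_⟩⟩
    intro x y hxy
    have hadj : H.Adj x.1 y.1 := G'.adj_sub hxy
    obtain ⟨he, hf, hne, h⟩ := hadj
    exact hc x.1 (by simp [he]) y.1 (by simp [hf]) hne h
  obtain ⟨φ⟩ := hH
  refine ⟨φ, fun e he f hf hne h => ?_⟩
  have : H.Adj e f := ⟨he, hf, hne, h⟩
  exact φ.map_rel this

theorem aux_edges {W : Type*} {G : SimpleGraph W} {x y : W} (p : G.Walk x y) (a b : W)
    (h : s(a, b) ∈ p.edges) :
    ∃ k, k + 1 ≤ p.length ∧ ((p.getVert k = a ∧ p.getVert (k + 1) = b) ∨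
      (p.getVert k = b ∧ p.getVert (k + 1) = a)) := by
  induction p with
  | nil => simp at h
  | cons hadj q ih =>
    rw [SimpleGraph.Walk.edges_cons, List.mem_cons] at h
    rcases h with h | h
    · refine ⟨0, by simp, ?_⟩
      rw [Sym2.eq_iff] at h
      rcases h with ⟨rfl, rfl⟩ | ⟨rfl, rfl⟩ <;> simp
    · obtain ⟨k, hk, h⟩ := ih h
      exact ⟨k + 1, by simpa using hk, by simpa using h⟩

theorem statement_6 {ι : Type*} (G : SimpleGraph V) (P : ι → PathPkg G)
    (hpath : ∀ i, (P i).2.2.IsPath)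
    (hdisj : Pairwise fun i j => PkgDisjoint (P i) (P j))
    (hinc : ∀ v, v ∈ (⋃ i, pkgSupport (P i)) →
      Set.Subsingleton {e : Sym2 V | e ∈ G.edgeSet ∧ v ∈ e ∧ e ∉ ⋃ i, pkgEdges (P i)}) :
    ∃ M : Fin 4 → Set (Sym2 V),
      (∀ c, IsInducedMatching G (M c)) ∧
      (Pairwise fun c c' => Disjoint (M c) (M c')) ∧
      (⋃ c, M c) =
        {e | e ∈ G.edgeSet ∧ ∀ v, v ∈ e → v ∈ ⋃ i, pkgSupport (P i)} \
          (⋃ i, pkgEdges (P i)) := by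
  classical
  set F : Set (Sym2 V) := {e | e ∈ G.edgeSet ∧ ∀ v, v ∈ e → v ∈ ⋃ i, pkgSupport (P i)} \
          (⋃ i, pkgEdges (P i)) with hF
  have hm : ∀ e ∈ F, ∀ f ∈ F, ∀ v, v ∈ e → v ∈ f → e = f := by
    intro e he f hf v hve hvf
    exact hinc v (he.1.2 v hve) ⟨he.1.1, hve, he.2⟩ ⟨hf.1.1, hvf, hf.2⟩
  let Pos : V → ι → ℕ → Prop := fun v i k => k ≤ (P i).2.2.length ∧ (P i).2.2.getVert k = v
  have posU : ∀ v i k j l, Pos v i k → Pos v j l → i = j ∧ k = l := by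
    rintro v i k j l ⟨hk, h1⟩ ⟨hl, h2⟩
    have hij : i = j := by
      by_contra hne
      refine hdisj hne v ?_ ?_
      · show v ∈ (P i).2.2.support
        rw [← h1]; exact SimpleGraph.Walk.getVert_mem_support _ _
      · show v ∈ (P j).2.2.support
        rw [← h2]; exact SimpleGraph.Walk.getVert_mem_support _ _
    subst hij
    exact ⟨rfl, (hpath i).getVert_injOn hk hl (h1.trans h2.symm)⟩
  let R : V → V → Prop := fun a b => ∃ i k, Pos a i k ∧ Pos b i (k + 1)
  let r : V → ℕ := fun v => if h : ∃ k, ∃ i, Pos v i k then h.choose else 0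
  have hrv : ∀ v i k, Pos v i k → r v = k := by
    intro v i k h
    have hex : ∃ k, ∃ i, Pos v i k := ⟨k, i, h⟩
    obtain ⟨j, hj⟩ := hex.choose_spec
    have : r v = hex.choose := dif_pos hex
    rw [this]
    exact (posU _ _ _ _ _ hj h).2
  have hr : ∀ a b, R a b → r b = r a + 1 := by
    rintro a b ⟨i, k, ha, hb⟩
    rw [hrv _ _ _ ha, hrv _ _ _ hb]
  have hfun : ∀ a b c, R a b → R a c → b = c := by
    rintro a b c ⟨i, k, ha, hb⟩ ⟨j, l, ha', hc⟩
    obtain ⟨rfl, rfl⟩ := posU _ _ _ _ _ ha ha'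
    exact hb.2.symm.trans hc.2
  obtain ⟨c, hc⟩ := aux_color R r hr hfun F hm
  refine ⟨fun k => {e | e ∈ F ∧ c e = k}, ?_, ?_, ?_⟩
  · intro k
    refine ⟨fun e he => he.1.1.1, ?_⟩
    rintro e ⟨he, hek⟩ f ⟨hf, hfk⟩ hne a ha b hb
    refine ⟨?_, ?_⟩
    · rintro rfl
      exact hne (hm e he f hf a ha hb)
    · intro hab
      by_cases hp : s(a, b) ∈ ⋃ i, pkgEdges (P i)
      · obtain ⟨i, hi⟩ := Set.mem_iUnion.1 hp
        obtain ⟨k', hk', h⟩ := aux_edges (P i).2.2 a b hi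
        refine hc e he f hf hne ⟨a, ha, b, hb, ?_⟩ (hek.trans hfk.symm)
        rcases h with ⟨h1, h2⟩ | ⟨h1, h2⟩
        · exact Or.inl ⟨i, k', ⟨by omega, h1⟩, ⟨hk', h2⟩⟩
        · exact Or.inr ⟨i, k', ⟨by omega, h1⟩, ⟨hk', h2⟩⟩
      · have h1 : e = s(a, b) := hinc a (he.1.2 a ha) ⟨he.1.1, ha, he.2⟩
          ⟨hab, Sym2.mem_mk_left a b, hp⟩
        have h2 : f = s(a, b) := hinc b (hf.1.2 b hb) ⟨hf.1.1, hb, hf.2⟩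
          ⟨hab, Sym2.mem_mk_right a b, hp⟩
        exact hne (h1.trans h2.symm)
  · intro k l hkl
    rw [Set.disjoint_left]
    rintro e ⟨_, h1⟩ ⟨_, h2⟩
    exact hkl (h1.symm.trans h2)
  · ext e
    simp
end

section
/- Let G be a simple graph and let X, Y ⊆ V(G). If there exists a collection 𝒫 of five pairwise disjoint X-Y-paths in G such that every vertex of V(𝒫) is incident to at most one edge of E(G) \ E(𝒫), then G contains two pairwise non-adjacent X-Y-paths. -/
open SimpleGraph

universe u

variable {V : Type u}

/-! ### The finite automaton -/

/-- A state of the peeling automaton: the strands currently followed by the two paths, and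
the strands whose previous vertex lies on the first (`la`) or second (`lb`) path. -/
structure PState where
  a : Fin 5
  b : Fin 5
  la : List (Fin 5)
  lb : List (Fin 5)

namespace PState

def swap (t : PState) : PState := ⟨t.b, t.a, t.lb, t.la⟩

def map (p : Fin 5 → Fin 5) (t : PState) : PState := ⟨p t.a, p t.b, t.la.map p, t.lb.map p⟩

end PState

def feq (a b : Fin 5) : Bool := Nat.beq a.1 b.1

def fmem (a : Fin 5) (l : List (Fin 5)) : Bool := l.any (feq a)

def wfB (t : PState) : Bool :=
  !(feq t.a t.b) && !(fmem t.a t.lb) && !(fmem t.b t.la)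

/-- Moving one path through a crossing between the strands `i` and `j`. -/
def moveE (i j a a' : Fin 5) (lo ln : List (Fin 5)) : Bool :=
  feq a' a || ((feq a i && feq a' j || feq a j && feq a' i) && !(fmem a' lo) && fmem a ln)

def stepE (i j : Fin 5) (t u : PState) : Bool :=
  moveE i j t.a u.a t.lb u.la && moveE i j t.b u.b t.la u.lb &&
  !((feq t.a i || feq t.a j) && (feq t.b i || feq t.b j)) &&
  t.la.all (fun c => feq c i || feq c j || fmem c u.la) &&
  t.lb.all (fun c => feq c i || feq c j || fmem c u.lb)

def stepC (f : Fin 5 → Fin 5) (t u : PState) : Bool :=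
  (feq u.a t.a || feq u.a (f t.a)) && (feq u.b t.b || feq u.b (f t.b)) &&
  (feq (f t.a) t.a || feq (f t.b) t.b ||
    (!(feq u.b t.a) && !(feq u.b (f t.a)) && !(feq u.a t.b) && !(feq u.a (f t.b)))) &&
  t.la.all (fun c => !(feq (f c) c) || fmem c u.la) &&
  t.lb.all (fun c => !(feq (f c) c) || fmem c u.lb)

def permOf (l : List (Fin 5)) (i : Fin 5) : Fin 5 := l.getD i.1 0

def permTable : List (List (Fin 5)) := [
  [0, 1, 2, 3, 4], [0, 1, 2, 4, 3], [0, 1, 3, 2, 4], [0, 1, 3, 4, 2], [0, 1, 4, 2, 3], [0, 1, 4, 3, 2],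
  [0, 2, 1, 3, 4], [0, 2, 1, 4, 3], [0, 2, 3, 1, 4], [0, 2, 3, 4, 1], [0, 2, 4, 1, 3], [0, 2, 4, 3, 1],
  [0, 3, 1, 2, 4], [0, 3, 1, 4, 2], [0, 3, 2, 1, 4], [0, 3, 2, 4, 1], [0, 3, 4, 1, 2], [0, 3, 4, 2, 1],
  [0, 4, 1, 2, 3], [0, 4, 1, 3, 2], [0, 4, 2, 1, 3], [0, 4, 2, 3, 1], [0, 4, 3, 1, 2], [0, 4, 3, 2, 1],
  [1, 0, 2, 3, 4], [1, 0, 2, 4, 3], [1, 0, 3, 2, 4], [1, 0, 3, 4, 2], [1, 0, 4, 2, 3], [1, 0, 4, 3, 2],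
  [1, 2, 0, 3, 4], [1, 2, 0, 4, 3], [1, 2, 3, 0, 4], [1, 2, 3, 4, 0], [1, 2, 4, 0, 3], [1, 2, 4, 3, 0],
  [1, 3, 0, 2, 4], [1, 3, 0, 4, 2], [1, 3, 2, 0, 4], [1, 3, 2, 4, 0], [1, 3, 4, 0, 2], [1, 3, 4, 2, 0],
  [1, 4, 0, 2, 3], [1, 4, 0, 3, 2], [1, 4, 2, 0, 3], [1, 4, 2, 3, 0], [1, 4, 3, 0, 2], [1, 4, 3, 2, 0],
  [2, 0, 1, 3, 4], [2, 0, 1, 4, 3], [2, 0, 3, 1, 4], [2, 0, 3, 4, 1], [2, 0, 4, 1, 3], [2, 0, 4, 3, 1],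
  [2, 1, 0, 3, 4], [2, 1, 0, 4, 3], [2, 1, 3, 0, 4], [2, 1, 3, 4, 0], [2, 1, 4, 0, 3], [2, 1, 4, 3, 0],
  [2, 3, 0, 1, 4], [2, 3, 0, 4, 1], [2, 3, 1, 0, 4], [2, 3, 1, 4, 0], [2, 3, 4, 0, 1], [2, 3, 4, 1, 0],
  [2, 4, 0, 1, 3], [2, 4, 0, 3, 1], [2, 4, 1, 0, 3], [2, 4, 1, 3, 0], [2, 4, 3, 0, 1], [2, 4, 3, 1, 0],
  [3, 0, 1, 2, 4], [3, 0, 1, 4, 2], [3, 0, 2, 1, 4], [3, 0, 2, 4, 1], [3, 0, 4, 1, 2], [3, 0, 4, 2, 1],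
  [3, 1, 0, 2, 4], [3, 1, 0, 4, 2], [3, 1, 2, 0, 4], [3, 1, 2, 4, 0], [3, 1, 4, 0, 2], [3, 1, 4, 2, 0],
  [3, 2, 0, 1, 4], [3, 2, 0, 4, 1], [3, 2, 1, 0, 4], [3, 2, 1, 4, 0], [3, 2, 4, 0, 1], [3, 2, 4, 1, 0],
  [3, 4, 0, 1, 2], [3, 4, 0, 2, 1], [3, 4, 1, 0, 2], [3, 4, 1, 2, 0], [3, 4, 2, 0, 1], [3, 4, 2, 1, 0],
  [4, 0, 1, 2, 3], [4, 0, 1, 3, 2], [4, 0, 2, 1, 3], [4, 0, 2, 3, 1], [4, 0, 3, 1, 2], [4, 0, 3, 2, 1],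
  [4, 1, 0, 2, 3], [4, 1, 0, 3, 2], [4, 1, 2, 0, 3], [4, 1, 2, 3, 0], [4, 1, 3, 0, 2], [4, 1, 3, 2, 0],
  [4, 2, 0, 1, 3], [4, 2, 0, 3, 1], [4, 2, 1, 0, 3], [4, 2, 1, 3, 0], [4, 2, 3, 0, 1], [4, 2, 3, 1, 0],
  [4, 3, 0, 1, 2], [4, 3, 0, 2, 1], [4, 3, 1, 0, 2], [4, 3, 1, 2, 0], [4, 3, 2, 0, 1], [4, 3, 2, 1, 0]]

def crossTable : List (Fin 5 × Fin 5) := [(0, 1), (0, 2), (0, 3), (0, 4), (1, 2), (1, 3), (1, 4), (2, 3), (2, 4), (3, 4)]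

def classTable : List (List PState) := [
  [⟨0, 3, [], []⟩, ⟨0, 4, [], []⟩, ⟨1, 2, [], []⟩, ⟨1, 3, [], []⟩],
  [⟨0, 3, [], []⟩, ⟨0, 4, [], []⟩, ⟨1, 3, [], []⟩, ⟨2, 3, [1], []⟩],
  [⟨0, 1, [3], []⟩, ⟨0, 4, [], []⟩, ⟨1, 2, [], []⟩, ⟨1, 3, [], []⟩, ⟨3, 4, [0], []⟩],
  [⟨0, 1, [3], []⟩, ⟨0, 2, [3], [1]⟩, ⟨0, 4, [], []⟩, ⟨1, 3, [], []⟩, ⟨2, 3, [1], []⟩, ⟨3, 4, [0], []⟩],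
  [⟨0, 1, [], [3]⟩, ⟨0, 3, [], []⟩, ⟨0, 4, [], []⟩, ⟨2, 3, [], []⟩],
  [⟨0, 3, [], []⟩, ⟨1, 3, [], []⟩, ⟨2, 3, [1], []⟩, ⟨3, 4, [], [0]⟩],
  [⟨0, 1, [3], []⟩, ⟨0, 2, [3], [1]⟩, ⟨1, 3, [], []⟩, ⟨2, 3, [1], []⟩, ⟨3, 4, [], []⟩],
  [⟨0, 1, [3], []⟩, ⟨0, 3, [1, 2], []⟩, ⟨1, 2, [], [0, 3]⟩, ⟨1, 3, [], []⟩, ⟨2, 3, [1], []⟩, ⟨3, 4, [], []⟩],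
  [⟨0, 1, [], []⟩, ⟨0, 2, [3], []⟩, ⟨0, 4, [], []⟩, ⟨2, 3, [], []⟩, ⟨3, 4, [0], []⟩],
  [⟨0, 1, [], []⟩, ⟨0, 4, [], []⟩, ⟨1, 2, [], []⟩, ⟨1, 4, [0, 3], []⟩, ⟨2, 3, [], [1]⟩, ⟨3, 4, [0], []⟩],
  [⟨0, 1, [], []⟩, ⟨0, 2, [], []⟩, ⟨0, 4, [], []⟩, ⟨2, 4, [0, 3], []⟩, ⟨3, 4, [0], []⟩],
  [⟨0, 1, [], []⟩, ⟨0, 2, [3], []⟩, ⟨1, 4, [], [0]⟩, ⟨2, 3, [], []⟩, ⟨2, 4, [], [0, 3]⟩, ⟨3, 4, [], []⟩],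
  [⟨0, 1, [], []⟩, ⟨0, 2, [], []⟩, ⟨1, 4, [], [0]⟩, ⟨2, 4, [], [0]⟩, ⟨2, 4, [3], []⟩, ⟨3, 4, [], []⟩],
  [⟨0, 1, [], []⟩, ⟨0, 2, [], [1]⟩, ⟨0, 4, [], []⟩, ⟨1, 4, [0, 3], []⟩, ⟨2, 3, [], []⟩, ⟨3, 4, [0], []⟩],
  [⟨0, 2, [3], []⟩, ⟨1, 2, [0, 3], []⟩, ⟨1, 4, [], []⟩, ⟨2, 3, [], []⟩, ⟨2, 4, [], [3]⟩, ⟨3, 4, [], []⟩],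
  [⟨0, 1, [], []⟩, ⟨0, 2, [3], []⟩, ⟨0, 4, [3], [2]⟩, ⟨1, 2, [], [0, 4]⟩, ⟨1, 4, [], [0]⟩, ⟨2, 3, [], []⟩, ⟨3, 4, [], []⟩],
  [⟨0, 1, [], []⟩, ⟨0, 2, [], [1]⟩, ⟨0, 3, [], [1, 2]⟩, ⟨0, 4, [], []⟩, ⟨1, 4, [0], []⟩, ⟨2, 4, [0, 3], []⟩, ⟨3, 4, [0], []⟩],
  [⟨0, 1, [], []⟩, ⟨0, 2, [], [1]⟩, ⟨1, 4, [], [0]⟩, ⟨1, 4, [3], []⟩, ⟨2, 3, [], []⟩, ⟨2, 4, [1], [0]⟩, ⟨3, 4, [], []⟩],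
  [⟨0, 2, [3], []⟩, ⟨1, 2, [0, 3], []⟩, ⟨1, 2, [3, 4], []⟩, ⟨1, 3, [4], []⟩, ⟨2, 3, [], []⟩, ⟨2, 4, [], [3]⟩, ⟨3, 4, [], []⟩],
  [⟨0, 1, [], []⟩, ⟨0, 2, [], []⟩, ⟨1, 3, [], [0, 4]⟩, ⟨1, 4, [], [0]⟩, ⟨2, 3, [], [0, 4]⟩, ⟨2, 4, [], []⟩],
  [⟨0, 1, [], []⟩, ⟨0, 2, [], []⟩, ⟨0, 4, [], [2]⟩, ⟨1, 2, [], [0, 4]⟩, ⟨1, 3, [], [0]⟩, ⟨1, 4, [], [0]⟩, ⟨2, 3, [], [0]⟩],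
  [⟨0, 1, [], []⟩, ⟨0, 2, [], [1]⟩, ⟨1, 3, [], [0, 4]⟩, ⟨1, 4, [], []⟩, ⟨2, 3, [], []⟩, ⟨2, 4, [1], [0]⟩, ⟨2, 4, [], [3]⟩],
  [⟨0, 1, [], []⟩, ⟨0, 2, [], [1]⟩, ⟨0, 3, [], [1, 2]⟩, ⟨1, 3, [], [0, 4]⟩, ⟨1, 4, [], []⟩, ⟨2, 4, [], []⟩],
  [⟨0, 2, [], []⟩, ⟨0, 3, [], [2]⟩, ⟨0, 4, [1], []⟩, ⟨1, 3, [], [4]⟩, ⟨1, 4, [], []⟩, ⟨2, 4, [], []⟩]]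

def crossRows : List (List ℕ) := [
  [0, 0, 240, 149, 120, 269, 0, 0, 0, 0],
  [120, 120, 360, 600, 120, 480, 120, 486, 120, 120],
  [286, 240, 240, 509, 360, 1080, 240, 240, 240, 345],
  [193, 195, 360, 720, 360, 178, 360, 134, 360, 465],
  [562, 480, 960, 749, 480, 480, 480, 638, 480, 480],
  [600, 600, 720, 600, 600, 749, 600, 773, 600, 825],
  [635, 840, 720, 720, 720, 17, 720, 839, 720, 785],
  [630, 840, 194, 840, 600, 257, 840, 194, 840, 616],
  [193, 962, 960, 1320, 960, 960, 960, 1200, 960, 137],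
  [67, 1080, 1080, 989, 1560, 1080, 8, 128, 1080, 166],
  [584, 135, 1200, 1440, 1200, 1200, 1200, 1200, 814, 646],
  [1680, 39, 1320, 1320, 1320, 1320, 279, 1440, 1800, 137],
  [177, 153, 1440, 1440, 1440, 1440, 338, 1440, 336, 2280],
  [133, 15, 1560, 2040, 1560, 1560, 178, 1920, 1560, 313],
  [1680, 229, 1680, 1680, 396, 1680, 2160, 177, 475, 221],
  [475, 39, 1800, 1889, 281, 1800, 279, 135, 1800, 137],
  [123, 135, 129, 159, 1920, 1920, 632, 1920, 644, 646],
  [69, 39, 2040, 2040, 2040, 2040, 17, 159, 1829, 2520],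
  [2160, 669, 2160, 2160, 726, 2161, 2160, 216, 731, 148],
  [543, 519, 2280, 2280, 2280, 176, 542, 369, 2400, 2280],
  [30, 14, 2400, 30, 800, 634, 802, 632, 2400, 2400],
  [175, 298, 2520, 2520, 2520, 32, 137, 2640, 295, 2520],
  [2760, 519, 220, 2640, 2640, 152, 497, 2640, 620, 2640],
  [2760, 799, 221, 31, 2760, 123, 1629, 2760, 5, 2760]]

def cycleRows : List (List ℕ) := [
  [0, 0, 0, 0, 0, 0, 120, 90, 14, 9, 38, 14, 6, 68, 6, 1, 1, 1, 0, 13, 7, 0, 0, 0, 0, 0, 0,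
    0, 0, 0, 14, 9, 3, 90, 3, 144, 0, 0, 8, 0, 2, 4, 0, 0, 0, 37, 2, 4, 12, 3, 0, 0, 1, 0, 0,
    0, 8, 0, 0, 36, 6, 1, 9, 92, 8, 10, 6, 0, 9, 168, 8, 10, 0, 3, 40, 0, 1, 0, 2, 2, 43, 43,
    2, 65, 15, 9, 12, 90, 3, 39, 8, 2, 9, 63, 42, 47, 60, 125, 4, 16, 4, 10, 10, 16, 40, 149,
    16, 60, 38, 131, 16, 600, 16, 38, 4, 10, 17, 61, 41, 36],
  [120, 120, 184, 121, 125, 120, 120, 120, 160, 120, 130, 120, 184, 120, 160, 121, 122, 160,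
    124, 120, 131, 120, 160, 124, 120, 120, 184, 121, 123, 120, 120, 120, 136, 120, 120, 144,
    184, 120, 136, 120, 122, 125, 121, 120, 120, 144, 123, 124, 120, 120, 160, 120, 121, 120,
    120, 120, 9, 120, 120, 168, 160, 121, 137, 120, 122, 130, 129, 120, 120, 168, 122, 131,
    125, 120, 131, 120, 122, 125, 2, 123, 224, 225, 154, 65, 131, 120, 154, 145, 154, 172,
    122, 124, 154, 148, 154, 41, 124, 125, 130, 131, 130, 124, 124, 125, 200, 600, 16, 124,
    130, 131, 125, 600, 155, 130, 130, 124, 155, 124, 17, 130],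
  [240, 321, 240, 245, 242, 240, 360, 243, 268, 243, 32, 322, 269, 32, 269, 244, 241, 241,
    240, 328, 263, 240, 240, 240, 256, 291, 247, 248, 250, 246, 279, 243, 245, 276, 245, 144,
    241, 244, 241, 36, 241, 247, 240, 240, 240, 277, 240, 247, 253, 248, 247, 242, 248, 240,
    240, 242, 240, 10, 242, 277, 241, 242, 257, 244, 240, 241, 241, 240, 240, 217, 240, 240,
    247, 254, 256, 240, 246, 240, 240, 240, 240, 241, 240, 241, 245, 243, 265, 243, 245, 245,
    240, 240, 251, 240, 240, 240, 250, 125, 4, 256, 256, 241, 10, 281, 321, 149, 240, 241,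
    249, 155, 243, 600, 243, 243, 241, 241, 255, 241, 240, 241],
  [360, 441, 128, 386, 385, 360, 360, 386, 6, 386, 384, 360, 0, 386, 6, 386, 384, 40, 385,
    360, 409, 360, 40, 385, 90, 368, 368, 368, 368, 368, 90, 368, 360, 4, 360, 144, 1, 1,
    384, 4, 384, 1, 0, 368, 360, 144, 360, 368, 91, 362, 1, 0, 1, 362, 195, 362, 385, 10,
    362, 217, 362, 362, 360, 10, 360, 362, 362, 362, 360, 168, 385, 1, 360, 360, 368, 360,
    368, 360, 385, 360, 360, 361, 360, 393, 360, 360, 360, 361, 360, 360, 360, 362, 360, 360,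
    360, 360, 4, 125, 4, 131, 4, 361, 10, 179, 441, 600, 360, 361, 4, 131, 386, 600, 360,
    361, 361, 10, 360, 361, 360, 361],
  [480, 480, 632, 481, 483, 480, 480, 480, 492, 481, 480, 480, 486, 480, 480, 480, 480, 483,
    486, 480, 480, 480, 492, 632, 556, 556, 486, 486, 486, 486, 486, 486, 3, 486, 486, 553,
    486, 486, 486, 556, 486, 510, 486, 486, 486, 556, 511, 486, 534, 510, 480, 480, 480, 480,
    480, 480, 482, 480, 480, 534, 480, 480, 480, 480, 480, 506, 480, 480, 480, 534, 482, 480,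
    13, 528, 509, 559, 482, 483, 483, 480, 482, 559, 482, 16, 480, 480, 482, 482, 482, 504,
    480, 483, 482, 483, 482, 509, 555, 558, 506, 566, 485, 484, 484, 485, 485, 749, 22, 484,
    484, 491, 484, 600, 582, 484, 485, 484, 485, 484, 485, 506],
  [600, 120, 148, 121, 125, 600, 600, 90, 172, 90, 36, 600, 148, 90, 172, 92, 36, 64, 60,
    600, 40, 600, 40, 60, 600, 90, 60, 90, 60, 600, 600, 90, 12, 90, 12, 600, 60, 90, 12, 90,
    12, 60, 60, 600, 12, 600, 12, 60, 600, 90, 36, 90, 36, 600, 600, 90, 14, 90, 14, 600, 36,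
    90, 12, 90, 12, 36, 36, 600, 12, 600, 12, 36, 60, 90, 36, 90, 36, 60, 63, 90, 224, 120,
    12, 60, 36, 90, 12, 90, 12, 36, 36, 60, 12, 60, 12, 36, 60, 600, 36, 600, 36, 60, 60,
    600, 224, 600, 12, 60, 36, 600, 12, 600, 12, 36, 36, 60, 12, 60, 12, 36],
  [720, 770, 833, 770, 818, 720, 720, 746, 744, 746, 769, 720, 768, 746, 744, 746, 744, 745,
    745, 720, 769, 720, 744, 745, 600, 728, 768, 728, 728, 731, 600, 728, 720, 728, 720, 731,
    61, 737, 744, 4, 744, 729, 753, 600, 720, 731, 720, 752, 600, 722, 37, 736, 755, 600,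
    840, 736, 820, 130, 800, 600, 744, 722, 720, 722, 720, 744, 722, 725, 720, 725, 745, 723,
    720, 746, 728, 760, 728, 731, 833, 785, 720, 770, 720, 720, 720, 746, 720, 746, 720, 720,
    725, 722, 720, 720, 720, 720, 728, 720, 4, 825, 729, 728, 170, 635, 770, 720, 720, 721,
    722, 720, 746, 720, 720, 721, 722, 723, 720, 721, 720, 721],
  [840, 900, 45, 900, 948, 840, 600, 878, 890, 878, 4, 845, 864, 9, 36, 900, 36, 864, 874,
    861, 895, 840, 895, 874, 600, 852, 60, 852, 847, 893, 600, 878, 12, 3, 3, 600, 840, 854,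
    846, 36, 840, 846, 874, 840, 842, 861, 842, 0, 600, 852, 840, 852, 872, 893, 840, 854,
    43, 854, 892, 840, 36, 854, 840, 854, 840, 36, 841, 840, 842, 840, 842, 840, 60, 3, 846,
    852, 840, 847, 45, 854, 43, 854, 848, 850, 840, 878, 12, 878, 3, 840, 840, 874, 9, 874,
    842, 840, 4, 600, 4, 899, 840, 4, 850, 840, 892, 840, 848, 850, 844, 845, 843, 845, 843,
    840, 36, 840, 845, 840, 840, 36],
  [960, 962, 632, 176, 200, 960, 960, 962, 974, 176, 960, 960, 966, 962, 960, 962, 960, 971,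
    154, 960, 974, 960, 974, 632, 193, 968, 968, 968, 968, 1009, 1036, 968, 968, 1004, 968,
    1036, 1, 974, 974, 4, 974, 974, 992, 974, 968, 1036, 968, 968, 1048, 962, 1, 972, 1016,
    985, 962, 962, 961, 10, 960, 1028, 962, 962, 960, 986, 960, 962, 962, 962, 962, 962, 961,
    972, 960, 960, 998, 960, 998, 960, 962, 960, 960, 961, 960, 960, 960, 960, 960, 961, 960,
    960, 960, 962, 960, 960, 960, 960, 973, 1054, 4, 1052, 1009, 961, 20, 967, 962, 1044,
    960, 961, 973, 961, 962, 961, 961, 961, 961, 985, 960, 961, 960, 961],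
  [1080, 160, 128, 2, 1, 1080, 12, 1082, 1086, 34, 1080, 1104, 1082, 1082, 1080, 6, 1080,
    1080, 44, 1142, 6, 8, 1083, 42, 66, 1088, 1086, 1088, 1086, 66, 1104, 1082, 3, 1155,
    1088, 19, 1080, 1080, 1087, 1134, 1087, 1085, 1136, 1080, 1088, 1094, 1086, 1081, 1086,
    1088, 1086, 1157, 1086, 1080, 1080, 1082, 1160, 10, 1082, 1134, 1080, 1081, 1080, 1081,
    1080, 1134, 1082, 1081, 1108, 1081, 1083, 1081, 3, 1086, 1111, 1083, 1111, 1083, 1134,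
    1080, 1080, 1081, 1080, 1081, 1080, 1105, 1082, 1084, 1082, 1081, 1080, 1081, 1083, 1105,
    1083, 1080, 1130, 30, 1132, 1085, 1087, 1081, 10, 1085, 1185, 37, 1080, 1081, 1084, 1084,
    1082, 1084, 1128, 1081, 1085, 1081, 1080, 1084, 1080, 36],
  [1200, 632, 1200, 632, 632, 808, 1200, 1212, 1200, 1200, 632, 1221, 1200, 632, 1200, 1221,
    1206, 1200, 1212, 1206, 1212, 1200, 1206, 1200, 70, 1214, 1208, 1208, 1214, 66, 70, 1214,
    1208, 1234, 1220, 1208, 1, 1222, 1208, 4, 1208, 1208, 1238, 66, 1214, 1208, 1208, 1208,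
    46, 1212, 1, 1202, 1262, 42, 46, 6, 1202, 1213, 6, 1202, 1202, 1218, 1202, 1203, 1202,
    1200, 1212, 42, 1212, 1202, 1202, 1200, 1200, 1206, 1250, 1200, 1232, 1200, 1280, 12,
    1200, 1201, 12, 1200, 1200, 1200, 1200, 1201, 1219, 1201, 1206, 1225, 1206, 1200, 1200,
    1200, 1203, 1250, 18, 1226, 1248, 1207, 1212, 1250, 1203, 18, 1200, 18, 1203, 1226, 1203,
    18, 1200, 18, 1200, 1202, 1200, 18, 1200, 18],
  [1320, 137, 21, 1322, 1321, 1800, 1320, 30, 1334, 34, 1320, 16, 1326, 1322, 1320, 11,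
    1351, 1350, 34, 14, 8, 14, 1351, 1350, 193, 1335, 1328, 1328, 1328, 66, 18, 1335, 1328,
    1326, 1330, 1320, 1, 1336, 1334, 1320, 1354, 1332, 1342, 6, 2, 1344, 1340, 1350, 43,
    1333, 1, 1352, 1343, 43, 1394, 1333, 1332, 1332, 1327, 1409, 1322, 1323, 1320, 1320,
    1338, 1351, 1333, 1323, 1339, 1323, 1350, 1332, 1320, 1339, 1330, 2, 1330, 1340, 1322,
    1333, 1320, 1363, 1327, 1320, 1320, 1339, 1320, 1363, 1321, 1320, 1338, 1323, 1327, 1320,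
    1321, 1320, 1357, 1330, 1335, 1341, 1334, 1328, 1384, 1394, 1357, 1320, 1320, 18, 1333,
    1320, 1357, 1320, 1326, 1332, 1322, 1332, 1320, 1326, 1320, 1320],
  [1440, 137, 1440, 17, 9, 1529, 1440, 1467, 1440, 1489, 32, 1523, 1440, 32, 1440, 1513,
    1465, 1464, 1467, 1529, 1469, 1522, 1465, 1464, 1488, 1449, 1448, 1449, 1449, 1488, 1488,
    1449, 1448, 1440, 1451, 1440, 1, 1474, 1448, 1440, 1474, 1440, 1456, 67, 2, 1464, 1450,
    1464, 1464, 1443, 1, 1472, 1457, 43, 1464, 1443, 1442, 1440, 8, 1475, 1442, 1443, 1442,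
    1440, 1444, 1465, 1443, 1464, 1445, 1440, 1464, 1440, 1440, 1451, 1450, 2, 1450, 1450,
    1444, 8, 1440, 1467, 1441, 1440, 1440, 1445, 1440, 1467, 1441, 1440, 1444, 1444, 1441,
    1440, 1441, 1440, 1467, 1440, 1480, 1451, 1448, 1448, 1504, 1445, 1467, 1440, 1440, 1440,
    1467, 1440, 1467, 1440, 1440, 1440, 1442, 1442, 1440, 1440, 1440, 1440],
  [1560, 1562, 1920, 176, 200, 1560, 1560, 1562, 1572, 176, 1560, 15, 1566, 1560, 1560, 9,
    1560, 1571, 154, 12, 6, 178, 1574, 632, 66, 1568, 1568, 1568, 1568, 66, 1574, 1568, 1568,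
    1575, 1568, 1574, 1, 1574, 1574, 1563, 1574, 1563, 1592, 1574, 1570, 1574, 1570, 1561,
    1591, 1562, 1, 1577, 1592, 1591, 1572, 1562, 1563, 10, 1560, 1628, 1562, 1564, 1560,
    1585, 1561, 1562, 1562, 1564, 1564, 1564, 1561, 1572, 1560, 1560, 1598, 1566, 1598, 1565,
    1588, 1560, 1560, 1561, 1560, 1561, 1560, 1561, 1560, 1561, 1566, 1560, 1560, 1564, 1565,
    1561, 12, 1560, 1568, 1596, 1568, 1596, 1574, 1561, 20, 1567, 1568, 1644, 1560, 18, 1573,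
    1561, 1562, 1561, 1561, 1563, 1563, 1585, 1560, 1561, 1560, 1563],
  [1680, 30, 18, 1680, 1680, 156, 234, 30, 4, 60, 1680, 528, 16, 1680, 1680, 1681, 66, 1718,
    30, 509, 1695, 1282, 1724, 60, 1680, 1695, 1691, 1680, 1680, 66, 93, 1693, 1691, 1686,
    1680, 1680, 1685, 1685, 1680, 1680, 66, 1680, 0, 173, 2, 1785, 1681, 10, 90, 1717, 1691,
    0, 1689, 225, 219, 1693, 1691, 1686, 2, 38, 1685, 1683, 1684, 1682, 1687, 1711, 1693,
    600, 3, 131, 1710, 1686, 1684, 1693, 1680, 2, 66, 1680, 1685, 1, 1680, 1755, 66, 1680,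
    1685, 0, 1684, 5, 1680, 1680, 1685, 1683, 1680, 1682, 1681, 1680, 1717, 1680, 1695, 1704,
    1680, 0, 1693, 36, 1695, 1680, 1680, 1686, 1693, 168, 3, 1682, 1710, 1686, 1685, 1683,
    1680, 1682, 1681, 1680],
  [1800, 137, 21, 1802, 1801, 1800, 1916, 1802, 1835, 34, 1800, 1916, 1836, 1802, 1800, 11,
    1800, 1801, 34, 1862, 8, 1862, 1800, 1801, 193, 1808, 1820, 1808, 1820, 66, 1807, 1802,
    1820, 4, 1808, 1807, 1, 1800, 1814, 1807, 1814, 1800, 0, 1818, 2, 1890, 1808, 1801, 1855,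
    1802, 1, 0, 1808, 1833, 1890, 1802, 1830, 10, 1800, 1890, 1818, 1812, 1800, 1868, 1800,
    1818, 1802, 1812, 1837, 1812, 1801, 1812, 1819, 1800, 1838, 2, 1838, 1800, 1802, 1800,
    1800, 1813, 1800, 1800, 1800, 1866, 1819, 1813, 1819, 1800, 1800, 1812, 1806, 1866, 1806,
    1800, 3, 1833, 1808, 1838, 1808, 1801, 10, 1884, 1819, 1884, 1800, 1801, 1813, 1813,
    1802, 1813, 1836, 1801, 1807, 1868, 1800, 1813, 1800, 1807],
  [1920, 640, 1920, 634, 640, 634, 1920, 632, 1920, 632, 632, 632, 1920, 632, 1920, 632,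
    632, 632, 632, 632, 632, 632, 632, 632, 70, 0, 0, 0, 0, 0, 0, 0, 0, 1920, 0, 1920, 0, 0,
    1, 4, 0, 1920, 0, 0, 0, 1920, 0, 1920, 1, 0, 1, 0, 0, 0, 46, 0, 46, 4, 0, 10, 1, 0, 1,
    1920, 0, 1920, 0, 0, 0, 6, 0, 1920, 3, 2, 3, 2, 2, 2, 44, 2, 44, 5, 2, 5, 3, 2, 3, 1920,
    2, 1920, 2, 2, 2, 1920, 2, 1920, 1920, 1920, 3, 1920, 1920, 1920, 9, 17, 9, 158, 8, 18,
    1920, 5, 1920, 18, 1920, 18, 1920, 1920, 1920, 18, 1920, 18],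
  [2040, 33, 153, 2042, 2041, 1528, 2040, 30, 2052, 34, 2040, 12, 2046, 2040, 2040, 2041,
    2071, 2070, 34, 12, 2061, 12, 2071, 2070, 66, 2055, 2048, 2048, 2048, 66, 2054, 2055,
    2048, 2046, 2050, 2040, 1, 2056, 2054, 2040, 2074, 2052, 2062, 6, 2, 2043, 2060, 2070,
    2044, 2053, 1, 2072, 2063, 43, 36, 2053, 22, 10, 2047, 36, 2042, 2043, 2040, 2040, 2058,
    2071, 2053, 2043, 2059, 2040, 2070, 2052, 2040, 2059, 2050, 2, 2050, 2060, 20, 2053,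
    2040, 2083, 2047, 2041, 2040, 2059, 2040, 2083, 2041, 2040, 2058, 2043, 2047, 2040, 2041,
    2040, 2077, 2040, 2055, 2050, 2054, 2048, 20, 36, 2080, 2040, 2040, 18, 2053, 2040, 2077,
    2040, 2046, 2052, 2042, 2052, 2040, 2046, 2040, 2040],
  [2160, 2174, 138, 2160, 2160, 731, 720, 30, 2163, 2160, 66, 731, 2161, 30, 2161, 2174, 66,
    2160, 2160, 720, 2161, 2160, 2160, 60, 2160, 2174, 60, 2160, 2160, 600, 619, 2172, 2187,
    2160, 2166, 600, 6, 1, 2185, 4, 8, 2161, 2162, 600, 2160, 2160, 2160, 60, 643, 2196, 4,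
    2170, 1, 600, 619, 2172, 2191, 4, 2166, 600, 2164, 2172, 2165, 5, 2166, 2190, 2164, 600,
    2165, 600, 2191, 2167, 2161, 2196, 2161, 2174, 1, 2160, 2187, 2172, 2160, 2174, 2166,
    2160, 2164, 2172, 2165, 5, 2166, 2190, 2164, 2162, 2165, 2160, 2160, 2161, 2172, 600, 4,
    2160, 2160, 60, 0, 600, 2240, 2160, 2160, 60, 1, 600, 3, 600, 2160, 2160, 2164, 2162,
    2165, 2160, 2160, 2161],
  [2280, 2280, 21, 200, 178, 800, 2280, 2280, 21, 2280, 2281, 520, 18, 2286, 176, 10, 632,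
    160, 2280, 518, 9, 2285, 200, 2284, 2328, 2296, 2288, 2288, 2290, 2290, 2328, 2296, 2288,
    2280, 2280, 2280, 1, 1, 4, 2282, 2282, 1, 0, 0, 2284, 2284, 0, 2284, 2304, 2296, 1, 0, 0,
    0, 2304, 2296, 10, 2288, 2290, 2290, 2282, 2282, 2282, 2280, 6, 2282, 2284, 2284, 2280,
    2280, 2284, 7, 2280, 2280, 3, 2296, 2290, 0, 9, 2296, 2280, 2280, 2290, 2290, 2280, 2280,
    2280, 2280, 2284, 2280, 0, 2284, 2290, 2280, 2284, 2284, 2280, 2280, 2296, 2296, 1, 2288,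
    2296, 2296, 2280, 2280, 2288, 2288, 2280, 2280, 2280, 2280, 2280, 2282, 2282, 1, 2280,
    2288, 2282, 2282],
  [2400, 2400, 632, 2401, 2405, 2400, 800, 632, 2407, 632, 2406, 800, 2403, 2400, 634, 634,
    632, 632, 632, 800, 632, 800, 632, 632, 0, 2408, 0, 0, 0, 2414, 2408, 2400, 2400, 2401,
    2400, 2400, 1, 2407, 2429, 2407, 2424, 2424, 2404, 2400, 2405, 2405, 2401, 2401, 2402,
    2400, 1, 2401, 2408, 2400, 2402, 2402, 2401, 10, 2400, 2445, 2418, 2418, 2400, 2439,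
    2407, 2418, 2412, 2412, 2406, 8, 2425, 0, 2400, 2400, 2416, 2408, 2414, 2400, 2402, 2400,
    2400, 2457, 2400, 2400, 2400, 2413, 2419, 16, 2419, 2400, 2406, 2412, 2406, 2406, 2406,
    2406, 2401, 2400, 2408, 2408, 2420, 2401, 10, 2401, 2401, 30, 2401, 2401, 2401, 5, 5, 30,
    2413, 2401, 2407, 10, 2401, 2401, 2407, 2407],
  [2520, 2520, 153, 47, 39, 39, 2520, 2520, 2548, 2528, 2520, 2546, 2548, 2520, 2522, 2523,
    2522, 40, 2520, 2620, 2539, 132, 40, 2524, 66, 2536, 2528, 2528, 2530, 2530, 2566, 2536,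
    2528, 2520, 2520, 2520, 1, 1, 2562, 2522, 2522, 1, 0, 0, 2524, 2524, 0, 2524, 2542, 2536,
    1, 0, 0, 0, 36, 2536, 2549, 2528, 2530, 39, 2522, 2522, 2520, 2520, 6, 2522, 2524, 2524,
    2520, 2520, 2524, 7, 2520, 2520, 2542, 2536, 2530, 0, 2537, 2536, 2520, 2520, 2530, 16,
    2520, 2520, 2520, 2520, 2524, 2520, 0, 2524, 2530, 2520, 2524, 2524, 2520, 2520, 2536,
    2536, 1, 2528, 2536, 36, 2520, 2520, 16, 2528, 2520, 2520, 2520, 2520, 2520, 2522, 2522,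
    1, 2520, 2528, 2522, 2522],
  [2640, 2640, 2640, 2642, 2641, 610, 2640, 2640, 2646, 2644, 2640, 2645, 2642, 2642, 18,
    2648, 2642, 40, 2640, 2661, 2647, 170, 40, 2644, 190, 2649, 2649, 2655, 2651, 0, 2649,
    2649, 2673, 2640, 2641, 2640, 2649, 2681, 2673, 2642, 2641, 2642, 2649, 0, 2644, 2644,
    2644, 2644, 2643, 2643, 2643, 2681, 2643, 0, 226, 2643, 47, 2640, 172, 136, 2643, 2643,
    2671, 2642, 2653, 2642, 2645, 2645, 2670, 2640, 2645, 2648, 2641, 2641, 2647, 2649, 2641,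
    2655, 44, 128, 220, 31, 608, 2721, 2641, 2641, 30, 2641, 2644, 2641, 2676, 2644, 2641,
    2641, 2644, 2647, 2640, 2640, 2646, 2649, 2642, 2649, 2640, 128, 33, 2640, 2642, 2640,
    2640, 2640, 2677, 2640, 2640, 2646, 2643, 2642, 2642, 2642, 2642, 18],
  [2760, 2760, 2760, 2762, 2761, 0, 2760, 2760, 2766, 2760, 2760, 2765, 2762, 2762, 123,
    2781, 2762, 40, 2760, 2762, 2774, 2774, 40, 2764, 2760, 2760, 2760, 2762, 2761, 0, 2784,
    2784, 2760, 2760, 2760, 2760, 2760, 2761, 2863, 2779, 2772, 2762, 2760, 2762, 2760, 2781,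
    2762, 2778, 2766, 2766, 2766, 2766, 2766, 2767, 92, 90, 2840, 2760, 14, 2761, 2766, 2766,
    9, 2766, 2810, 2762, 2767, 2767, 2766, 2778, 2767, 2779, 2772, 2761, 2860, 2760, 2762,
    2764, 2814, 66, 175, 2871, 2772, 2772, 9, 2790, 2772, 2772, 2773, 2772, 2773, 2773, 2772,
    2792, 2773, 17, 2760, 2760, 2760, 2765, 2762, 2764, 2760, 2765, 2846, 31, 2778, 2778,
    2766, 2767, 2778, 2778, 2778, 2780, 2762, 2768, 2797, 2779, 23, 18]]

/-- Every state of the (relabelled) target class is reached from the source class. -/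
def checkStep (step : PState → PState → Bool) (T : List PState) (code : ℕ) : Bool :=
  (classTable.getD (code / 120) []).all fun u =>
    T.any fun t =>
      step t (u.map (permOf (permTable.getD (code % 120) []))) ||
      step t (u.map (permOf (permTable.getD (code % 120) []))).swap

def codeOK (code : ℕ) : Bool := Nat.blt (code / 120) 24

def checkClass (T : List PState) (rE rC : List ℕ) : Bool :=
  !(T.isEmpty) && T.all wfB &&
  (crossTable.zip rE).all (fun e => codeOK e.2 && checkStep (stepE e.1.1 e.1.2) T e.2) &&
  (permTable.zip rC).all (fun e => codeOK e.2 && checkStep (stepC (permOf e.1)) T e.2)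

def checkIdx (k : ℕ) : Bool :=
  Nat.beq (crossRows.getD k []).length 10 && Nat.beq (cycleRows.getD k []).length 120 &&
  checkClass (classTable.getD k []) (crossRows.getD k []) (cycleRows.getD k [])

theorem checkAll : ∀ k < 24, checkIdx k = true := by
  decide +kernel

def nodupB : List (Fin 5) → Bool
  | [] => true
  | a :: l => !(fmem a l) && nodupB l

theorem permTable_nodup : ∀ l ∈ permTable, nodupB l = true ∧ l.length = 5 := by
  decide +kernel

theorem permTable_length : permTable.length = 120 := by decide +kernel

theorem permTable_complete : ∀ a0 a1 : Fin 5, a0 ≠ a1 → ∀ a2, a0 ≠ a2 → a1 ≠ a2 →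
    ∀ a3, a0 ≠ a3 → a1 ≠ a3 → a2 ≠ a3 → ∀ a4, a0 ≠ a4 → a1 ≠ a4 → a2 ≠ a4 → a3 ≠ a4 →
    [a0, a1, a2, a3, a4] ∈ permTable := by
  decide +kernel

/-! ### Strand systems -/

def VS (s : Fin 5 → List V) : Set V := {v | ∃ i, v ∈ s i}

def Nxt (s : Fin 5 → List V) (v w : V) : Prop := ∃ i p q, s i = p ++ v :: w :: q

def Extra (G : SimpleGraph V) (s : Fin 5 → List V) (v w : V) : Prop :=
  w ∈ VS s ∧ G.Adj v w ∧ ¬ Nxt s v w ∧ ¬ Nxt s w v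

structure Valid (G : SimpleGraph V) (Y : Set V) (s : Fin 5 → List V) : Prop where
  chain : ∀ i, (s i).IsChain G.Adj
  nodup : ∀ i, (s i).Nodup
  disj : ∀ i j v, v ∈ s i → v ∈ s j → i = j
  last : ∀ i, ∀ y ∈ (s i).getLast?, y ∈ Y
  uniq : ∀ v w₁ w₂, v ∈ VS s → Extra G s v w₁ → Extra G s v w₂ → w₁ = w₂

theorem split_unique : ∀ (p p' : List V) (v : V) (q q' : List V), (p ++ v :: q).Nodup →
    p ++ v :: q = p' ++ v :: q' → p = p' ∧ q = q'
  | [], [], v, q, q', _, h => by simpa using h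
  | [], b :: p', v, q, q', hn, h => by
      simp only [List.nil_append, List.cons_append, List.cons.injEq] at h hn
      obtain ⟨rfl, rfl⟩ := h
      simp at hn
  | a :: p, [], v, q, q', hn, h => by
      simp only [List.nil_append, List.cons_append, List.cons.injEq] at h hn
      obtain ⟨rfl, rfl⟩ := h
      simp at hn
  | a :: p, b :: p', v, q, q', hn, h => by
      simp only [List.cons_append, List.cons.injEq, List.nodup_cons] at h hn
      obtain ⟨rfl, h⟩ := h
      obtain ⟨h1, h2⟩ := split_unique p p' v q q' hn.2 h
      exact ⟨by rw [h1], h2⟩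

theorem Nxt.mem_left {s : Fin 5 → List V} {v w : V} (h : Nxt s v w) : v ∈ VS s := by
  obtain ⟨i, p, q, h⟩ := h
  exact ⟨i, by simp [h]⟩

theorem Nxt.mem_right {s : Fin 5 → List V} {v w : V} (h : Nxt s v w) : w ∈ VS s := by
  obtain ⟨i, p, q, h⟩ := h
  exact ⟨i, by simp [h]⟩

namespace Valid

variable {G : SimpleGraph V} {Y : Set V} {s : Fin 5 → List V}

theorem nxt_func (hs : Valid G Y s) {v w₁ w₂ : V} (h₁ : Nxt s v w₁) (h₂ : Nxt s v w₂) :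
    w₁ = w₂ := by
  obtain ⟨i, p, q, h⟩ := h₁
  obtain ⟨j, p', q', h'⟩ := h₂
  have hij : i = j := hs.disj i j v (by simp [h]) (by simp [h'])
  subst hij
  have := (split_unique p p' v _ _ (h ▸ hs.nodup i) (h.symm.trans h')).2
  simpa using congrArg List.head? this

theorem nxt_inj (hs : Valid G Y s) {v w₁ w₂ : V} (h₁ : Nxt s w₁ v) (h₂ : Nxt s w₂ v) :
    w₁ = w₂ := by
  obtain ⟨i, p, q, h⟩ := h₁
  obtain ⟨j, p', q', h'⟩ := h₂
  have hij : i = j := hs.disj i j v (by simp [h]) (by simp [h'])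
  subst hij
  have e1 : s i = (p ++ [w₁]) ++ v :: q := by simp [h]
  have e2 : s i = (p' ++ [w₂]) ++ v :: q' := by simp [h']
  have := (split_unique _ _ v _ _ (e1 ▸ hs.nodup i) (e1.symm.trans e2)).1
  simpa using congrArg List.getLast? this

/-- The head of a strand has no predecessor. -/
theorem nxt_head (hs : Valid G Y s) {i : Fin 5} {x v : V} {t : List V} (h : s i = x :: t) :
    ¬ Nxt s v x := by
  rintro ⟨j, p, q, h'⟩
  have hij : i = j := hs.disj i j x (by simp [h]) (by simp [h'])
  subst hij
  have e2 : s i = (p ++ [v]) ++ x :: q := by simp [h']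
  have := (split_unique [] _ x t _ (by simpa [h] using hs.nodup i)
    (h.symm.trans e2 : [] ++ x :: t = _)).1
  simp at this

theorem nxt_of_head (hs : Valid G Y s) {i : Fin 5} {x v : V} {t : List V} (h : s i = x :: t)
    (hn : Nxt s x v) : t.head? = some v := by
  obtain ⟨j, p, q, h'⟩ := hn
  have hij : i = j := hs.disj i j x (by simp [h]) (by simp [h'])
  subst hij
  have := (split_unique [] _ x t _ (by simpa [h] using hs.nodup i)
    (h.symm.trans h' : [] ++ x :: t = _)).2
  simp [this]

theorem nxt_of_suffix (hs : Valid G Y s) {i : Fin 5} {v w : V} {p t : List V}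
    (h : s i = p ++ t) (hv : v ∈ t) (hn : Nxt s v w) : ∃ p' q', t = p' ++ v :: w :: q' := by
  obtain ⟨j, p', q', h'⟩ := hn
  have hij : i = j := hs.disj i j v (by simp [h, hv]) (by simp [h'])
  subst hij
  obtain ⟨a, b, rfl⟩ := List.append_of_mem hv
  have e1 : s i = (p ++ a) ++ v :: b := by simp [h]
  have := (split_unique _ _ v _ _ (e1 ▸ hs.nodup i) (e1.symm.trans h')).2
  exact ⟨a, q', by rw [this]⟩

theorem not_both (hs : Valid G Y s) {pre s' : Fin 5 → List V} (h : ∀ i, s i = pre i ++ s' i)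
    {c : Fin 5} {v : V} (hv : v ∈ pre c) : v ∉ VS s' := by
  rintro ⟨j, hj⟩
  have hij : c = j := hs.disj c j v (by simp [h, hv]) (by simp [h, hj])
  subst hij
  have := hs.nodup c
  rw [h c, List.nodup_append] at this
  exact this.2.2 v hv v hj rfl

theorem peel (hs : Valid G Y s) {pre s' : Fin 5 → List V} (h : ∀ i, s i = pre i ++ s' i) :
    Valid G Y s' := by
  have hsub : ∀ {v}, v ∈ VS s' → v ∈ VS s := fun ⟨i, hi⟩ => ⟨i, by simp [h, hi]⟩
  have key : ∀ {v w}, v ∈ VS s' → Nxt s v w → Nxt s' v w := by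
    rintro v w ⟨i, hi⟩ hn
    obtain ⟨p', q', hh⟩ := hs.nxt_of_suffix (h i) hi hn
    exact ⟨i, p', q', hh⟩
  have ke : ∀ {v w}, v ∈ VS s' → Extra G s' v w → Extra G s v w := fun hv he =>
    ⟨hsub he.1, he.2.1, fun hn => he.2.2.1 (key hv hn), fun hn => he.2.2.2 (key he.1 hn)⟩
  refine ⟨fun i => ?_, fun i => ?_, fun i j v hi hj => ?_, fun i y hy => ?_, ?_⟩
  · have := hs.chain i
    rw [h i, List.isChain_append] at this
    exact this.2.1
  · have := hs.nodup i
    rw [h i, List.nodup_append] at this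
    exact this.2.1
  · exact hs.disj i j v (by simp [h, hi]) (by simp [h, hj])
  · apply hs.last i
    rw [h i]
    cases hh : s' i with
    | nil => simp [hh] at hy
    | cons a l => rw [hh] at hy; rw [List.getLast?_append_of_ne_nil _ (by simp)]; exact hy
  · intro v w₁ w₂ hv h1 h2
    exact hs.uniq v w₁ w₂ (hsub hv) (ke hv h1) (ke hv h2)

theorem perm (hs : Valid G Y s) {f : Fin 5 → Fin 5} (hf : Function.Injective f) :
    Valid G Y (fun i => s (f i)) := by
  have hsur : Function.Surjective f := Finite.surjective_of_injective hf
  have hsub : ∀ {v}, v ∈ VS (fun i => s (f i)) → v ∈ VS s := fun ⟨i, hi⟩ => ⟨f i, hi⟩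
  have key : ∀ {v w}, Nxt s v w → Nxt (fun i => s (f i)) v w := by
    rintro v w ⟨i, p, q, hn⟩
    obtain ⟨j, rfl⟩ := hsur i
    exact ⟨j, p, q, hn⟩
  have ke : ∀ {v w}, Extra G (fun i => s (f i)) v w → Extra G s v w := fun he =>
    ⟨hsub he.1, he.2.1, fun hn => he.2.2.1 (key hn), fun hn => he.2.2.2 (key hn)⟩
  exact ⟨fun i => hs.chain _, fun i => hs.nodup _, fun i j v hi hj => hf (hs.disj _ _ v hi hj),
    fun i => hs.last _, fun v w₁ w₂ hv h1 h2 => hs.uniq v w₁ w₂ (hsub hv) (ke h1) (ke h2)⟩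

end Valid

/-! ### Pairs of paths -/

def GoodPath (G : SimpleGraph V) (Y : Set V) (s : Fin 5 → List V) (a : Fin 5) (α : List V) :
    Prop :=
  α.IsChain G.Adj ∧ (∀ v ∈ α, v ∈ VS s) ∧ α.head? = (s a).head? ∧ ∀ y ∈ α.getLast?, y ∈ Y

def NonAdjL (G : SimpleGraph V) (α β : List V) : Prop :=
  ∀ u ∈ α, ∀ v ∈ β, u ≠ v ∧ ¬ G.Adj u v

theorem NonAdjL.symm {G : SimpleGraph V} {α β : List V} (h : NonAdjL G α β) : NonAdjL G β α :=
  fun u hu v hv => ⟨fun e => (h v hv u hu).1 e.symm, fun e => (h v hv u hu).2 e.symm⟩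

def Realz (G : SimpleGraph V) (Y : Set V) (s : Fin 5 → List V) (t : PState) : Prop :=
  ∃ α β, GoodPath G Y s t.a α ∧ GoodPath G Y s t.b β ∧ NonAdjL G α β ∧
    (∀ c ∈ t.la, ∀ x ∈ (s c).head?, x ∉ β) ∧ (∀ c ∈ t.lb, ∀ x ∈ (s c).head?, x ∉ α)

theorem Realz.swap {G : SimpleGraph V} {Y : Set V} {s : Fin 5 → List V} {t : PState}
    (h : Realz G Y s t.swap) : Realz G Y s t := by
  obtain ⟨α, β, h1, h2, h3, h4, h5⟩ := h
  exact ⟨β, α, h2, h1, h3.symm, h5, h4⟩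

theorem Realz.map {G : SimpleGraph V} {Y : Set V} {s : Fin 5 → List V} {t : PState}
    {f : Fin 5 → Fin 5} (h : Realz G Y (fun i => s (f i)) t) : Realz G Y s (t.map f) := by
  obtain ⟨α, β, h1, h2, h3, h4, h5⟩ := h
  have hsub : ∀ {v}, v ∈ VS (fun i => s (f i)) → v ∈ VS s := fun ⟨i, hi⟩ => ⟨f i, hi⟩
  refine ⟨α, β, ⟨h1.1, fun v hv => hsub (h1.2.1 v hv), h1.2.2⟩,
    ⟨h2.1, fun v hv => hsub (h2.2.1 v hv), h2.2.2⟩, h3, ?_, ?_⟩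
  · intro c hc
    obtain ⟨d, hd, rfl⟩ := List.mem_map.1 hc
    exact h4 d hd
  · intro c hc
    obtain ⟨d, hd, rfl⟩ := List.mem_map.1 hc
    exact h5 d hd

/-- Moving one path across the removed part `pre` of the strands. -/
structure Move (G : SimpleGraph V) (s pre s' : Fin 5 → List V) (a a' : Fin 5) (p : List V)
    (lo ln : List (Fin 5)) : Prop where
  cases : (p = [] ∧ a' = a ∧ pre a = []) ∨
    (p ≠ [] ∧ p.IsChain G.Adj ∧ p.head? = (s a).head? ∧ p.getLast? = (pre a').getLast?)
  mem : ∀ v ∈ p, ∃ c, v ∈ pre c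
  nbr : ∀ v ∈ p, ∀ w ∈ VS s', G.Adj v w → ∃ c, (s' c).head? = some w ∧ (c = a' ∨ c ∈ ln)
  lab : ∀ c ∈ lo, ∀ x ∈ (s c).head?, x ∉ p

section

variable {G : SimpleGraph V} {Y : Set V} {s pre s' : Fin 5 → List V}

theorem Move.goodPath (hs : Valid G Y s) (h : ∀ i, s i = pre i ++ s' i)
    {a a' : Fin 5} {p α : List V} {lo ln : List (Fin 5)} (hm : Move G s pre s' a a' p lo ln)
    (hα : GoodPath G Y s' a' α) : GoodPath G Y s a (p ++ α) := by
  have hsub : ∀ {v}, v ∈ VS s' → v ∈ VS s := fun ⟨i, hi⟩ => ⟨i, by simp [h, hi]⟩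
  obtain ⟨c1, c2, c3, c4⟩ := hα
  have hmem : ∀ v ∈ p ++ α, v ∈ VS s := by
    intro v hv
    rcases List.mem_append.1 hv with hv | hv
    · obtain ⟨c, hc⟩ := hm.mem v hv
      exact ⟨c, by simp [h, hc]⟩
    · exact hsub (c2 v hv)
  rcases hm.cases with ⟨rfl, rfl, h3⟩ | ⟨h1, h2, h3, h4⟩
  · refine ⟨by simpa using c1, hmem, ?_, by simpa using c4⟩
    simpa [h a', h3] using c3
  · refine ⟨?_, hmem, ?_, ?_⟩
    · rw [List.isChain_append]
      refine ⟨h2, c1, fun x hx y hy => ?_⟩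
      rw [h4] at hx
      rw [c3] at hy
      have := hs.chain a'
      rw [h a', List.isChain_append] at this
      exact this.2.2 x hx y hy
    · rw [List.head?_append_of_ne_nil _ h1, h3]
    · intro y hy
      cases α with
      | nil =>
        have hn : s' a' = [] := by simpa using c3.symm
        apply hs.last a'
        rw [h a', hn, List.append_nil, ← h4]
        simpa using hy
      | cons b l =>
        rw [List.getLast?_append_of_ne_nil _ (by simp)] at hy
        exact c4 y hy

theorem Move.nonAdj (hs : Valid G Y s) (h : ∀ i, s i = pre i ++ s' i)
    {a a' : Fin 5} {p α β : List V} {lo ln : List (Fin 5)} (hm : Move G s pre s' a a' p lo ln)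
    (hα : GoodPath G Y s' a' α) (hβ : ∀ v ∈ β, v ∈ VS s') (hn : NonAdjL G α β)
    (hl : ∀ c ∈ ln, ∀ x ∈ (s' c).head?, x ∉ β) : NonAdjL G p β := by
  intro u hu v hv
  refine ⟨?_, fun hadj => ?_⟩
  · rintro rfl
    obtain ⟨c, hc⟩ := hm.mem u hu
    exact hs.not_both h hc (hβ u hv)
  · obtain ⟨c, hc, rfl | hcl⟩ := hm.nbr u hu v (hβ v hv) hadj
    · have : v ∈ α := by
        apply List.mem_of_mem_head?
        rw [hα.2.2.1, hc]; rfl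
      exact (hn v this v hv).1 rfl
    · exact hl c hcl v (by rw [hc]; rfl) hv

theorem Realz.move (hs : Valid G Y s) (h : ∀ i, s i = pre i ++ s' i) {t u : PState}
    {p q : List V} (hp : Move G s pre s' t.a u.a p t.lb u.la)
    (hq : Move G s pre s' t.b u.b q t.la u.lb) (hpq : NonAdjL G p q)
    (hla : ∀ c ∈ t.la, pre c ≠ [] ∨ c ∈ u.la) (hlb : ∀ c ∈ t.lb, pre c ≠ [] ∨ c ∈ u.lb)
    (hu : Realz G Y s' u) : Realz G Y s t := by
  obtain ⟨α, β, h1, h2, h3, h4, h5⟩ := hu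
  have n1 := hp.nonAdj hs h h1 h2.2.1 h3 h4
  have n2 := hq.nonAdj hs h h2 h1.2.1 h3.symm h5
  have aux : ∀ (c : Fin 5) (x : V) (β : List V) (l : List (Fin 5)), (∀ v ∈ β, v ∈ VS s') →
      (pre c ≠ [] ∨ c ∈ l) → x ∈ (s c).head? → (∀ c ∈ l, ∀ x ∈ (s' c).head?, x ∉ β) →
      x ∉ β := by
    intro c x β l hβ hc hx hl hxb
    by_cases hpc : pre c = []
    · refine hl c (hc.resolve_left (fun hh => hh hpc)) x ?_ hxb
      simpa [h c, hpc] using hx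
    · rw [h c, List.head?_append_of_ne_nil _ hpc] at hx
      exact hs.not_both h (List.mem_of_mem_head? hx) (hβ x hxb)
  refine ⟨p ++ α, q ++ β, hp.goodPath hs h h1, hq.goodPath hs h h2, ?_, ?_, ?_⟩
  · intro u hu v hv
    rcases List.mem_append.1 hu with hu | hu <;> rcases List.mem_append.1 hv with hv | hv
    · exact hpq u hu v hv
    · exact n1 u hu v hv
    · exact n2.symm u hu v hv
    · exact h3 u hu v hv
  · intro c hc x hx hmem
    rcases List.mem_append.1 hmem with hv | hv
    · exact hq.lab c hc x hx hv
    · exact aux c x β _ h2.2.1 (hla c hc) hx h4 hv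
  · intro c hc x hx hmem
    rcases List.mem_append.1 hmem with hv | hv
    · exact hp.lab c hc x hx hv
    · exact aux c x α _ h1.2.1 (hlb c hc) hx h5 hv

end

/-! ### Soundness of the transitions -/

theorem feq_iff {a b : Fin 5} : feq a b = true ↔ a = b :=
  ⟨fun h => Fin.ext (Nat.eq_of_beq_eq_true h), fun h => by subst h; exact Nat.beq_refl _⟩

theorem fmem_iff {a : Fin 5} {l : List (Fin 5)} : fmem a l = true ↔ a ∈ l := by
  unfold fmem
  rw [List.any_eq_true]
  constructor
  · rintro ⟨x, hx, h⟩
    rw [feq_iff] at h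
    exact h ▸ hx
  · intro h
    exact ⟨a, h, feq_iff.2 rfl⟩

def preOf (s : Fin 5 → List V) (n : Fin 5 → ℕ) (i : Fin 5) : List V := (s i).take (n i)

def sufOf (s : Fin 5 → List V) (n : Fin 5 → ℕ) (i : Fin 5) : List V := (s i).drop (n i)

theorem pre_suf (s : Fin 5 → List V) (n : Fin 5 → ℕ) (i : Fin 5) :
    s i = preOf s n i ++ sufOf s n i := (List.take_append_drop _ _).symm

section

variable {G : SimpleGraph V} {Y : Set V} {s : Fin 5 → List V}

theorem sub_suf {n : Fin 5 → ℕ} {v : V} : v ∈ VS (sufOf s n) → v ∈ VS s :=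
  fun ⟨i, hi⟩ => ⟨i, List.mem_of_mem_drop hi⟩

theorem head_nbr (hs : Valid G Y s) {i : Fin 5} {x w : V} {t : List V} (h : s i = x :: t)
    (hw : w ∈ VS s) (hadj : G.Adj x w) : t.head? = some w ∨ Extra G s x w := by
  by_cases h1 : Nxt s x w
  · exact Or.inl (hs.nxt_of_head h h1)
  · exact Or.inr ⟨hw, hadj, h1, hs.nxt_head h⟩

theorem move_stay (a : Fin 5) (n : Fin 5 → ℕ) (lo ln : List (Fin 5)) (ha : n a = 0) :
    Move G s (preOf s n) (sufOf s n) a a [] lo ln :=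
  ⟨Or.inl ⟨rfl, rfl, by simp [preOf, ha]⟩, by simp, by simp, by simp⟩

theorem move_one (hs : Valid G Y s) {n : Fin 5 → ℕ} {i : Fin 5} {x : V} {t : List V}
    (hi : s i = x :: t) (hn : n i = 1)
    (hx : ∀ w ∈ VS (sufOf s n), G.Adj x w → t.head? = some w)
    (lo ln : List (Fin 5)) (hlo : i ∉ lo) :
    Move G s (preOf s n) (sufOf s n) i i [x] lo ln := by
  refine ⟨Or.inr ⟨by simp, by simp, by simp [hi], by simp [preOf, hi, hn]⟩, ?_, ?_, ?_⟩
  · intro v hv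
    exact ⟨i, by simpa [preOf, hi, hn] using hv⟩
  · intro v hv w hw hadj
    obtain rfl : v = x := by simpa using hv
    exact ⟨i, by simpa [sufOf, hi, hn] using hx w hw hadj, Or.inl rfl⟩
  · intro c hc y hy hyx
    obtain rfl : y = x := by simpa using hyx
    have : c = i := hs.disj c i y (List.mem_of_mem_head? hy) (by simp [hi])
    exact hlo (this ▸ hc)

theorem realz_D (hs : Valid G Y s) {i : Fin 5} {x : V} {t : List V} (hi : s i = x :: t)
    (hx : ∀ w, ¬ Extra G s x w) {u : PState} (hwf : wfB u = true)
    (hu : Realz G Y (sufOf s (fun c => if c = i then 1 else 0)) u) : Realz G Y s u := by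
  simp only [wfB, Bool.and_eq_true, Bool.not_eq_true', ← Bool.not_eq_true, feq_iff,
    fmem_iff] at hwf
  obtain ⟨⟨hab, ha⟩, hb⟩ := hwf
  set n : Fin 5 → ℕ := fun c => if c = i then 1 else 0 with hn
  have hni : n i = 1 := by simp [hn]
  have hnc : ∀ c, c ≠ i → n c = 0 := fun c hc => by simp [hn, hc]
  have hxn : ∀ w ∈ VS (sufOf s n), G.Adj x w → t.head? = some w := fun w hw hadj =>
    (head_nbr hs hi (sub_suf hw) hadj).resolve_right (hx w)
  have hm : ∀ a lo ln, a ∉ lo →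
      ∃ p, Move G s (preOf s n) (sufOf s n) a a p lo ln ∧ (a ≠ i → p = []) := by
    intro a lo ln hlo
    by_cases hai : a = i
    · subst hai
      exact ⟨[x], move_one hs hi hni hxn lo ln hlo, fun h => (h rfl).elim⟩
    · exact ⟨[], move_stay a n lo ln (hnc a hai), fun _ => rfl⟩
  obtain ⟨p, hp, hp'⟩ := hm u.a u.lb u.la ha
  obtain ⟨q, hq, hq'⟩ := hm u.b u.la u.lb hb
  refine Realz.move hs (pre_suf s n) hp hq ?_ (fun c hc => Or.inr hc) (fun c hc => Or.inr hc) hu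
  by_cases hai : u.a = i
  · rw [hq' (fun h => hab (hai.trans h.symm))]
    intro u _ v hv
    simp at hv
  · rw [hp' hai]
    intro u hu
    simp at hu

theorem move_E1 (hs : Valid G Y s) {n : Fin 5 → ℕ} {i j : Fin 5} {x y : V} {t r : List V}
    (hij : i ≠ j)
    (hi : s i = x :: t) (hj : s j = y :: r) (hni : n i = 1) (hnj : n j = 1) (hadj : G.Adj x y)
    (a' : Fin 5) (lo ln : List (Fin 5)) (hlo : i ∉ lo)
    (hm : a' = i ∨ (a' = j ∧ j ∉ lo ∧ i ∈ ln)) :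
    ∃ p, Move G s (preOf s n) (sufOf s n) i a' p lo ln := by
  have hxy : Extra G s x y := by
    refine ⟨⟨j, by simp [hj]⟩, hadj, hs.nxt_head hj, hs.nxt_head hi⟩
  have hyx : Extra G s y x := ⟨⟨i, by simp [hi]⟩, hadj.symm, hxy.2.2.2, hxy.2.2.1⟩
  have hxp : x ∉ VS (sufOf s n) :=
    hs.not_both (pre_suf s n) (c := i) (by simp [preOf, hi, hni])
  have hyp : y ∉ VS (sufOf s n) :=
    hs.not_both (pre_suf s n) (c := j) (by simp [preOf, hj, hnj])
  have hxn : ∀ w ∈ VS (sufOf s n), G.Adj x w → t.head? = some w := by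
    intro w hw hadj
    refine (head_nbr hs hi (sub_suf hw) hadj).resolve_right (fun he => hyp ?_)
    rw [hs.uniq x y w ⟨i, by simp [hi]⟩ hxy he]
    exact hw
  have hyn : ∀ w ∈ VS (sufOf s n), G.Adj y w → r.head? = some w := by
    intro w hw hadj
    refine (head_nbr hs hj (sub_suf hw) hadj).resolve_right (fun he => hxp ?_)
    rw [hs.uniq y x w ⟨j, by simp [hj]⟩ hyx he]
    exact hw
  rcases hm with rfl | ⟨rfl, hjl, hil⟩
  · exact ⟨[x], move_one hs hi hni hxn lo ln hlo⟩
  · refine ⟨[x, y], Or.inr ⟨by simp, by simpa using hadj, by simp [hi],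
      by simp [preOf, hj, hnj]⟩, ?_, ?_, ?_⟩
    · intro v hv
      rcases (by simpa using hv : v = x ∨ v = y) with rfl | rfl
      · exact ⟨i, by simp [preOf, hi, hni]⟩
      · exact ⟨a', by simp [preOf, hj, hnj]⟩
    · intro v hv w hw hvw
      rcases (by simpa using hv : v = x ∨ v = y) with rfl | rfl
      · exact ⟨i, by simpa [sufOf, hi, hni] using hxn w hw hvw, Or.inr hil⟩
      · exact ⟨a', by simpa [sufOf, hj, hnj] using hyn w hw hvw, Or.inl rfl⟩
    · intro c hc z hz hzx
      rcases (by simpa using hzx : z = x ∨ z = y) with rfl | rfl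
      · have : c = i := hs.disj c i z (List.mem_of_mem_head? hz) (by simp [hi])
        exact hlo (this ▸ hc)
      · have : c = a' := hs.disj c a' z (List.mem_of_mem_head? hz) (by simp [hj])
        exact hjl (this ▸ hc)

theorem realz_E (hs : Valid G Y s) {i j : Fin 5} {x y : V} {t r : List V}
    (hij : i ≠ j) (hi : s i = x :: t) (hj : s j = y :: r) (hadj : G.Adj x y)
    {u w : PState} (hwf : wfB u = true) (hstep : stepE i j u w = true)
    (hw : Realz G Y (sufOf s (fun c => if c = i ∨ c = j then 1 else 0)) w) : Realz G Y s u := by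
  simp only [wfB, Bool.and_eq_true, Bool.not_eq_true', ← Bool.not_eq_true, feq_iff,
    fmem_iff] at hwf
  obtain ⟨⟨hab, ha⟩, hb⟩ := hwf
  set n : Fin 5 → ℕ := fun c => if c = i ∨ c = j then 1 else 0 with hn
  have hni : n i = 1 := by simp [hn]
  have hnj : n j = 1 := by simp [hn]
  have hnc : ∀ c, c ≠ i → c ≠ j → n c = 0 := fun c hc hc' => by simp [hn, hc, hc']
  have hm : ∀ a a' lo ln, a ∉ lo → moveE i j a a' lo ln = true →
      ∃ p, Move G s (preOf s n) (sufOf s n) a a' p lo ln ∧ (a ≠ i → a ≠ j → p = []) := by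
    intro a a' lo ln hlo hmv
    simp only [moveE, Bool.and_eq_true, Bool.or_eq_true, Bool.not_eq_true',
      ← Bool.not_eq_true, feq_iff, fmem_iff] at hmv
    by_cases hai : a = i
    · subst hai
      obtain ⟨p, hp⟩ := move_E1 hs hij hi hj hni hnj hadj a' lo ln hlo (by
        rcases hmv with h | ⟨⟨⟨_, h⟩ | ⟨h, _⟩, h2⟩, h3⟩
        · exact Or.inl h
        · exact Or.inr ⟨h, h ▸ h2, h3⟩
        · exact (hij h).elim)
      exact ⟨p, hp, fun h => (h rfl).elim⟩
    by_cases haj : a = j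
    · subst haj
      obtain ⟨p, hp⟩ := move_E1 hs hij.symm hj hi hnj hni hadj.symm a' lo ln hlo (by
        rcases hmv with h | ⟨⟨⟨h, _⟩ | ⟨_, h⟩, h2⟩, h3⟩
        · exact Or.inl h
        · exact (hai h).elim
        · exact Or.inr ⟨h, h ▸ h2, h3⟩)
      exact ⟨p, hp, fun _ h => (h rfl).elim⟩
    · have : a' = a := by
        rcases hmv with h | ⟨⟨⟨h, _⟩ | ⟨h, _⟩, h2⟩, h3⟩
        · exact h
        · exact (hai h).elim
        · exact (haj h).elim
      subst this
      exact ⟨[], move_stay a' n lo ln (hnc a' hai haj), fun _ _ => rfl⟩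
  simp only [stepE, Bool.and_eq_true, Bool.or_eq_true, Bool.not_eq_true',
      ← Bool.not_eq_true, feq_iff, fmem_iff, List.all_eq_true] at hstep
  obtain ⟨⟨⟨⟨h1, h2⟩, h3⟩, h4⟩, h5⟩ := hstep
  obtain ⟨p, hp, hp'⟩ := hm _ _ _ _ ha h1
  obtain ⟨q, hq, hq'⟩ := hm _ _ _ _ hb h2
  have hpre : ∀ c, c = i ∨ c = j → preOf s n c ≠ [] := by
    rintro c (rfl | rfl)
    · simp [preOf, hi, hni]
    · simp [preOf, hj, hnj]
  refine Realz.move hs (pre_suf s n) hp hq ?_ (fun c hc => (h4 c hc).imp_left (hpre c))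
    (fun c hc => (h5 c hc).imp_left (hpre c)) hw
  by_cases hai : u.a = i ∨ u.a = j
  · rw [hq' (fun h => h3 ⟨hai, Or.inl h⟩) (fun h => h3 ⟨hai, Or.inr h⟩)]
    intro u _ v hv
    simp at hv
  · rw [hp' (fun h => hai (Or.inl h)) (fun h => hai (Or.inr h))]
    intro u hu
    simp at hu

theorem realz_C (hs : Valid G Y s) {f : Fin 5 → Fin 5} (hf : Function.Injective f)
    {x z : Fin 5 → V} {r : Fin 5 → List V}
    (hsx : ∀ c, f c ≠ c → s c = x c :: z c :: r c)
    (hadj : ∀ c, f c ≠ c → G.Adj (x c) (z (f c)))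
    {u w : PState} (hwf : wfB u = true) (hstep : stepC f u w = true)
    (hw : Realz G Y (sufOf s (fun c => if f c = c then 0 else 2)) w) : Realz G Y s u := by
  simp only [wfB, Bool.and_eq_true, Bool.not_eq_true', ← Bool.not_eq_true, feq_iff,
    fmem_iff] at hwf
  obtain ⟨⟨hab, ha⟩, hb⟩ := hwf
  set n : Fin 5 → ℕ := fun c => if f c = c then 0 else 2 with hn
  have hn0 : ∀ c, f c = c → n c = 0 := fun c h => by simp [hn, h]
  have hn2 : ∀ c, f c ≠ c → n c = 2 := fun c h => by simp [hn, h]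
  have hfm : ∀ c, f c ≠ c → f (f c) ≠ f c := fun c h e => h (hf e)
  have hpre : ∀ c, f c ≠ c → preOf s n c = [x c, z c] := fun c h => by
    simp [preOf, hsx c h, hn2 c h]
  have hsuf : ∀ c, f c ≠ c → sufOf s n c = r c := fun c h => by
    simp [sufOf, hsx c h, hn2 c h]
  have hxm : ∀ c, f c ≠ c → x c ∈ s c := fun c h => by simp [hsx c h]
  have hzm : ∀ c, f c ≠ c → z c ∈ s c := fun c h => by simp [hsx c h]
  have hxx : ∀ c d, f c ≠ c → f d ≠ d → x c = x d → c = d := fun c d hc hd e =>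
    hs.disj c d (x c) (hxm c hc) (e ▸ hxm d hd)
  have hzz : ∀ c d, f c ≠ c → f d ≠ d → z c = z d → c = d := fun c d hc hd e =>
    hs.disj c d (z c) (hzm c hc) (e ▸ hzm d hd)
  have hxz : ∀ c d, f c ≠ c → f d ≠ d → x c ≠ z d := by
    intro c d hc hd e
    have : c = d := hs.disj c d (x c) (hxm c hc) (e ▸ hzm d hd)
    subst this
    have := hs.nodup c
    rw [hsx c hc] at this
    simp [e] at this
  have hxs : ∀ c, f c ≠ c → x c ∉ VS (sufOf s n) := fun c h =>
    hs.not_both (pre_suf s n) (c := c) (by simp [hpre c h])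
  have hzs : ∀ c, f c ≠ c → z c ∉ VS (sufOf s n) := fun c h =>
    hs.not_both (pre_suf s n) (c := c) (by simp [hpre c h])
  have hnxz : ∀ c, f c ≠ c → Nxt s (x c) (z c) := fun c h => ⟨c, [], r c, hsx c h⟩
  -- the extra edges
  have hex : ∀ c, f c ≠ c → Extra G s (x c) (z (f c)) := by
    intro c hc
    refine ⟨⟨f c, hzm _ (hfm c hc)⟩, hadj c hc, fun h => ?_, hs.nxt_head (hsx c hc)⟩
    have := hs.nxt_func h (hnxz c hc)
    exact hc (hzz _ _ (hfm c hc) hc this)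
  have hez : ∀ c, f c ≠ c → Extra G s (z (f c)) (x c) := fun c hc =>
    ⟨⟨c, hxm c hc⟩, (hadj c hc).symm, (hex c hc).2.2.2, (hex c hc).2.2.1⟩
  have hxnb : ∀ c, f c ≠ c → ∀ v ∈ VS s, G.Adj (x c) v → v = z c ∨ v = z (f c) := by
    intro c hc v hv hcv
    rcases head_nbr hs (hsx c hc) hv hcv with h | h
    · left; simpa using h.symm
    · right; exact hs.uniq (x c) v _ ⟨c, hxm c hc⟩ h (hex c hc)
  have hsurj : Function.Surjective f := Finite.surjective_of_injective hf
  have hznb : ∀ c, f c ≠ c → ∀ v ∈ VS s, G.Adj (z c) v →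
      (∃ d, f d ≠ d ∧ v = x d) ∨ (r c).head? = some v := by
    intro c hc v hv hcv
    by_cases h1 : Nxt s (z c) v
    · obtain ⟨p', q', hh⟩ := hs.nxt_of_suffix (p := [x c]) (t := z c :: r c) (hsx c hc)
        (by simp) h1
      have hnd := hs.nodup c
      rw [hsx c hc] at hnd
      have := (split_unique [] p' (z c) (r c) _ (by simpa using (List.nodup_cons.1 hnd).2)
        (hh : [] ++ z c :: r c = _)).2
      right; simp [this]
    by_cases h2 : Nxt s v (z c)
    · left; exact ⟨c, hc, hs.nxt_inj h2 (hnxz c hc)⟩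
    · obtain ⟨d, rfl⟩ := hsurj c
      have hd : f d ≠ d := fun e => hc (by rw [e, e])
      left
      exact ⟨d, hd, hs.uniq (z (f d)) v _ ⟨_, hzm _ hc⟩ ⟨hv, hcv, h1, h2⟩ (hez d hd)⟩
  have hm : ∀ a a' lo ln, a ∉ lo → (a' = a ∨ a' = f a) →
      ∃ p, Move G s (preOf s n) (sufOf s n) a a' p lo ln ∧ (f a = a → p = []) ∧
        (f a ≠ a → f a' ≠ a' ∧ p = [x a, z a']) := by
    intro a a' lo ln hlo hmv
    by_cases hfa : f a = a
    · have : a' = a := by rcases hmv with h | h <;> simp [h, hfa]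
      subst this
      exact ⟨[], move_stay a' n lo ln (hn0 a' hfa), fun _ => rfl, fun h => (h hfa).elim⟩
    have hfa' : f a' ≠ a' := by
      rcases hmv with h | h
      · rw [h]; exact hfa
      · rw [h]; exact hfm a hfa
    refine ⟨[x a, z a'], ⟨Or.inr ⟨by simp, ?_, by simp [hsx a hfa], by simp [hpre a' hfa']⟩,
      ?_, ?_, ?_⟩, fun h => (hfa h).elim, fun _ => ⟨hfa', rfl⟩⟩
    · rcases hmv with rfl | rfl
      · have := hs.chain a'
        rw [hsx a' hfa] at this
        simp only [List.isChain_cons_cons] at this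
        simpa using this.1
      · simpa using hadj a hfa
    · intro v hv
      rcases (by simpa using hv : v = x a ∨ v = z a') with rfl | rfl
      · exact ⟨a, by simp [hpre a hfa]⟩
      · exact ⟨a', by simp [hpre a' hfa']⟩
    · intro v hv w hw hvw
      rcases (by simpa using hv : v = x a ∨ v = z a') with rfl | rfl
      · rcases hxnb a hfa w (sub_suf hw) hvw with rfl | rfl
        · exact (hzs _ hfa hw).elim
        · exact (hzs _ (hfm a hfa) hw).elim
      · rcases hznb a' hfa' w (sub_suf hw) hvw with ⟨d, hd, rfl⟩ | h
        · exact (hxs _ hd hw).elim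
        · exact ⟨a', by rw [hsuf a' hfa', h], Or.inl rfl⟩
    · intro c hc y hy hyx
      rcases (by simpa using hyx : y = x a ∨ y = z a') with rfl | rfl
      · have : c = a := hs.disj c a _ (List.mem_of_mem_head? hy) (hxm a hfa)
        exact hlo (this ▸ hc)
      · have : c = a' := hs.disj c a' _ (List.mem_of_mem_head? hy) (hzm a' hfa')
        subst this
        rw [hsx c hfa'] at hy
        exact hxz c c hfa' hfa' (by simpa using hy)
  simp only [stepC, Bool.and_eq_true, Bool.or_eq_true, Bool.not_eq_true',
      ← Bool.not_eq_true, feq_iff, fmem_iff, List.all_eq_true] at hstep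
  obtain ⟨⟨⟨⟨h1, h2⟩, h3⟩, h4⟩, h5⟩ := hstep
  obtain ⟨p, hp, hp1, hp2⟩ := hm _ _ _ _ ha h1
  obtain ⟨q, hq, hq1, hq2⟩ := hm _ _ _ _ hb h2
  have hpre' : ∀ c, f c ≠ c → preOf s n c ≠ [] := fun c hc => by simp [hpre c hc]
  refine Realz.move hs (pre_suf s n) hp hq ?_ (fun c hc => (h4 c hc).imp_left (hpre' c))
    (fun c hc => (h5 c hc).imp_left (hpre' c)) hw
  by_cases hfa : f u.a = u.a
  · rw [hp1 hfa]
    intro u hu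
    simp at hu
  by_cases hfb : f u.b = u.b
  · rw [hq1 hfb]
    intro u _ v hv
    simp at hv
  obtain ⟨hA, rfl⟩ := hp2 hfa
  obtain ⟨hB, rfl⟩ := hq2 hfb
  have h3' := h3.resolve_left (fun h => h.elim hfa hfb)
  obtain ⟨⟨⟨e1, e2⟩, e3⟩, e4⟩ := h3'
  have hAB : w.a ≠ w.b := by
    intro h
    rcases h1 with h1 | h1
    · exact e1 (by rw [← h, h1])
    · exact e2 (by rw [← h, h1])
  intro v hv v' hv'
  rcases (by simpa using hv : v = x u.a ∨ v = z w.a) with rfl | rfl <;>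
    rcases (by simpa using hv' : v' = x u.b ∨ v' = z w.b) with rfl | rfl
  · refine ⟨fun h => hab (hxx _ _ hfa hfb h), fun h => ?_⟩
    rcases hxnb _ hfa _ ⟨_, hxm _ hfb⟩ h with h | h
    · exact hxz _ _ hfb hfa h
    · exact hxz _ _ hfb (hfm _ hfa) h
  · refine ⟨hxz _ _ hfa hB, fun h => ?_⟩
    rcases hxnb _ hfa _ ⟨_, hzm _ hB⟩ h with h | h
    · exact e1 (hzz _ _ hB hfa h)
    · exact e2 (hzz _ _ hB (hfm _ hfa) h)
  · refine ⟨fun h => hxz _ _ hfb hA h.symm, fun h => ?_⟩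
    rcases hxnb _ hfb _ ⟨_, hzm _ hA⟩ h.symm with h | h
    · exact e3 (hzz _ _ hA hfb h)
    · exact e4 (hzz _ _ hA (hfm _ hfb) h)
  · refine ⟨fun h => hAB (hzz _ _ hA hB h), fun h => ?_⟩
    rcases hznb _ hA _ ⟨_, hzm _ hB⟩ h with ⟨d, hd, h⟩ | h
    · exact hxz d _ hd hB h.symm
    · have hmem : z w.b ∈ s w.a := by
        rw [hsx _ hA]
        simp [List.mem_of_mem_head? h]
      exact hAB (hs.disj _ _ _ hmem (hzm _ hB))

end

/-! ### Relinking -/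

section

variable {G : SimpleGraph V} {Y : Set V} {s : Fin 5 → List V}

open Classical in
noncomputable def relinkS (s : Fin 5 → List V) (C : Set (Fin 5)) (x p : Fin 5 → V)
    (rest : Fin 5 → List V) (c : Fin 5) : List V :=
  if c ∈ C then x c :: p c :: rest c else s c

theorem relink_valid (hs : Valid G Y s) {f : Fin 5 → Fin 5} (hf : Function.Injective f)
    {C : Set (Fin 5)} (hfC : ∀ c ∈ C, f c ∈ C)
    {x p : Fin 5 → V} {t pre rest : Fin 5 → List V}
    (h1 : ∀ c ∈ C, s c = x c :: t c) (h2 : ∀ c ∈ C, t (f c) = pre c ++ p c :: rest c)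
    (hex : ∀ c ∈ C, Extra G s (x c) (p c)) :
    Valid G Y (relinkS s C x p rest) := by
  have hs1 : ∀ c ∈ C, relinkS s C x p rest c = x c :: p c :: rest c := fun c hc => by
    simp [relinkS, hc]
  have hs2 : ∀ c, c ∉ C → relinkS s C x p rest c = s c := fun c hc => by
    simp [relinkS, hc]
  set s' := relinkS s C x p rest with hs'
  have h3 : ∀ c ∈ C, s (f c) = (x (f c) :: pre c) ++ (p c :: rest c) := fun c hc => by
    rw [h1 _ (hfC c hc), h2 c hc]; rfl
  have hsm : ∀ c ∈ C, ∀ v ∈ p c :: rest c, v ∈ s (f c) := fun c hc v hv => by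
    rw [h3 c hc]; exact List.mem_append_right _ hv
  have hxm : ∀ c ∈ C, x c ∈ s c := fun c hc => by simp [h1 c hc]
  have hxr : ∀ c ∈ C, ∀ d ∈ C, x d ∉ p c :: rest c := by
    intro c hc d hd hm
    have : f c = d := hs.disj _ _ _ (hsm c hc _ hm) (hxm d hd)
    subst this
    have := hs.nodup (f c)
    rw [h3 c hc, List.nodup_append] at this
    exact this.2.2 _ (by simp) _ hm rfl
  have origin : ∀ i v, v ∈ s' i →
      (i ∉ C ∧ v ∈ s i) ∨ (i ∈ C ∧ v = x i) ∨ (i ∈ C ∧ v ∈ p i :: rest i) := by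
    intro i v hv
    by_cases hi : i ∈ C
    · rw [hs1 i hi] at hv
      rcases List.mem_cons.1 hv with h | h
      · exact Or.inr (Or.inl ⟨hi, h⟩)
      · exact Or.inr (Or.inr ⟨hi, h⟩)
    · rw [hs2 i hi] at hv
      exact Or.inl ⟨hi, hv⟩
  have hsub : ∀ v, v ∈ VS s' → v ∈ VS s := by
    rintro v ⟨i, hi⟩
    rcases origin i v hi with ⟨_, h⟩ | ⟨hc, h⟩ | ⟨hc, h⟩
    · exact ⟨i, h⟩
    · exact ⟨i, h ▸ hxm i hc⟩
    · exact ⟨f i, hsm i hc v h⟩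
  have ka : ∀ v w, Nxt s v w → v ∈ VS s' → (∃ k ∈ C, v = x k) ∨ Nxt s' v w := by
    rintro v w hn ⟨i, hi⟩
    rcases origin i v hi with ⟨hiC, h⟩ | ⟨hc, h⟩ | ⟨hi, h⟩
    · obtain ⟨p', q', hh⟩ := hs.nxt_of_suffix (p := []) (t := s i) rfl h hn
      exact Or.inr ⟨i, p', q', by rw [hs2 i hiC]; exact hh⟩
    · exact Or.inl ⟨i, hc, h⟩
    · obtain ⟨p', q', hh⟩ := hs.nxt_of_suffix (h3 i hi) h hn
      exact Or.inr ⟨i, x i :: p', q', by rw [hs1 i hi, hh]; rfl⟩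
  have kb : ∀ k ∈ C, Nxt s' (x k) (p k) := fun k hk => ⟨k, [], rest k, hs1 k hk⟩
  have kc : ∀ k ∈ C, ∀ v, Nxt s (x k) v → v ∈ VS s' → ∃ j ∈ C, v = p j := by
    rintro k hk v hn ⟨i, hi⟩
    have ht := hs.nxt_of_head (h1 k hk) hn
    have hvk : v ∈ s k := by
      rw [h1 k hk]; exact List.mem_cons_of_mem _ (List.mem_of_mem_head? ht)
    rcases origin i v hi with ⟨hiC, h⟩ | ⟨hc, h⟩ | ⟨hi, h⟩
    · exact (hiC (hs.disj k i v hvk h ▸ hk)).elim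
    · exact (hs.nxt_head (h1 i hc) (h ▸ hn)).elim
    · refine ⟨i, hi, ?_⟩
      have : f i = k := hs.disj _ _ _ (hsm i hi v h) hvk
      subst this
      have hnd := hs.nodup (f i)
      rw [h3 i hi, List.nodup_append] at hnd
      rw [h2 i hi] at ht
      cases hp : pre i with
      | nil => simpa [hp] using ht.symm
      | cons b l =>
        rw [hp] at ht hnd
        have : b = v := by simpa using ht
        exact (hnd.2.2 v (by simp [this]) v h rfl).elim
  have hexs : ∀ c ∈ C, Extra G s (p c) (x c) := fun c hc =>
    ⟨⟨c, hxm c hc⟩, (hex c hc).2.1.symm, (hex c hc).2.2.2, (hex c hc).2.2.1⟩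
  refine ⟨fun i => ?_, fun i => ?_, fun i j v hvi hvj => ?_, fun i y hy => ?_, ?_⟩
  · by_cases hi : i ∈ C
    · rw [hs1 i hi, List.isChain_cons_cons]
      refine ⟨(hex i hi).2.1, ?_⟩
      have := hs.chain (f i)
      rw [h3 i hi, List.isChain_append] at this
      exact this.2.1
    · rw [hs2 i hi]; exact hs.chain i
  · by_cases hi : i ∈ C
    · rw [hs1 i hi, List.nodup_cons]
      refine ⟨hxr i hi i hi, ?_⟩
      have := hs.nodup (f i)
      rw [h3 i hi, List.nodup_append] at this
      exact this.2.1
    · rw [hs2 i hi]; exact hs.nodup i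
  · rcases origin i v hvi with ⟨hi, h⟩ | ⟨hi, h⟩ | ⟨hi, h⟩ <;>
      rcases origin j v hvj with ⟨hj, h'⟩ | ⟨hj, h'⟩ | ⟨hj, h'⟩
    · exact hs.disj i j v h h'
    · subst h'
      exact hs.disj i j _ h (hxm j hj)
    · exact (hi (hs.disj _ _ v (hsm j hj v h') h ▸ hfC j hj)).elim
    · subst h
      exact hs.disj i j _ (hxm i hi) h'
    · subst h
      exact hs.disj i j _ (hxm i hi) (h' ▸ hxm j hj)
    · subst h
      exact (hxr j hj i hi h').elim
    · exact (hj (hs.disj _ _ v (hsm i hi v h) h' ▸ hfC i hi)).elim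
    · subst h'
      exact (hxr i hi j hj h).elim
    · exact hf (hs.disj _ _ v (hsm i hi v h) (hsm j hj v h'))
  · by_cases hi : i ∈ C
    · apply hs.last (f i)
      rw [h3 i hi, List.getLast?_append_of_ne_nil _ (by simp)]
      rw [hs1 i hi] at hy
      simpa using hy
    · rw [hs2 i hi] at hy; exact hs.last i y hy
  · -- classification of the extra edges of the new system
    have cls : ∀ v w, v ∈ VS s' → Extra G s' v w →
        Extra G s v w ∨ (Nxt s v w ∧ ∃ k ∈ C, v = x k) ∨ (Nxt s w v ∧ ∃ k ∈ C, w = x k) := by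
      intro v w hv he
      by_cases n1 : Nxt s v w
      · exact Or.inr (Or.inl ⟨n1, (ka v w n1 hv).resolve_right he.2.2.1⟩)
      by_cases n2 : Nxt s w v
      · exact Or.inr (Or.inr ⟨n2, (ka w v n2 he.1).resolve_right he.2.2.2⟩)
      · exact Or.inl ⟨hsub w he.1, he.2.1, n1, n2⟩
    have c12 : ∀ v w₁ w₂, v ∈ VS s' → Extra G s' v w₁ → Extra G s v w₁ →
        ¬ (Nxt s v w₂ ∧ ∃ k ∈ C, v = x k) := by
      rintro v w₁ w₂ hv he he1 ⟨_, k, hk, rfl⟩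
      have := hs.uniq _ _ _ (hsub _ hv) he1 (hex k hk)
      exact he.2.2.1 (this ▸ kb k hk)
    have c13 : ∀ v w₁ w₂, v ∈ VS s' → Extra G s' v w₁ → Extra G s v w₁ →
        ¬ (Nxt s w₂ v ∧ ∃ k ∈ C, w₂ = x k) := by
      rintro v w₁ w₂ hv he he1 ⟨hn, k, hk, rfl⟩
      obtain ⟨j, hj, rfl⟩ := kc k hk v hn hv
      have := hs.uniq _ _ _ (hsub _ hv) he1 (hexs j hj)
      exact he.2.2.2 (this ▸ kb j hj)
    have c23 : ∀ v w₁ w₂, (Nxt s v w₁ ∧ ∃ k ∈ C, v = x k) →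
        ¬ (Nxt s w₂ v ∧ ∃ k ∈ C, w₂ = x k) := by
      rintro v w₁ w₂ ⟨_, k, hk, rfl⟩ ⟨hn, _⟩
      exact hs.nxt_head (h1 k hk) hn
    intro v w₁ w₂ hv e1 e2
    rcases cls v w₁ hv e1 with a | a | a <;> rcases cls v w₂ hv e2 with b | b | b
    · exact hs.uniq v _ _ (hsub v hv) a b
    · exact (c12 v _ _ hv e1 a b).elim
    · exact (c13 v _ _ hv e1 a b).elim
    · exact (c12 v _ _ hv e2 b a).elim
    · exact hs.nxt_func a.1 b.1
    · exact (c23 v _ _ a b).elim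
    · exact (c13 v _ _ hv e2 b a).elim
    · exact (c23 v _ _ b a).elim
    · exact hs.nxt_inj a.1 b.1

theorem Realz.mono {s' : Fin 5 → List V} {t : PState} (h : Realz G Y s' t)
    (hsub : ∀ v, v ∈ VS s' → v ∈ VS s) (hh : ∀ i, (s' i).head? = (s i).head?) :
    Realz G Y s t := by
  obtain ⟨α, β, h1, h2, h3, h4, h5⟩ := h
  exact ⟨α, β, ⟨h1.1, fun v hv => hsub _ (h1.2.1 v hv), h1.2.2.1.trans (hh _), h1.2.2.2⟩,
    ⟨h2.1, fun v hv => hsub _ (h2.2.1 v hv), h2.2.2.1.trans (hh _), h2.2.2.2⟩, h3,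
    fun c hc x hx => h4 c hc x (hh c ▸ hx), fun c hc x hx => h5 c hc x (hh c ▸ hx)⟩

/-! ### Using the table -/

theorem nodupB_nodup : ∀ l : List (Fin 5), nodupB l = true → l.Nodup
  | [], _ => List.nodup_nil
  | a :: l, h => by
      simp only [nodupB, Bool.and_eq_true, Bool.not_eq_true', ← Bool.not_eq_true,
        fmem_iff] at h
      exact List.nodup_cons.2 ⟨h.1, nodupB_nodup l h.2⟩

theorem permOf_injective {l : List (Fin 5)} (hl : l ∈ permTable) :
    Function.Injective (permOf l) := by
  obtain ⟨h1, h2⟩ := permTable_nodup l hl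
  have hn := nodupB_nodup l h1
  intro i j hij
  have hi : i.1 < l.length := by omega
  have hj : j.1 < l.length := by omega
  simp only [permOf, List.getD_eq_getElem _ _ hi, List.getD_eq_getElem _ _ hj] at hij
  exact Fin.ext ((hn.getElem_inj_iff).1 hij)

theorem exists_permOf {f : Fin 5 → Fin 5} (hf : Function.Injective f) :
    ∃ l ∈ permTable, permOf l = f := by
  have hne : ∀ i j : Fin 5, i ≠ j → f i ≠ f j := fun i j h e => h (hf e)
  refine ⟨[f 0, f 1, f 2, f 3, f 4], ?_, ?_⟩
  · apply permTable_complete <;> exact hne _ _ (by decide)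
  · funext i
    fin_cases i <;> rfl

theorem exists_mem_zip {A B : Type*} : ∀ (l : List A) (m : List B), l.length = m.length →
    ∀ x ∈ l, ∃ y, (x, y) ∈ l.zip m
  | [], _, _, x, hx => by simp at hx
  | a :: l, [], h, x, hx => by simp at h
  | a :: l, b :: m, h, x, hx => by
      rcases List.mem_cons.1 hx with rfl | hx
      · exact ⟨b, by simp⟩
      · obtain ⟨y, hy⟩ := exists_mem_zip l m (by simpa using h) x hx
        exact ⟨y, by simp [hy]⟩

/-- All classes are realised in `s`. -/
def AllReal (G : SimpleGraph V) (Y : Set V) (s : Fin 5 → List V) : Prop :=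
  ∀ k < 24, ∃ t ∈ classTable.getD k [], Realz G Y s t

theorem use_step {s' : Fin 5 → List V}
    (hIH : ∀ f : Fin 5 → Fin 5, Function.Injective f → AllReal G Y (fun i => s' (f i)))
    {step : PState → PState → Bool} {T : List PState} {code : ℕ} (hc : codeOK code = true)
    (hch : checkStep step T code = true)
    (hstep : ∀ t ∈ T, ∀ u, step t u = true → Realz G Y s' u → Realz G Y s t) :
    ∃ t ∈ T, Realz G Y s t := by
  have hk : code / 120 < 24 := by
    have := Nat.le_of_ble_eq_true hc
    exact this
  have hl : permTable.getD (code % 120) [] ∈ permTable := by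
    have : code % 120 < permTable.length := by
      rw [permTable_length]; exact Nat.mod_lt _ (by norm_num)
    rw [List.getD_eq_getElem _ _ this]
    exact List.getElem_mem _
  obtain ⟨u, hu, hr⟩ := hIH _ (permOf_injective hl) _ hk
  have := List.all_eq_true.1 hch u hu
  obtain ⟨t, ht, h⟩ := List.any_eq_true.1 this
  refine ⟨t, ht, ?_⟩
  rcases (Bool.or_eq_true _ _).mp h with h | h
  · exact hstep t ht _ h hr.map
  · exact hstep t ht _ h (Realz.swap hr.map)

theorem table_facts {k : ℕ} (hk : k < 24) :
    (∃ t, t ∈ classTable.getD k []) ∧ (∀ t ∈ classTable.getD k [], wfB t = true) ∧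
    (∀ e ∈ crossTable, ∃ code, codeOK code = true ∧
      checkStep (stepE e.1 e.2) (classTable.getD k []) code = true) ∧
    (∀ l ∈ permTable, ∃ code, codeOK code = true ∧
      checkStep (stepC (permOf l)) (classTable.getD k []) code = true) := by
  have h := checkAll k hk
  simp only [checkIdx, checkClass, Bool.and_eq_true] at h
  obtain ⟨⟨hl1, hl2⟩, ⟨⟨h1, h2⟩, h3⟩, h4⟩ := h
  refine ⟨?_, List.all_eq_true.1 h2, ?_, ?_⟩
  · apply List.exists_mem_of_ne_nil
    intro he
    rw [he] at h1
    simp at h1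
  · intro e he
    obtain ⟨y, hy⟩ := exists_mem_zip crossTable _
      (Nat.eq_of_beq_eq_true hl1).symm e he
    have := List.all_eq_true.1 h3 _ hy
    simp only [Bool.and_eq_true] at this
    exact ⟨y, this⟩
  · intro l hl
    obtain ⟨y, hy⟩ := exists_mem_zip permTable _
      (permTable_length.trans (Nat.eq_of_beq_eq_true hl2).symm) l hl
    have := List.all_eq_true.1 h4 _ hy
    simp only [Bool.and_eq_true] at this
    exact ⟨y, this⟩

theorem crossTable_complete : ∀ i j : Fin 5, i < j → (i, j) ∈ crossTable := by decide

def total (s : Fin 5 → List V) : ℕ := ∑ i, (s i).length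

theorem total_perm {f : Fin 5 → Fin 5} (hf : Function.Injective f) :
    total (fun i => s (f i)) = total s :=
  Equiv.sum_comp (Equiv.ofBijective f (Finite.injective_iff_bijective.1 hf))
    (fun i => (s i).length)

theorem total_suf {n : Fin 5 → ℕ} {i : Fin 5} (hi : s i ≠ []) (hn : 0 < n i) :
    total (sufOf s n) < total s := by
  refine Finset.sum_lt_sum (fun c _ => by simp [sufOf]) ⟨i, Finset.mem_univ _, ?_⟩
  have := List.length_pos_iff.2 hi
  simp only [sufOf, List.length_drop]
  omega

/-- The main induction. -/
theorem allReal (N : ℕ) : ∀ s : Fin 5 → List V, Valid G Y s → total s = N →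
    AllReal G Y s := by
  induction N using Nat.strong_induction_on with
  | _ N ih =>
  intro s hs hN k hk
  obtain ⟨hne, hwf, hE, hC⟩ := table_facts hk
  have IH : ∀ s' : Fin 5 → List V, Valid G Y s' → total s' < total s →
      ∀ f : Fin 5 → Fin 5, Function.Injective f → AllReal G Y (fun i => s' (f i)) := by
    intro s' hs' hlt f hf
    exact ih _ (by rw [← hN, total_perm hf]; exact hlt) _ (hs'.perm hf) rfl
  -- everything is empty
  by_cases hemp : ∀ i, s i = []
  · obtain ⟨t, ht⟩ := hne
    refine ⟨t, ht, [], [], ⟨by simp, by simp, by simp [hemp], by simp⟩,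
      ⟨by simp, by simp, by simp [hemp], by simp⟩, ?_, by simp, by simp⟩
    intro u hu
    simp at hu
  push Not at hemp
  obtain ⟨i₀, hi₀⟩ := hemp
  -- a head without an extra neighbour
  by_cases hD : ∃ i x t, s i = x :: t ∧ ∀ w, ¬ Extra G s x w
  · obtain ⟨i, x, t, hi, hx⟩ := hD
    obtain ⟨u, hu, hr⟩ := IH (sufOf s (fun c => if c = i then 1 else 0))
      (hs.peel (pre_suf s _)) (total_suf (i := i) (by simp [hi]) (by simp)) id
      Function.injective_id k hk
    exact ⟨u, hu, realz_D hs hi hx (hwf u hu) hr⟩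
  -- a crossing
  by_cases hX : ∃ i j x y t r, i < j ∧ s i = x :: t ∧ s j = y :: r ∧ G.Adj x y
  · obtain ⟨i, j, x, y, t, r, hij, hi, hj, hadj⟩ := hX
    obtain ⟨code, hc1, hc2⟩ := hE _ (crossTable_complete i j hij)
    refine use_step (IH (sufOf s (fun c => if c = i ∨ c = j then 1 else 0))
      (hs.peel (pre_suf s _)) (total_suf (i := i) (by simp [hi]) (by simp))) hc1 hc2 ?_
    intro t' ht' u hu hr
    exact realz_E hs hij.ne hi hj hadj (hwf t' ht') hu hr
  push Not at hD
  have hX' : ∀ i j x y t r, i ≠ j → s i = x :: t → s j = y :: r → ¬ G.Adj x y := by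
    intro i j x y t r hij hi hj hadj
    rcases lt_or_gt_of_ne hij with h | h
    · exact hX ⟨i, j, x, y, t, r, h, hi, hj, hadj⟩
    · exact hX ⟨j, i, y, x, r, t, h, hj, hi, hadj.symm⟩
  -- the remaining case: all heads see non-heads
  have hdat : ∀ i, ∃ (j : Fin 5) (x p : V) (t pre rest : List V), (s i = [] → j = i) ∧
      (s i ≠ [] → s i = x :: t ∧ Extra G s x p ∧ ∃ y, s j = y :: (pre ++ p :: rest)) := by
    intro i
    by_cases hi : s i = []
    · obtain ⟨v, l, _⟩ := List.exists_cons_of_ne_nil hi₀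
      exact ⟨i, v, v, [], [], [], fun _ => rfl, fun h => (h hi).elim⟩
    · obtain ⟨x, t, hxt⟩ := List.exists_cons_of_ne_nil hi
      obtain ⟨p, hp⟩ := hD i x t hxt
      obtain ⟨j, hj⟩ := hp.1
      obtain ⟨y, r, hyr⟩ := List.exists_cons_of_ne_nil (List.ne_nil_of_mem hj)
      have hpy : p ≠ y := by
        rintro rfl
        by_cases hij : i = j
        · subst hij
          have : p = x := by simpa using congrArg List.head? (hyr.symm.trans hxt)
          exact hp.2.1.ne this.symm
        · exact hX' i j x p t r hij hxt hyr hp.2.1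
      have hpr : p ∈ r := by
        rw [hyr] at hj
        exact (List.mem_cons.1 hj).resolve_left hpy
      obtain ⟨pre, rest, hr⟩ := List.append_of_mem hpr
      exact ⟨j, x, p, t, pre, rest, fun h => (hi h).elim, fun _ => ⟨hxt, hp, y, by rw [hyr, hr]⟩⟩
  choose f x p t pre rest hf0 hf1 using hdat
  have hfne : ∀ c, s c ≠ [] → s (f c) ≠ [] := by
    intro c hc
    obtain ⟨_, _, y, hy⟩ := hf1 c hc
    simp [hy]
  set C : Set (Fin 5) := {c | c ∈ Function.periodicPts f ∧ s c ≠ []} with hCdef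
  have hfC : ∀ c ∈ C, f c ∈ C := fun c hc =>
    ⟨(Function.bijOn_periodicPts f).mapsTo hc.1, hfne c hc.2⟩
  have hCsurj : ∀ d ∈ C, ∃ c ∈ C, f c = d := by
    intro d hd
    obtain ⟨c, hc, hcd⟩ := (Function.bijOn_periodicPts f).surjOn hd.1
    refine ⟨c, ⟨hc, fun hc0 => ?_⟩, hcd⟩
    have := hf0 c hc0
    exact hd.2 (by rw [← hcd, this, hc0])
  have hCne : ∃ c, c ∈ C := by
    have hit : ∀ m, s (f^[m] i₀) ≠ [] := by
      intro m
      induction m with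
      | zero => exact hi₀
      | succ m ihm => rw [Function.iterate_succ_apply']; exact hfne _ ihm
    have key : ∀ m n, m < n → f^[m] i₀ = f^[n] i₀ → ∃ c, c ∈ C := by
      intro m n hmn he
      refine ⟨f^[m] i₀, Function.mk_mem_periodicPts (n := n - m) (by omega) ?_, hit m⟩
      change f^[n - m] (f^[m] i₀) = f^[m] i₀
      rw [← Function.iterate_add_apply, Nat.sub_add_cancel hmn.le, he]
    obtain ⟨m, n, hmn, he⟩ := Finite.exists_ne_map_eq_of_infinite (fun m => f^[m] i₀)
    rcases lt_or_gt_of_ne hmn with h | h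
    · exact key m n h he
    · exact key n m h he.symm
  classical
  set g : Fin 5 → Fin 5 := fun c => if c ∈ C then f c else c with hg
  have hgC : ∀ c ∈ C, g c = f c := fun c hc => by simp [hg, hc]
  have hgn : ∀ c, c ∉ C → g c = c := fun c hc => by simp [hg, hc]
  have hginj : Function.Injective g := by
    intro c d hcd
    by_cases hc : c ∈ C <;> by_cases hd : d ∈ C
    · rw [hgC c hc, hgC d hd] at hcd
      exact (Function.bijOn_periodicPts f).injOn hc.1 hd.1 hcd
    · rw [hgC c hc, hgn d hd] at hcd
      exact (hd (hcd ▸ hfC c hc)).elim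
    · rw [hgn c hc, hgC d hd] at hcd
      exact (hc (hcd ▸ hfC d hd)).elim
    · rwa [hgn c hc, hgn d hd] at hcd
  have hsx : ∀ c ∈ C, s c = x c :: t c := fun c hc => (hf1 c hc.2).1
  have hex : ∀ c ∈ C, Extra G s (x c) (p c) := fun c hc => (hf1 c hc.2).2.1
  have ht : ∀ c ∈ C, t (g c) = pre c ++ p c :: rest c := by
    intro c hc
    obtain ⟨y, hy⟩ := (hf1 c hc.2).2.2
    rw [hgC c hc]
    have := (hsx _ (hfC c hc)).symm.trans hy
    simpa using congrArg List.tail this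
  by_cases hpre : ∃ c ∈ C, pre c ≠ []
  · -- relink
    obtain ⟨c₀, hc₀, hp₀⟩ := hpre
    have hval := relink_valid hs hginj (fun c hc => by rw [hgC c hc]; exact hfC c hc) hsx ht hex
    have hlen : total (relinkS s C x p rest) < total s := by
      rw [← total_perm (s := s) hginj]
      have hgl : ∀ c ∈ C, (s (g c)).length = (pre c).length + (rest c).length + 2 := by
        intro c hc
        have hgc : g c ∈ C := by rw [hgC c hc]; exact hfC c hc
        rw [hsx _ hgc, ht c hc]
        simp only [List.length_cons, List.length_append]
        omega
      have hrl : ∀ c ∈ C, (relinkS s C x p rest c).length = (rest c).length + 2 := by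
        intro c hc
        simp [relinkS, hc]
      refine Finset.sum_lt_sum (fun c _ => ?_) ⟨c₀, Finset.mem_univ _, ?_⟩
      · by_cases hc : c ∈ C
        · simp only [hgl c hc, hrl c hc]; omega
        · simp [relinkS, hc, hgn c hc]
      · have := List.length_pos_iff.2 hp₀
        simp only [hgl c₀ hc₀, hrl c₀ hc₀]; omega
    obtain ⟨u, hu, hr⟩ := IH _ hval hlen id Function.injective_id k hk
    refine ⟨u, hu, Realz.mono hr ?_ ?_⟩
    · rintro v ⟨i, hi⟩
      by_cases hc : i ∈ C
      · have hgc : g i ∈ C := by rw [hgC i hc]; exact hfC i hc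
        simp only [relinkS, id, hc, if_true, List.mem_cons] at hi
        rcases hi with rfl | hi
        · exact ⟨i, by simp [hsx i hc]⟩
        · exact ⟨g i, by rw [hsx _ hgc, ht i hc]; simp [hi]⟩
      · exact ⟨i, by simpa [relinkS, hc] using hi⟩
    · intro i
      by_cases hc : i ∈ C
      · simp [relinkS, hc, hsx i hc]
      · simp [relinkS, hc]
  · push Not at hpre
    have ht' : ∀ c ∈ C, t (g c) = p c :: rest c := fun c hc => by
      rw [ht c hc, hpre c hc]; rfl
    set z : Fin 5 → V := fun c => (t c).headD (x c) with hz
    have hpz : ∀ c ∈ C, p c = z (g c) := fun c hc => by simp [hz, ht' c hc]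
    have hsz : ∀ c ∈ C, s c = x c :: z c :: (t c).tail := by
      intro c hc
      obtain ⟨d, hd, hdc⟩ := hCsurj c hc
      have := ht' d hd
      rw [hgC d hd, hdc] at this
      rw [hsx c hc]
      simp [hz, this]
    have hmv : ∀ c, g c ≠ c → c ∈ C := fun c h => by
      by_contra hc
      exact h (hgn c hc)
    have hmv' : ∀ c ∈ C, g c ≠ c := by
      intro c hc h
      have h1 := hpz c hc
      rw [h] at h1
      exact (hex c hc).2.2.1 (h1 ▸ ⟨c, [], (t c).tail, hsz c hc⟩)
    obtain ⟨l, hl, hlg⟩ := exists_permOf hginj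
    obtain ⟨code, hc1, hc2⟩ := hC l hl
    rw [hlg] at hc2
    obtain ⟨c, hc⟩ := hCne
    refine use_step (IH (sufOf s (fun c => if g c = c then 0 else 2))
      (hs.peel (pre_suf s _)) (total_suf (i := c) hc.2 (by simp [hmv' c hc]))) hc1 hc2 ?_
    intro t' ht' u hu hr
    exact realz_C hs hginj (fun c h => hsz c (hmv c h))
      (fun c h => hpz c (hmv c h) ▸ (hex c (hmv c h)).2.1) (hwf t' ht') hu hr

/-! ### From walks to strands and back -/

theorem walk_edge_split {u v a b : V} (w : G.Walk u v) (h : s(a, b) ∈ w.edges) :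
    ∃ p q, w.support = p ++ a :: b :: q ∨ w.support = p ++ b :: a :: q := by
  induction w with
  | nil => simp at h
  | @cons u v' w' hadj w ih =>
    rw [Walk.edges_cons, List.mem_cons] at h
    rcases h with h | h
    · rw [Sym2.eq_iff] at h
      rcases h with ⟨rfl, rfl⟩ | ⟨rfl, rfl⟩
      · exact ⟨[], w.support.tail, Or.inl (by
          rw [Walk.support_cons, ← Walk.cons_tail_support w]; rfl)⟩
      · exact ⟨[], w.support.tail, Or.inr (by
          rw [Walk.support_cons, ← Walk.cons_tail_support w]; rfl)⟩
    · obtain ⟨p, q, h⟩ := ih h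
      refine ⟨u :: p, q, ?_⟩
      rcases h with h | h
      · left; rw [Walk.support_cons, h]; rfl
      · right; rw [Walk.support_cons, h]; rfl

theorem exists_walk : ∀ (l : List V) (v : V), (v :: l).IsChain G.Adj →
    ∃ (y : V) (w : G.Walk v y), w.support = v :: l ∧ (v :: l).getLast? = some y
  | [], v, _ => ⟨v, Walk.nil, by simp, by simp⟩
  | b :: l, v, h => by
      rw [List.isChain_cons_cons] at h
      obtain ⟨y, w, h1, h2⟩ := exists_walk l b h.2
      exact ⟨y, Walk.cons h.1 w, by simp [h1], by simpa using h2⟩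

theorem goodPath_pkg {X : Set V} {a : Fin 5} {α : List V} (h : GoodPath G Y s a α)
    (hne : s a ≠ []) (hX : ∀ x ∈ (s a).head?, x ∈ X) :
    ∃ p : PathPkg G, IsXYPath G X Y p ∧ ∀ v ∈ pkgSupport p, v ∈ α := by
  classical
  obtain ⟨h1, _, h3, h4⟩ := h
  cases α with
  | nil => exact (hne (by simpa using h3.symm)).elim
  | cons v l =>
    obtain ⟨y, w, hw, hy⟩ := exists_walk l v h1
    refine ⟨⟨v, y, w.bypass⟩, ⟨w.bypass_isPath, hX v (by rw [← h3]; rfl), h4 y hy⟩, ?_⟩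
    intro u hu
    rw [← hw]
    exact w.support_bypass_subset_support hu

end

theorem statement_7 (G : SimpleGraph V) (X Y : Set V)
    (P : Fin 5 → PathPkg G)
    (hP : ∀ i, IsXYPath G X Y (P i))
    (hdisj : Pairwise fun i j => PkgDisjoint (P i) (P j))
    (hinc : ∀ v, v ∈ (⋃ i, pkgSupport (P i)) →
      Set.Subsingleton {e : Sym2 V | e ∈ G.edgeSet ∧ v ∈ e ∧ e ∉ ⋃ i, pkgEdges (P i)}) :
    ∃ p q : PathPkg G, IsXYPath G X Y p ∧ IsXYPath G X Y q ∧ PkgNonAdj G p q := by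
  set s : Fin 5 → List V := fun i => (P i).2.2.support with hsdef
  have hedge : ∀ v w, s(v, w) ∈ ⋃ i, pkgEdges (P i) → Nxt s v w ∨ Nxt s w v := by
    intro v w h
    obtain ⟨i, hi⟩ := Set.mem_iUnion.1 h
    obtain ⟨p, q, h | h⟩ := walk_edge_split _ hi
    · exact Or.inl ⟨i, p, q, h⟩
    · exact Or.inr ⟨i, p, q, h⟩
  have hval : Valid G Y s := by
    refine ⟨fun i => (P i).2.2.isChain_adj_support, fun i => (hP i).1.support_nodup, ?_, ?_, ?_⟩
    · intro i j v hi hj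
      by_contra hij
      exact hdisj hij v hi hj
    · intro i y hy
      have : (s i).getLast? = some (P i).2.1 := by
        rw [List.getLast?_eq_some_getLast (Walk.support_ne_nil _), Walk.getLast_support]
      rw [this] at hy
      obtain rfl : (P i).2.1 = y := by simpa using hy
      exact (hP i).2.2
    · rintro v w₁ w₂ ⟨i, hi⟩ e1 e2
      have := @hinc v (Set.mem_iUnion.2 ⟨i, hi⟩)
        s(v, w₁) ⟨e1.2.1, by simp, fun h => (hedge _ _ h).elim e1.2.2.1 e1.2.2.2⟩
        s(v, w₂) ⟨e2.2.1, by simp, fun h => (hedge _ _ h).elim e2.2.2.1 e2.2.2.2⟩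
      exact Sym2.congr_right.1 this
  have hne : ∀ i, s i ≠ [] := fun i => Walk.support_ne_nil _
  have hX : ∀ i, ∀ x ∈ (s i).head?, x ∈ X := by
    intro i x hx
    have : (s i).head? = some (P i).1 := by
      rw [hsdef]
      simp only
      rw [← Walk.cons_tail_support]; rfl
    rw [this] at hx
    obtain rfl : (P i).1 = x := by simpa using hx
    exact (hP i).2.1
  obtain ⟨t, _, α, β, h1, h2, h3, _⟩ := allReal _ s hval rfl 0 (by norm_num)
  obtain ⟨p, hp, hpα⟩ := goodPath_pkg h1 (hne _) (hX _)
  obtain ⟨q, hq, hqβ⟩ := goodPath_pkg h2 (hne _) (hX _)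
  exact ⟨p, q, hp, hq, fun a ha b hb => h3 a (hpα a ha) b (hqβ b hb)⟩
end

section
/- There exist a simple graph G, sets X, Y ⊆ V(G), and a collection 𝒫 of four pairwise disjoint X-Y-paths in G such that every vertex of V(𝒫) is incident to at most one edge of E(G) \ E(𝒫), and yet G contains no two pairwise non-adjacent X-Y-paths. -/
open SimpleGraph

universe u

variable {V : Type u}

namespace Ex8

/-- The partner of each vertex along its unique non-path edge. -/
def partner (a : ℕ) : ℕ :=
  ([8, 26, 11, 19, 29, 14, 22, 31, 0, 25, 17, 2, 28, 20, 5, 23, 24, 10, 27, 3, 13, 30, 6, 15, 16, 9, 1, 18, 12, 4, 21, 7] : List ℕ).getD a 0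

/-- Neighbourhoods, as bit masks. -/
def mask (a : ℕ) : ℕ :=
  ([258, 67108869, 2058, 524308, 536870952, 16464, 4194464, 2147483712, 513, 33555712, 133632, 5124, 268445696, 1069056, 40992, 8404992, 16908288, 328704, 134873088, 1310728, 2629632, 1078984704, 10485824, 4227072, 33619968, 83886592, 167772162, 335806464, 671092736, 1342177296, 2686451712, 1073741952] : List ℕ).getD a 0

def xs : ℕ := 16843009
def ys : ℕ := 2155905152

/-- The example graph: four paths on eight vertices each plus a perfect matching. -/
def G : SimpleGraph (Fin 32) where
  Adj a b := (mask a).testBit b = true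
  symm := ⟨by decide +kernel⟩
  loopless := ⟨by decide +kernel⟩

def X : Set (Fin 32) := {a | xs.testBit a = true}
def Y : Set (Fin 32) := {a | ys.testBit a = true}

/-- One expansion step of a reachable set avoiding `d`. -/
def expand (d R : ℕ) : ℕ :=
  (List.range 32).foldl (fun S a =>
    if S.testBit a then S ||| ((mask a ||| d) ^^^ d) else S) R

def iter (d : ℕ) : ℕ → ℕ → ℕ
  | 0, R => R
  | f + 1, R => let S := expand d R
      if S = R then R else iter d f S

/-- `R` certifies that there is no `X`-`Y`-walk avoiding `d`. -/
def cert (d R : ℕ) : Bool :=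
  (List.range 32).all (fun a =>
    (!xs.testBit a || d.testBit a || R.testBit a) &&
    (!R.testBit a || (!ys.testBit a &&
      (mask a ||| (d ||| R) == (d ||| R)))))

def noConn (d : ℕ) : Bool := cert d (iter d 32 ((xs ||| d) ^^^ d))

def dfs : ℕ → ℕ → ℕ → ℕ → Bool
  | 0, _, _, _ => false
  | f + 1, P, dead, v =>
      noConn (dead ||| (mask v ||| 1 <<< v)) ||
      (!ys.testBit v && (List.range 32).all (fun w =>
        !(mask v).testBit w || P.testBit w ||
          dfs f (P ||| 1 <<< w) (dead ||| (mask v ||| 1 <<< v)) w))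

theorem dfs_ok : ∀ v : Fin 32, xs.testBit v = true → dfs 33 (1 <<< v.val) 0 v = true := by
  decide +kernel

theorem cert_sound (d R : ℕ) (h : cert d R = true) {a b : Fin 32} (q : G.Walk a b)
    (ha : R.testBit a = true) (hb : b ∈ Y)
    (hq : ∀ c ∈ q.support, d.testBit c = false) : False := by
  have key : ∀ a : Fin 32, R.testBit a = true → ys.testBit a = false ∧
      mask a ||| (d ||| R) = (d ||| R) := by
    intro a ha
    have := (List.all_eq_true.mp h) a (List.mem_range.mpr a.2)
    simp [ha] at this
    exact this
  induction q with
  | nil =>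
    have h1 := (key _ ha).1
    have h2 : ys.testBit _ = true := hb
    rw [h1] at h2
    exact absurd h2 (by simp)
  | @cons u v w huv q ih =>
    refine ih ?_ hb (fun c hc => hq c (by simp [hc]))
    have h1 := congrArg (fun n => n.testBit v.val) (key _ ha).2
    have h2 : (mask u).testBit v = true := huv
    have h3 := hq v (by simp)
    simpa [Nat.testBit_or, h2, h3] using h1.symm

theorem noConn_sound (d : ℕ) (h : noConn d = true) {a b : Fin 32} (q : G.Walk a b)
    (ha : a ∈ X) (hb : b ∈ Y)
    (hq : ∀ c ∈ q.support, d.testBit c = false) : False := by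
  unfold noConn at h
  refine cert_sound d _ h q ?_ hb hq
  have := (List.all_eq_true.mp h) a (List.mem_range.mpr a.2)
  have h1 : xs.testBit a = true := ha
  have h2 := hq a (by simp)
  simp only [h1, h2] at this
  simp at this
  exact this.1

theorem testBit_one_shiftLeft' (v w : ℕ) : (1 <<< v).testBit w = decide (v = w) := by
  rw [Nat.one_shiftLeft, Nat.testBit_two_pow]

theorem dfs_sound (f : ℕ) : ∀ (P dead : ℕ) (v y : Fin 32) (p : G.Walk v y),
    dfs f P dead v = true → p.IsPath → y ∈ Y →
    (∀ w ∈ p.support, w ≠ v → P.testBit w = false) →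
    ∀ (a b : Fin 32) (q : G.Walk a b), a ∈ X → b ∈ Y →
    (∀ c ∈ q.support, dead.testBit c = false) →
    (∀ c ∈ p.support, ∀ e ∈ q.support, c ≠ e ∧ ¬ G.Adj c e) → False := by
  induction f with
  | zero => intro P dead v y p h; simp [dfs] at h
  | succ f ih =>
    intro P dead v y p h hp hy hP a b q ha hb hdead hna
    have hd : ∀ c ∈ q.support, (dead ||| (mask v ||| 1 <<< v.val)).testBit c = false := by
      intro c hc
      obtain ⟨h1, h2⟩ := hna v (by simp) c hc
      have h2 : (mask v).testBit c = false := by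
        simpa [G] using h2
      have h3 : v.val ≠ c.val := fun h => h1 (Fin.ext h)
      rw [Nat.testBit_or, Nat.testBit_or, testBit_one_shiftLeft', hdead c hc, h2]
      simp [h3]
    rw [dfs, Bool.or_eq_true, Bool.and_eq_true] at h
    rcases h with h | ⟨hy', h⟩
    · exact noConn_sound _ h q ha hb hd
    · cases p with
      | nil =>
        have h2 : ys.testBit v = true := hy
        rw [h2] at hy'
        simp at hy'
      | @cons _ w _ hvw p =>
        rw [SimpleGraph.Walk.cons_isPath_iff] at hp
        have hwv : w ≠ v := fun h => hp.2 (h ▸ p.start_mem_support)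
        have h1 := (List.all_eq_true.mp h) w (List.mem_range.mpr w.2)
        have h2 : (mask v).testBit w = true := hvw
        have h3 := hP w (by simp) hwv
        simp only [h2, h3, Bool.not_true, Bool.false_or] at h1
        refine ih _ _ w y p h1 hp.1 hy ?_ a b q ha hb hd ?_
        · intro z hz hzw
          have h4 := hP z (by simp [hz]) (fun h => hp.2 (h ▸ hz))
          have h5 : w.val ≠ z.val := fun h => hzw (Fin.ext h.symm)
          rw [Nat.testBit_or, testBit_one_shiftLeft', h4]
          simp [h5]
        · intro c hc
          exact hna c (by simp [hc])

def vtx (i : Fin 4) (j : Fin 8) : Fin 32 := ⟨8 * i.val + j.val, by omega⟩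

theorem vtx_adj : ∀ (i : Fin 4) (j : Fin 7), G.Adj (vtx i j.castSucc) (vtx i j.succ) := by
  unfold G
  decide +kernel

def path (i : Fin 4) : G.Walk (vtx i 0) (vtx i 7) :=
  .cons (vtx_adj i 0) <| .cons (vtx_adj i 1) <| .cons (vtx_adj i 2) <| .cons (vtx_adj i 3) <|
  .cons (vtx_adj i 4) <| .cons (vtx_adj i 5) <| .cons (vtx_adj i 6) .nil

theorem path_support (i : Fin 4) : (path i).support = (List.finRange 8).map (vtx i) := rfl

theorem path_edges (i : Fin 4) : (path i).edges =
    (List.finRange 7).map (fun j => s(vtx i j.castSucc, vtx i j.succ)) := rfl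

theorem vtx_div (i : Fin 4) (j : Fin 8) : (vtx i j).val / 8 = i.val := by
  simp only [vtx]; omega

theorem nonpath : ∀ v b : Fin 32, (mask v).testBit b = true →
    (∃ i : Fin 4, ∃ j : Fin 7, s(vtx i j.castSucc, vtx i j.succ) = s(v, b)) ∨
      b.val = partner v := by
  decide +kernel

end Ex8

theorem statement_8 :
    ∃ (W : Type) (G : SimpleGraph W) (X Y : Set W) (P : Fin 4 → PathPkg G),
      (∀ i, IsXYPath G X Y (P i)) ∧
      (Pairwise fun i j => PkgDisjoint (P i) (P j)) ∧
      (∀ v, v ∈ (⋃ i, pkgSupport (P i)) →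
        Set.Subsingleton
          {e : Sym2 W | e ∈ G.edgeSet ∧ v ∈ e ∧ e ∉ ⋃ i, pkgEdges (P i)}) ∧
      ¬ ∃ p q : PathPkg G, IsXYPath G X Y p ∧ IsXYPath G X Y q ∧ PkgNonAdj G p q := by
  refine ⟨Fin 32, Ex8.G, Ex8.X, Ex8.Y, fun i => ⟨_, _, Ex8.path i⟩, ?_, ?_, ?_, ?_⟩
  · intro i
    refine ⟨?_, ?_, ?_⟩
    · rw [SimpleGraph.Walk.isPath_def]
      change (Ex8.path i).support.Nodup
      rw [Ex8.path_support]
      revert i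
      decide +kernel
    · change Ex8.xs.testBit (Ex8.vtx i 0) = true
      revert i
      decide +kernel
    · change Ex8.ys.testBit (Ex8.vtx i 7) = true
      revert i
      decide +kernel
  · intro i j hij x hx hy
    change x ∈ (Ex8.path i).support at hx
    change x ∈ (Ex8.path j).support at hy
    rw [Ex8.path_support, List.mem_map] at hx hy
    obtain ⟨k, -, rfl⟩ := hx
    obtain ⟨l, -, hl⟩ := hy
    have h1 := Ex8.vtx_div i k
    rw [← hl, Ex8.vtx_div] at h1
    exact hij (Fin.ext h1.symm)
  · intro v _
    have key : ∀ e : Sym2 (Fin 32), e ∈ Ex8.G.edgeSet → v ∈ e →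
        e ∉ (⋃ i, pkgEdges (⟨_, _, Ex8.path i⟩ : PathPkg Ex8.G)) →
        ∃ b : Fin 32, e = s(v, b) ∧ b.val = Ex8.partner v := by
      intro e he hv hn
      obtain ⟨b, rfl⟩ := Sym2.mem_iff_exists.mp hv
      refine ⟨b, rfl, ?_⟩
      rcases Ex8.nonpath v b he with ⟨i, j, h⟩ | h
      · refine absurd (Set.mem_iUnion.mpr ⟨i, ?_⟩) hn
        change s(v, b) ∈ (Ex8.path i).edges
        rw [Ex8.path_edges, List.mem_map]
        exact ⟨j, List.mem_finRange j, h⟩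
      · exact h
    rintro e ⟨h1, h2, h3⟩ e' ⟨h1', h2', h3'⟩
    obtain ⟨b, rfl, hb⟩ := key e h1 h2 h3
    obtain ⟨b', rfl, hb'⟩ := key e' h1' h2' h3'
    rw [Fin.ext (hb.trans hb'.symm)]
  · rintro ⟨⟨x, y, p⟩, ⟨a, b, q⟩, ⟨hp, hx, hy⟩, ⟨-, ha, hb⟩, hna⟩
    refine Ex8.dfs_sound 33 _ _ x y p (Ex8.dfs_ok x hx) hp hy ?_ a b q ha hb ?_ hna
    · intro w _ hw
      have h5 : x.val ≠ w.val := fun h => hw (Fin.ext h.symm)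
      rw [Ex8.testBit_one_shiftLeft']
      simp [h5]
    · intro c _
      simp
end

section
/- There exist a simple graph G of maximum degree at most three, sets X, Y ⊆ V(G), and a collection of five pairwise disjoint X-Y-paths in G, such that G contains no two pairwise non-adjacent X-Y-paths. (An example: take vertex sets X and Y each of size five, let G[X] be a 5-cycle, let G[Y] be the complement of a 5-cycle, and join X to Y by a perfect matching matching each vertex of the 5-cycle to the corresponding vertex of its complement.) -/
open SimpleGraph

universe u

variable {V : Type u}

/-- The adjacency relation of the Petersen graph. -/
def petAdj (v w : Bool × Fin 5) : Prop :=
  (v.1 ≠ w.1 ∧ v.2 = w.2) ∨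
  (v.1 = false ∧ w.1 = false ∧ (w.2 = v.2 + 1 ∨ v.2 = w.2 + 1)) ∨
  (v.1 = true ∧ w.1 = true ∧ (w.2 = v.2 + 2 ∨ v.2 = w.2 + 2))

instance : DecidableRel petAdj := fun v w => by unfold petAdj; infer_instance

/-- The Petersen graph: a 5-cycle, its complement, and a perfect matching. -/
def petG : SimpleGraph (Bool × Fin 5) where
  Adj := petAdj
  symm := ⟨by decide⟩
  loopless := ⟨by decide⟩

instance : DecidableRel petG.Adj := inferInstanceAs (DecidableRel petAdj)

lemma pet_cross {u v : Bool × Fin 5} (w : petG.Walk u v) (hu : u.1 = false)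
    (hv : v.1 = true) : ∃ i, (false, i) ∈ w.support ∧ (true, i) ∈ w.support := by
  induction w with
  | nil => simp_all
  | @cons a b c h p ih =>
    obtain ⟨a1, a2⟩ := a
    obtain ⟨b1, b2⟩ := b
    simp only at hu
    subst hu
    cases b1 with
    | false =>
      obtain ⟨i, h1, h2⟩ := ih rfl hv
      exact ⟨i, by simp [h1], by simp [h2]⟩
    | true =>
      have h' : petAdj (false, a2) (true, b2) := h
      have e : a2 = b2 := by simpa [petAdj] using h'
      subst e
      exact ⟨a2, by simp, by simp⟩

lemma pet_match (i : Fin 5) : petG.Adj (false, i) (true, i) := by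
  revert i; decide

theorem statement_9 :
    ∃ (W : Type) (G : SimpleGraph W) (X Y : Set W) (P : Fin 5 → PathPkg G),
      (∀ v, (G.neighborSet v).Finite ∧ (G.neighborSet v).ncard ≤ 3) ∧
      (∀ i, IsXYPath G X Y (P i)) ∧
      (Pairwise fun i j => PkgDisjoint (P i) (P j)) ∧
      ¬ ∃ p q : PathPkg G, IsXYPath G X Y p ∧ IsXYPath G X Y q ∧ PkgNonAdj G p q := by
  refine ⟨Bool × Fin 5, petG, {v | v.1 = false}, {v | v.1 = true},
    fun i => ⟨(false, i), (true, i), (pet_match i).toWalk⟩, ?_, ?_, ?_, ?_⟩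
  · intro v
    refine ⟨Set.toFinite _, ?_⟩
    rw [Set.ncard_eq_toFinset_card']
    revert v
    decide
  · intro i
    refine ⟨?_, rfl, rfl⟩
    simp [SimpleGraph.Walk.isPath_def]
  · intro i j hij x hx hy
    simp only [pkgSupport, Set.mem_setOf_eq, SimpleGraph.Walk.support_cons,
      SimpleGraph.Walk.support_nil, List.mem_cons, List.not_mem_nil, or_false] at hx hy
    apply hij
    rcases hx with rfl | rfl <;> simpa using hy
  · rintro ⟨⟨a, b, p⟩, ⟨c, d, q⟩, ⟨-, ha, hb⟩, ⟨-, hc, hd⟩, hn⟩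
    obtain ⟨i, hi1, hi2⟩ := pet_cross p ha hb
    obtain ⟨j, hj1, hj2⟩ := pet_cross q hc hd
    have h1 := hn _ hi1 _ hj1
    have h2 := hn _ hi2 _ hj2
    have key : ∀ i j : Fin 5, i = j ∨ petG.Adj (false, i) (false, j) ∨
        petG.Adj (true, i) (true, j) := by decide
    rcases key i j with e | e | e
    · exact h1.1 (by rw [e])
    · exact h1.2 e
    · exact h2.2 e
end
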